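/- For every integer m ≥ 0 and every real t > 0, the Markov chain (P_n)_{n≥0} started from P₀ = p satisfies lim_{p→∞} ℙ_p(T_m > t·p) = (1 + μ·t)^{−4/3}, where T_m = inf{n ≥ 0 : P_n ≤ m} and μ = 1/(4√7). -/

import Mathlib

noncomputable def nuc : ℝ := 1 + 2 * Real.sqrt 7

noncomputable def tc : ℝ := Real.sqrt 10 / (8 * (7 + Real.sqrt 7) ^ ((3:ℝ)/2))

noncomputable def uc : ℝ := (6/5) * (7 + Real.sqrt 7) * tc

/-- The rational parametrization `û` of the `u`-variable. -/
noncomputable def uhat (H : ℂ) : ℂ :=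
  ((uc : ℂ) / 3) * H * (10 - 12 * H + 6 * H ^ 2 - H ^ 3)

/-- The rational parametrization `Ẑ₀`. -/
noncomputable def Z0hat (H : ℂ) : ℂ :=
  (1/10) * (1 - (1 - (Real.sqrt 7 : ℂ)) * H + 3 * H ^ 2 - H ^ 3)
    * (10 - 12 * H + 6 * H ^ 2 - H ^ 3)

/-- The rational parametrization `Ẑ₁`. -/
noncomputable def Z1hat (H : ℂ) : ℂ :=
  (3 / (10 * (uc : ℂ))) *
    ((Real.sqrt 7 : ℂ) - 1 + H - 3 * (4 - 3 * H + H ^ 2) / (10 - 12 * H + 6 * H ^ 2 - H ^ 3))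

/-- The rational parametrization `Â`. -/
noncomputable def Ahat (H : ℂ) : ℂ :=
  (1/10) * ((((3:ℝ)/2) ^ ((7:ℝ)/3) : ℝ) : ℂ) * (9 - 8 * H + 3 * H ^ 2) / (3 - 3 * H + H ^ 2) ^ 2

open MeasureTheory Filter Topology ProbabilityTheory
open scoped ENNReal

/-- `surv K M n p` is the probability that the chain with kernel `K` started from `p`
stays above `M` up to time `n`. -/
noncomputable def surv (K : ℕ → ℕ → ℝ) (M : ℕ) : ℕ → ℕ → ℝ≥0∞
  | 0, p => if M < p then 1 else 0
  | n + 1, p => if M < p then ∑' q, ENNReal.ofReal (K p q) * surv K M n q else 0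

lemma surv_of_le (K : ℕ → ℕ → ℝ) {M p : ℕ} (h : p ≤ M) (n : ℕ) : surv K M n p = 0 := by
  cases n <;> simp [surv, not_lt.2 h]

lemma surv_le_one {K : ℕ → ℕ → ℝ} (hrow : ∀ p, ∑' q, ENNReal.ofReal (K p q) = 1) (M n p : ℕ) :
    surv K M n p ≤ 1 := by
  induction n generalizing p with
  | zero => simp only [surv]; split_ifs <;> simp
  | succ n ih =>
    simp only [surv]
    split_ifs
    · calc ∑' q, ENNReal.ofReal (K p q) * surv K M n q ≤ ∑' q, ENNReal.ofReal (K p q) * 1 :=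
            ENNReal.tsum_le_tsum fun q => by gcongr; exact ih q
        _ = 1 := by simp [hrow]
    · simp

lemma surv_succ_le {K : ℕ → ℕ → ℝ} (hrow : ∀ p, ∑' q, ENNReal.ofReal (K p q) = 1) (M n p : ℕ) :
    surv K M (n + 1) p ≤ surv K M n p := by
  induction n generalizing p with
  | zero =>
    by_cases h : M < p
    · simpa [surv, h] using surv_le_one hrow M 1 p
    · simp [surv, h]
  | succ n ih =>
    rw [surv, surv]
    split_ifs
    · exact ENNReal.tsum_le_tsum fun q => by gcongr; exact ih q
    · simp

lemma surv_antitone {K : ℕ → ℕ → ℝ} (hrow : ∀ p, ∑' q, ENNReal.ofReal (K p q) = 1) (M p : ℕ) :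
    Antitone fun n => surv K M n p :=
  antitone_nat_of_succ_le fun n => surv_succ_le hrow M n p

lemma surv_mono_level (K : ℕ → ℕ → ℝ) {M N : ℕ} (h : M ≤ N) (n p : ℕ) :
    surv K N n p ≤ surv K M n p := by
  induction n generalizing p with
  | zero =>
    simp only [surv]
    split_ifs <;> first | omega | simp
  | succ n ih =>
    simp only [surv]
    split_ifs
    · exact ENNReal.tsum_le_tsum fun q => by gcongr; exact ih q
    · omega
    · simp
    · simp

/-- To survive `n + k` steps, the chain either stays above `M` for `n` steps or has to survive
`k` steps from a state at most `M`. -/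
lemma surv_zero_add_le {K : ℕ → ℕ → ℝ} (hrow : ∀ p, ∑' q, ENNReal.ofReal (K p q) = 1)
    {M k : ℕ} {c : ℝ≥0∞} (hc : ∀ j ≤ M, surv K 0 k j ≤ c) (n p : ℕ) :
    surv K 0 (n + k) p ≤ surv K M n p + c := by
  induction n generalizing p with
  | zero =>
    rw [zero_add]
    by_cases h : M < p
    · refine (surv_le_one hrow 0 k p).trans ?_
      simp [surv, h]
    · exact (hc p (not_lt.1 h)).trans le_add_self
  | succ n ih =>
    by_cases h : M < p
    · have h0 : 0 < p := by omega
      rw [show n + 1 + k = (n + k) + 1 by omega, surv, surv, if_pos h0, if_pos h]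
      calc ∑' q, ENNReal.ofReal (K p q) * surv K 0 (n + k) q
          ≤ ∑' q, (ENNReal.ofReal (K p q) * surv K M n q + ENNReal.ofReal (K p q) * c) :=
            ENNReal.tsum_le_tsum fun q => by rw [← mul_add]; gcongr; exact ih q
        _ = _ := by rw [ENNReal.tsum_add, ENNReal.tsum_mul_right, hrow, one_mul]
    · exact ((surv_antitone hrow 0 p (by omega : k ≤ n + 1 + k)).trans
        (hc p (not_lt.1 h))).trans le_add_self

/-- Foster–Lyapunov bound for the survival probabilities. -/
lemma nat_mul_surv_le {K : ℕ → ℕ → ℝ} (hrow : ∀ p, ∑' q, ENNReal.ofReal (K p q) = 1)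
    {V : ℕ → ℝ≥0∞} (hV : ∀ p, 1 ≤ p → ∑' q, ENNReal.ofReal (K p q) * V q + 1 ≤ V p) (k p : ℕ) :
    k * surv K 0 k p ≤ V p := by
  have key : ∀ k p, ∑ i ∈ Finset.range k, surv K 0 i p ≤ V p := by
    intro k
    induction k with
    | zero => simp
    | succ k ih =>
      intro p
      rcases Nat.eq_zero_or_pos p with rfl | hp
      · simp [surv_of_le]
      · rw [Finset.sum_range_succ']
        refine le_trans ?_ (hV p hp)
        simp only [surv, if_pos hp]
        gcongr
        rw [← Summable.tsum_finsetSum fun i _ => ENNReal.summable]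
        refine ENNReal.tsum_le_tsum fun q => ?_
        rw [← Finset.mul_sum]
        gcongr
        exact ih q
  refine le_trans ?_ (key k p)
  calc (k : ℝ≥0∞) * surv K 0 k p = ∑ i ∈ Finset.range k, surv K 0 k p := by simp
    _ ≤ _ := Finset.sum_le_sum fun i hi =>
      surv_antitone hrow 0 p (Finset.mem_range.1 hi).le

lemma markov_step {K : ℕ → ℕ → ℝ} (hKnn : ∀ p q, 0 ≤ K p q)
    {P : Measure (ℕ → ℕ)} {p : ℕ}
    (hchain : ∀ n : ℕ, ∀ s : ℕ → ℕ,
      P {ω : ℕ → ℕ | ∀ i ≤ n, ω i = s i}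
        = ENNReal.ofReal ((if s 0 = p then 1 else 0)
            * ∏ i ∈ Finset.range n, K (s i) (s (i + 1))))
    (M n i j : ℕ) :
    P {ω | ((∀ l ≤ n, M < ω l) ∧ ω n = i) ∧ ω (n + 1) = j}
      = P {ω | (∀ l ≤ n, M < ω l) ∧ ω n = i} * ENNReal.ofReal (K i j) := by
  let f : (ℕ → ℕ) → (Fin (n + 1) → ℕ) := fun ω l => ω l
  have hf : Measurable f := by fun_prop
  let s : Set (Fin (n + 1) → ℕ) := {b | (∀ l, M < b l) ∧ b (Fin.last n) = i}
  have hs : f ⁻¹' s = {ω | (∀ l ≤ n, M < ω l) ∧ ω n = i} := by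
    ext ω
    simp only [f, s, Set.mem_preimage, Set.mem_ofPred_eq, Fin.forall_iff, Nat.lt_succ_iff]
    rfl
  have hR : MeasurableSet {ω : ℕ → ℕ | ω (n + 1) = j} :=
    measurableSet_eq_fun (by fun_prop) measurable_const
  have hmeas : ∀ y ∈ s, MeasurableSet (f ⁻¹' {y}) := fun y _ => hf (measurableSet_singleton y)
  rw [Set.ofPred_and, ← hs, ← Measure.restrict_apply' hR,
    ← tsum_measure_preimage_singleton s.to_countable hmeas,
    ← tsum_measure_preimage_singleton s.to_countable hmeas, ← ENNReal.tsum_mul_right]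
  refine tsum_congr fun b => ?_
  rw [Measure.restrict_apply' hR]
  obtain ⟨b, -, hb⟩ := b
  let t : ℕ → ℕ := fun l => if h : l < n + 1 then b ⟨l, h⟩ else j
  have e1 : f ⁻¹' {b} = {ω | ∀ l ≤ n, ω l = t l} := by
    ext ω
    simp only [f, Set.mem_preimage, Set.mem_singleton_iff, funext_iff, Fin.forall_iff,
      Set.mem_ofPred_eq, Nat.lt_succ_iff]
    refine forall₂_congr fun l hl => ?_
    simp [t, hl]
  have e2 : f ⁻¹' {b} ∩ {ω | ω (n + 1) = j} = {ω | ∀ l ≤ n + 1, ω l = t l} := by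
    rw [e1]
    ext ω
    simp only [Set.mem_inter_iff, Set.mem_ofPred_eq]
    have ht : t (n + 1) = j := by simp [t]
    constructor
    · rintro ⟨h1, h2⟩ l hl
      rcases Nat.lt_or_ge n l with h | h
      · obtain rfl : l = n + 1 := by omega
        rw [h2, ht]
      · exact h1 l h
    · exact fun h => ⟨fun l hl => h l (by omega), by rw [h _ le_rfl, ht]⟩
  have ht1 : t n = i := by simp only [t]; rw [dif_pos (Nat.lt_succ_self n)]; exact hb
  have ht2 : t (n + 1) = j := by simp [t]
  rw [e2, e1, hchain, hchain, Finset.prod_range_succ, ← mul_assoc, ENNReal.ofReal_mul, ht1, ht2]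
  exact mul_nonneg (by split_ifs <;> norm_num) (Finset.prod_nonneg fun _ _ => hKnn _ _)

lemma measure_path_gt {K : ℕ → ℕ → ℝ} (hKnn : ∀ p q, 0 ≤ K p q)
    {P : Measure (ℕ → ℕ)} {p : ℕ}
    (hchain : ∀ n : ℕ, ∀ s : ℕ → ℕ,
      P {ω : ℕ → ℕ | ∀ i ≤ n, ω i = s i}
        = ENNReal.ofReal ((if s 0 = p then 1 else 0)
            * ∏ i ∈ Finset.range n, K (s i) (s (i + 1))))
    (M n : ℕ) :
    P {ω | ∀ l ≤ n, M < ω l} = surv K M n p := by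
  have hstep : ∀ n l, ∑' j, P {ω | (∀ l ≤ n, M < ω l) ∧ ω n = j} * surv K M l j
      = surv K M (n + l) p := by
    intro n
    induction n with
    | zero =>
      intro l
      have h0 : ∀ j, P {ω | (∀ l ≤ 0, M < ω l) ∧ ω 0 = j}
          = if j = p then (if M < j then 1 else 0) else 0 := by
        intro j
        by_cases hj : M < j
        · have : {ω : ℕ → ℕ | (∀ l ≤ 0, M < ω l) ∧ ω 0 = j} = {ω | ∀ l ≤ 0, ω l = j} := by
            ext ω
            simp only [Nat.le_zero, forall_eq, Set.mem_ofPred_eq]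
            constructor
            · exact fun h => h.2
            · exact fun h => ⟨h ▸ hj, h⟩
          rw [this, hchain 0 fun _ => j]
          simp only [Finset.range_zero, Finset.prod_empty, mul_one, hj, if_true]
          split_ifs <;> simp
        · have : {ω : ℕ → ℕ | (∀ l ≤ 0, M < ω l) ∧ ω 0 = j} = ∅ := by
            ext ω
            simp only [Nat.le_zero, forall_eq, Set.mem_ofPred_eq, Set.mem_empty_iff_false,
              iff_false, not_and]
            rintro h rfl
            exact hj h
          rw [this]
          simp [hj]
      rw [tsum_eq_single p fun j hj => by rw [h0, if_neg hj, zero_mul], h0, if_pos rfl, zero_add]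
      split_ifs with h
      · rw [one_mul]
      · rw [zero_mul, surv_of_le K (not_lt.1 h)]
    | succ n ih =>
      intro l
      rw [show n + 1 + l = n + (l + 1) by omega, ← ih]
      have hdec : ∀ j, P {ω | (∀ l ≤ n + 1, M < ω l) ∧ ω (n + 1) = j} * surv K M l j
          = ∑' i, P {ω | (∀ l ≤ n, M < ω l) ∧ ω n = i}
              * (ENNReal.ofReal (K i j) * surv K M l j) := by
        intro j
        by_cases hj : M < j
        · have e : {ω : ℕ → ℕ | (∀ l ≤ n + 1, M < ω l) ∧ ω (n + 1) = j}
              = ⋃ i, {ω | ((∀ l ≤ n, M < ω l) ∧ ω n = i) ∧ ω (n + 1) = j} := by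
            ext ω
            simp only [Set.mem_ofPred_eq, Set.mem_iUnion]
            constructor
            · exact fun h => ⟨ω n, ⟨fun l hl => h.1 l (by omega), rfl⟩, h.2⟩
            · rintro ⟨i, ⟨h1, -⟩, h2⟩
              refine ⟨fun l hl => ?_, h2⟩
              rcases Nat.lt_or_ge n l with h | h
              · obtain rfl : l = n + 1 := by omega
                rwa [h2]
              · exact h1 l h
          rw [e, measure_iUnion, ← ENNReal.tsum_mul_right]
          · exact tsum_congr fun i => by rw [markov_step hKnn hchain, mul_assoc]
          · intro i i' hii
            refine Set.disjoint_left.2 fun ω h1 h2 => hii ?_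
            exact h1.1.2.symm.trans h2.1.2
          · intro i
            measurability
        · simp [surv_of_le K (not_lt.1 hj)]
      rw [tsum_congr hdec, ENNReal.tsum_comm]
      refine tsum_congr fun i => ?_
      rw [ENNReal.tsum_mul_left]
      by_cases hi : M < i
      · rw [surv, if_pos hi]
      · have : {ω : ℕ → ℕ | (∀ l ≤ n, M < ω l) ∧ ω n = i} = ∅ := by
          ext ω
          simp only [Set.mem_ofPred_eq, Set.mem_empty_iff_false, iff_false, not_and]
          rintro h rfl
          exact hi (h n le_rfl)
        simp [this]
  rw [← add_zero n, ← hstep n 0, add_zero]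
  have e : {ω : ℕ → ℕ | ∀ l ≤ n, M < ω l} = ⋃ j, {ω | (∀ l ≤ n, M < ω l) ∧ ω n = j} := by
    ext ω; simp
  rw [e, measure_iUnion]
  · refine tsum_congr fun j => ?_
    by_cases hj : M < j
    · simp [surv, hj]
    · have : {ω : ℕ → ℕ | (∀ l ≤ n, M < ω l) ∧ ω n = j} = ∅ := by
        ext ω
        simp only [Set.mem_ofPred_eq, Set.mem_empty_iff_false, iff_false, not_and]
        rintro h rfl
        exact hj (h n le_rfl)
      simp [this]
  · intro i i' hii
    exact Set.disjoint_left.2 fun ω h1 h2 => hii (h1.2.symm.trans h2.2)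
  · intro i
    measurability

lemma row_sum_eq_one {K : ℕ → ℕ → ℝ} {P : Measure (ℕ → ℕ)} {p : ℕ}
    (hchain : ∀ n : ℕ, ∀ s : ℕ → ℕ,
      P {ω : ℕ → ℕ | ∀ i ≤ n, ω i = s i}
        = ENNReal.ofReal ((if s 0 = p then 1 else 0)
            * ∏ i ∈ Finset.range n, K (s i) (s (i + 1)))) : ∑' q, ENNReal.ofReal (K p q) = 1 := by
  have h0 : P {ω | ω 0 = p} = 1 := by
    have := hchain 0 fun _ => p
    simpa using this
  have h1 : ∀ q, P {ω | ω 0 = p ∧ ω 1 = q} = ENNReal.ofReal (K p q) := by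
    intro q
    have := hchain 1 fun i => if i = 0 then p else q
    simp only [Finset.range_one, Finset.prod_singleton, if_true, one_mul, zero_add,
      one_ne_zero, if_false] at this
    rw [← this]
    congr 1
    ext ω
    simp only [Set.mem_ofPred_eq]
    constructor
    · rintro ⟨h, h'⟩ i hi
      interval_cases i <;> simpa
    · exact fun h => ⟨by simpa using h 0 (by omega), by simpa using h 1 le_rfl⟩
  rw [← tsum_congr h1, ← h0, ← measure_iUnion]
  · congr 1
    ext ω; simp
  · intro i i' hii
    exact Set.disjoint_left.2 fun ω h1 h2 => hii (h1.2.symm.trans h2.2)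
  · intro i
    measurability

/-- Prepend a value to a sequence. -/
def seqCons (x : ℤ) (ω : ℕ → ℤ) : ℕ → ℤ
  | 0 => x
  | n + 1 => ω n

lemma measurable_seqCons : Measurable fun z : ℤ × (ℕ → ℤ) => seqCons z.1 z.2 := by
  refine measurable_pi_iff.2 fun n => ?_
  cases n with
  | zero => exact measurable_fst
  | succ n => exact (measurable_pi_apply n).comp measurable_snd

lemma map_seqCons_prod_infinitePi (η : Measure ℤ) [IsProbabilityMeasure η] :
    (η.prod (Measure.infinitePi fun _ : ℕ => η)).map (fun z => seqCons z.1 z.2)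
      = Measure.infinitePi fun _ : ℕ => η := by
  refine Measure.eq_infinitePi _ fun s t ht => ?_
  obtain ⟨N, hN⟩ : ∃ N, s ⊆ Finset.range (N + 1) :=
    ⟨s.sup id, fun i hi => Finset.mem_range.2 (Nat.lt_succ_of_le (Finset.le_sup (f := id) hi))⟩
  let t' : ℕ → Set ℤ := fun i => if i ∈ s then t i else Set.univ
  have ht' : ∀ i, MeasurableSet (t' i) := fun i => by
    simp only [t']; split_ifs; exacts [ht i, .univ]
  have hpre : (fun z : ℤ × (ℕ → ℤ) => seqCons z.1 z.2) ⁻¹' (Set.pi s t)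
      = t' 0 ×ˢ Set.pi (Finset.range N) (fun i => t' (i + 1)) := by
    ext ⟨x, ω⟩
    simp only [Set.mem_preimage, Set.mem_pi, Finset.mem_coe, Set.mem_prod, Finset.mem_range]
    constructor
    · intro h
      refine ⟨?_, fun i hi => ?_⟩
      · by_cases h0 : 0 ∈ s
        · simpa [t', h0] using! h 0 h0
        · simp [t', h0]
      · by_cases h0 : i + 1 ∈ s
        · simpa [t', h0] using! h (i + 1) h0
        · simp [t', h0]
    · rintro ⟨h0, h1⟩ i hi
      cases i with
      | zero => simpa [t', hi] using! h0
      | succ i =>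
        have := h1 i (by have := Finset.mem_range.1 (hN hi); omega)
        simpa [t', hi] using! this
  rw [Measure.map_apply measurable_seqCons (MeasurableSet.pi s.countable_toSet fun i _ => ht i),
    hpre, Measure.prod_prod, Measure.infinitePi_pi _ fun i _ => ht' (i + 1), mul_comm,
    ← Finset.prod_range_succ' fun i => η (t' i)]
  rw [← Finset.prod_subset hN fun i _ hi => by simp [t', hi]]
  exact Finset.prod_congr rfl fun i hi => by simp [t', hi]

/-- Partial sums of a sequence of integers. -/
def walk (ω : ℕ → ℤ) (n : ℕ) : ℤ := ∑ i ∈ Finset.range n, ω i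

lemma measurable_walk (n : ℕ) : Measurable fun ω => walk ω n := by
  unfold walk; fun_prop

lemma walk_seqCons_succ (x : ℤ) (ω : ℕ → ℤ) (n : ℕ) :
    walk (seqCons x ω) (n + 1) = x + walk ω n := by
  unfold walk
  rw [Finset.sum_range_succ', add_comm]
  rfl

open Classical in
/-- The weight `α` of the end point of a walk started from `p`, on the event that the walk stays
above `M` up to time `n`. -/
noncomputable def killedWeight (α : ℕ → ℝ) (M n : ℕ) (p : ℤ) (ω : ℕ → ℤ) : ℝ≥0∞ :=
  if ∀ i ≤ n, (M : ℤ) < p + walk ω i then ENNReal.ofReal (α (p + walk ω n).toNat) else 0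

lemma measurable_killedWeight (α : ℕ → ℝ) (M n : ℕ) :
    Measurable fun z : ℤ × (ℕ → ℤ) => killedWeight α M n z.1 z.2 := by
  unfold killedWeight
  have hw : ∀ i, Measurable fun z : ℤ × (ℕ → ℤ) => z.1 + walk z.2 i := fun i =>
    measurable_fst.add ((measurable_walk i).comp measurable_snd)
  refine Measurable.ite ?_ ?_ measurable_const
  · have : {a : ℤ × (ℕ → ℤ) | ∀ i ≤ n, (M : ℤ) < a.1 + walk a.2 i}
        = ⋂ i, ⋂ (_ : i ≤ n), {a | (M : ℤ) < a.1 + walk a.2 i} := by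
      ext; simp
    rw [this]
    exact MeasurableSet.iInter fun i => MeasurableSet.iInter fun _ =>
      measurableSet_lt measurable_const (hw i)
  · exact (measurable_of_countable fun z : ℤ => ENNReal.ofReal (α z.toNat)).comp (hw n)

lemma killedWeight_seqCons (α : ℕ → ℝ) (M n : ℕ) (p x : ℤ) (ω : ℕ → ℤ) :
    killedWeight α M (n + 1) p (seqCons x ω)
      = if (M : ℤ) < p then killedWeight α M n (p + x) ω else 0 := by
  unfold killedWeight
  rw [walk_seqCons_succ, ← add_assoc]
  have h : (∀ i ≤ n + 1, (M : ℤ) < p + walk (seqCons x ω) i)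
      ↔ (M : ℤ) < p ∧ ∀ i ≤ n, (M : ℤ) < p + x + walk ω i := by
    constructor
    · intro h
      refine ⟨by simpa [walk] using h 0 (by omega), fun i hi => ?_⟩
      have := h (i + 1) (by omega)
      rwa [walk_seqCons_succ, ← add_assoc] at this
    · rintro ⟨h0, h1⟩ i hi
      cases i with
      | zero => simpa [walk] using h0
      | succ i => rw [walk_seqCons_succ, ← add_assoc]; exact h1 i (by omega)
  by_cases hp : (M : ℤ) < p <;> simp [h, hp]

lemma lintegral_killedWeight_succ (η : Measure ℤ) [IsProbabilityMeasure η] (α : ℕ → ℝ)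
    (M n : ℕ) (p : ℤ) :
    ∫⁻ ω, killedWeight α M (n + 1) p ω ∂(Measure.infinitePi fun _ : ℕ => η)
      = if (M : ℤ) < p then
          ∑' x : ℤ, (∫⁻ ω, killedWeight α M n (p + x) ω ∂(Measure.infinitePi fun _ : ℕ => η))
            * η {x} else 0 := by
  have hm : ∀ n p, Measurable (killedWeight α M n p) := fun n p =>
    (measurable_killedWeight α M n).comp measurable_prodMk_left
  rw [← map_seqCons_prod_infinitePi η, lintegral_map (hm _ _) measurable_seqCons,
    map_seqCons_prod_infinitePi η]
  simp only [killedWeight_seqCons]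
  split_ifs
  · rw [lintegral_prod, lintegral_countable']
    exact ((measurable_killedWeight α M n).comp
      ((measurable_const.add measurable_fst).prodMk measurable_snd)).aemeasurable
  · simp

/-- The survival probabilities of an `α`-transform of a random walk. -/
lemma surv_mul_eq_lintegral {K : ℕ → ℕ → ℝ} {α : ℕ → ℝ} {w : ℤ → ℝ} (hα : ∀ p, 0 < α p)
    (hw : ∀ x, 0 ≤ w x)
    (hK : ∀ p q, 1 ≤ p → 2 ≤ q → K p q = α q / α p * w ((q : ℤ) - p))
    (η : Measure ℤ) [IsProbabilityMeasure η] (hη : ∀ x, η {x} = ENNReal.ofReal (w x))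
    {M : ℕ} (hM : 1 ≤ M) (n p : ℕ) :
    surv K M n p * ENNReal.ofReal (α p)
      = ∫⁻ ω, killedWeight α M n p ω ∂(Measure.infinitePi fun _ : ℕ => η) := by
  induction n generalizing p with
  | zero =>
    by_cases hp : M < p <;> simp [surv, killedWeight, walk, hp]
  | succ n ih =>
    rw [lintegral_killedWeight_succ, surv]
    by_cases hp : M < p
    · rw [if_pos hp, if_pos (by exact_mod_cast hp), ← ENNReal.tsum_mul_right]
      have hinj : Function.Injective fun q : ℕ => (q : ℤ) - p := fun a b h => by
        simpa using h
      rw [← hinj.tsum_eq]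
      · refine tsum_congr fun q => ?_
        simp only [add_sub_cancel]
        rw [← ih q, hη]
        by_cases hq : 2 ≤ q
        · rw [hK p q (by omega) hq, mul_right_comm, ← ENNReal.ofReal_mul
            (mul_nonneg (div_nonneg (hα q).le (hα p).le) (hw _)),
            mul_assoc (surv K M n q), ← ENNReal.ofReal_mul (hα q).le, mul_comm]
          congr 2
          have := (hα p).ne'
          field_simp
        · rw [surv_of_le K (by omega)]; simp
      · intro x hx
        by_contra hx'
        apply hx
        have hneg : ¬ (M : ℤ) < p + x := by
          intro h
          apply hx'
          exact ⟨(p + x).toNat, by simp only; omega⟩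
        have : ∀ ω, killedWeight α M n (p + x) ω = 0 := fun ω => by
          unfold killedWeight
          rw [if_neg]
          intro h
          exact hneg (by simpa [walk] using h 0 (by omega))
        simp [this]
    · rw [if_neg hp, if_neg (by exact_mod_cast hp), zero_mul]

/-- A positive sequence equivalent to `b p^{-4/3}` is comparable with `p^{-4/3}`. -/
lemma exists_bounds_of_tendsto {α : ℕ → ℝ} (hα : ∀ p, 0 < α p) {b : ℝ} (hb : 0 < b)
    (hlim : Tendsto (fun p : ℕ => (p : ℝ) ^ (4 / 3 : ℝ) * α p) atTop (𝓝 b)) :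
    ∃ c C : ℝ, 0 < c ∧ 0 < C ∧ ∀ p : ℕ, 1 ≤ p →
      c ≤ (p : ℝ) ^ (4 / 3 : ℝ) * α p ∧ (p : ℝ) ^ (4 / 3 : ℝ) * α p ≤ C := by
  obtain ⟨C, hC⟩ := hlim.bddAbove_range
  have hpos : ∀ p : ℕ, 1 ≤ p → 0 < (p : ℝ) ^ (4 / 3 : ℝ) * α p := fun p hp =>
    mul_pos (Real.rpow_pos_of_pos (by exact_mod_cast hp) _) (hα p)
  have hinv := (hlim.inv₀ hb.ne')
  obtain ⟨D, hD⟩ := hinv.bddAbove_range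
  have hD' : ∀ p : ℕ, 1 ≤ p → ((p : ℝ) ^ (4 / 3 : ℝ) * α p)⁻¹ ≤ D := fun p _ => hD ⟨p, rfl⟩
  have hDpos : 0 < D := (inv_pos.2 (hpos 1 le_rfl)).trans_le (hD' 1 le_rfl)
  refine ⟨D⁻¹, C, inv_pos.2 hDpos, (hpos 1 le_rfl).trans_le (hC ⟨1, rfl⟩), fun p hp =>
    ⟨?_, hC ⟨p, rfl⟩⟩⟩
  exact inv_le_of_inv_le₀ (hpos p hp) (hD' p hp)

lemma exists_ratio_bound {α : ℕ → ℝ} (hα : ∀ p, 0 < α p) {b : ℝ} (hb : 0 < b)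
    (hlim : Tendsto (fun p : ℕ => (p : ℝ) ^ (4 / 3 : ℝ) * α p) atTop (𝓝 b))
    {ε : ℝ} (hε : 0 < ε) :
    ∃ C : ℝ, 0 < C ∧ ∀ p j : ℕ, 1 ≤ p → ε * p ≤ j → α j / α p ≤ C := by
  obtain ⟨c, C, hc, hC, h⟩ := exists_bounds_of_tendsto hα hb hlim
  refine ⟨C / c / ε ^ (4 / 3 : ℝ), by positivity, fun p j hp hj => ?_⟩
  have hp' : (0 : ℝ) < p := by exact_mod_cast hp
  have hj' : (0 : ℝ) < j := (mul_pos hε hp').trans_le hj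
  have h1 := (h p hp).1
  have h2 := (h j (by exact_mod_cast hj')).2
  have h3 : (ε * p) ^ (4 / 3 : ℝ) ≤ (j : ℝ) ^ (4 / 3 : ℝ) :=
    Real.rpow_le_rpow (by positivity) hj (by norm_num)
  rw [Real.mul_rpow hε.le hp'.le] at h3
  rw [div_div, div_le_div_iff₀ (hα p) (by positivity)]
  calc α j * (c * ε ^ (4 / 3 : ℝ))
      ≤ α j * (((p : ℝ) ^ (4 / 3 : ℝ) * α p) * ε ^ (4 / 3 : ℝ)) := by
        gcongr; exact (hα j).le
    _ = α j * (ε ^ (4 / 3 : ℝ) * (p : ℝ) ^ (4 / 3 : ℝ)) * α p := by ring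
    _ ≤ α j * (j : ℝ) ^ (4 / 3 : ℝ) * α p := by
        gcongr; exacts [(hα p).le, (hα j).le]
    _ ≤ C * α p := by
        gcongr; exacts [(hα p).le, by linarith]

lemma tendsto_ratio {α : ℕ → ℝ} (hα : ∀ p, 0 < α p) {b : ℝ} (hb : 0 < b)
    (hlim : Tendsto (fun p : ℕ => (p : ℝ) ^ (4 / 3 : ℝ) * α p) atTop (𝓝 b))
    {j : ℕ → ℕ} {s : ℝ} (hs : 0 < s) (hj : Tendsto (fun p : ℕ => (j p : ℝ) / p) atTop (𝓝 s)) :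
    Tendsto (fun p : ℕ => α (j p) / α p) atTop (𝓝 (s ^ (-(4 : ℝ) / 3))) := by
  have hjtop : Tendsto j atTop atTop := by
    have h1 : Tendsto (fun p : ℕ => (j p : ℝ) / p * p) atTop atTop :=
      hj.pos_mul_atTop hs tendsto_natCast_atTop_atTop
    refine tendsto_natCast_atTop_iff.1 (h1.congr' ?_)
    filter_upwards [eventually_gt_atTop 0] with p hp
    have : (p : ℝ) ≠ 0 := by exact_mod_cast hp.ne'
    field_simp
  have h1 := (hlim.comp hjtop).div hlim hb.ne'
  have h2 := hj.rpow_const (p := -(4 : ℝ) / 3) (Or.inl hs.ne')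
  have h3 := h1.mul h2
  rw [div_self hb.ne', one_mul] at h3
  refine h3.congr' ?_
  filter_upwards [eventually_gt_atTop 0, hjtop.eventually_gt_atTop 0] with p hp hjp
  have hp' : (0 : ℝ) < p := by exact_mod_cast hp
  have hj' : (0 : ℝ) < j p := by exact_mod_cast hjp
  have e1 : ((j p : ℝ) / p) ^ (-(4 : ℝ) / 3)
      = (p : ℝ) ^ (4 / 3 : ℝ) / (j p : ℝ) ^ (4 / 3 : ℝ) := by
    rw [neg_div, Real.rpow_neg (by positivity), Real.div_rpow hj'.le hp'.le, inv_div]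
  have := (Real.rpow_pos_of_pos hp' (4 / 3 : ℝ)).ne'
  have := (Real.rpow_pos_of_pos hj' (4 / 3 : ℝ)).ne'
  have := (hα p).ne'
  simp only [Function.comp, Pi.div_apply]
  rw [e1]
  field_simp

lemma ae_tendsto_walk (η : Measure ℤ) [IsProbabilityMeasure η]
    (hint : Integrable (fun x : ℤ => (x : ℝ)) η) :
    ∀ᵐ ω ∂(Measure.infinitePi fun _ : ℕ => η),
      Tendsto (fun n : ℕ => (walk ω n : ℝ) / n) atTop (𝓝 (∫ x : ℤ, (x : ℝ) ∂η)) := by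
  let P := Measure.infinitePi fun _ : ℕ => η
  let X : ℕ → (ℕ → ℤ) → ℝ := fun n ω => (ω n : ℝ)
  have hcast : Measurable fun x : ℤ => (x : ℝ) := measurable_of_countable _
  have hXlaw : ∀ n, P.map (X n) = η.map fun x : ℤ => (x : ℝ) := fun n => by
    have : X n = (fun x : ℤ => (x : ℝ)) ∘ (fun ω : ℕ → ℤ => ω n) := rfl
    rw [this, ← Measure.map_map hcast (measurable_pi_apply n)]
    congr 1
    exact Measure.infinitePi_map_eval (fun _ : ℕ => η) n
  have hXm : ∀ n, Measurable (X n) := fun n => hcast.comp (measurable_pi_apply n)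
  have hmp := measurePreserving_eval_infinitePi (fun _ : ℕ => η) 0
  have h0 : P[X 0] = ∫ x : ℤ, (x : ℝ) ∂η := by
    have h := integral_map (μ := P) (measurable_pi_apply 0).aemeasurable
      (f := fun x : ℤ => (x : ℝ)) hcast.aestronglyMeasurable
    rw [← h]
    congr 1
    exact Measure.infinitePi_map_eval (fun _ : ℕ => η) 0
  have hint0 : Integrable (X 0) P := hmp.integrable_comp_of_integrable hint
  have hind : iIndepFun X P := iIndepFun_infinitePi (X := fun (_ : ℕ) (x : ℤ) => (x : ℝ))
    fun _ => hcast
  have := strong_law_ae_real X hint0 (fun i j hij => hind.indepFun hij)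
    fun i => ⟨(hXm i).aemeasurable, (hXm 0).aemeasurable, by rw [hXlaw, hXlaw]⟩
  rw [h0] at this
  filter_upwards [this] with ω hω
  simpa [walk, X] using hω

/-- Scaling limit of the survival probabilities of an `α`-transformed random walk above a
linear barrier. -/
theorem tendsto_lintegral_killedWeight {α : ℕ → ℝ} (hα : ∀ p, 0 < α p) {b : ℝ} (hb : 0 < b)
    (hlim : Tendsto (fun p : ℕ => (p : ℝ) ^ (4 / 3 : ℝ) * α p) atTop (𝓝 b))
    (η : Measure ℤ) [IsProbabilityMeasure η] (hint : Integrable (fun x : ℤ => (x : ℝ)) η)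
    {m : ℝ} (hm : ∫ x : ℤ, (x : ℝ) ∂η = m) (hm0 : 0 < m)
    {ε : ℝ} (hε : 0 < ε) (hε1 : ε < 1) {τ : ℝ} (hτ : 0 < τ) {n : ℕ → ℕ}
    (hn : Tendsto (fun p : ℕ => (n p : ℝ) / p) atTop (𝓝 τ)) :
    Tendsto (fun p : ℕ => ∫⁻ ω, killedWeight α ⌊ε * p⌋₊ (n p) p ω / ENNReal.ofReal (α p)
        ∂(Measure.infinitePi fun _ : ℕ => η))
      atTop (𝓝 (ENNReal.ofReal ((1 + m * τ) ^ (-(4 : ℝ) / 3)))) := by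
  obtain ⟨C, hC, hCb⟩ := exists_ratio_bound hα hb hlim hε
  have hntop : Tendsto n atTop atTop := by
    have h1 : Tendsto (fun p : ℕ => (n p : ℝ) / p * p) atTop atTop :=
      hn.pos_mul_atTop hτ tendsto_natCast_atTop_atTop
    refine tendsto_natCast_atTop_iff.1 (h1.congr' ?_)
    filter_upwards [eventually_gt_atTop 0] with p hp
    have : (p : ℝ) ≠ 0 := by exact_mod_cast hp.ne'
    field_simp
  have hconst : ENNReal.ofReal ((1 + m * τ) ^ (-(4 : ℝ) / 3))
      = ∫⁻ _, ENNReal.ofReal ((1 + m * τ) ^ (-(4 : ℝ) / 3))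
          ∂(Measure.infinitePi fun _ : ℕ => η) := by simp
  rw [hconst]
  refine tendsto_lintegral_filter_of_dominated_convergence (fun _ => ENNReal.ofReal C) ?_ ?_
    (by simp) ?_
  · exact Eventually.of_forall fun p => ((measurable_killedWeight α _ _).comp
      measurable_prodMk_left).div_const _
  · filter_upwards [eventually_ge_atTop 1] with p hp
    refine ae_of_all _ fun ω => ?_
    unfold killedWeight
    split_ifs with h
    · rw [← ENNReal.ofReal_div_of_pos (hα p)]
      refine ENNReal.ofReal_le_ofReal (hCb p _ hp ?_)
      have h1 := h (n p) le_rfl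
      have h2 : ⌊ε * p⌋₊ < ((p : ℤ) + walk ω (n p)).toNat := by omega
      exact ((Nat.floor_lt (by positivity)).1 h2).le
    · simp
  · filter_upwards [ae_tendsto_walk η hint] with ω hω
    rw [hm] at hω
    have hlow : ∃ B : ℝ, ∀ i, -B ≤ (walk ω i : ℝ) := by
      have hev : ∀ᶠ i : ℕ in atTop, 0 ≤ (walk ω i : ℝ) := by
        filter_upwards [hω.eventually (lt_mem_nhds hm0), eventually_gt_atTop 0] with i hi hi0
        have : (0 : ℝ) < i := by exact_mod_cast hi0
        have h := mul_pos hi this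
        rw [div_mul_cancel₀ _ this.ne'] at h
        exact h.le
      obtain ⟨N, hN⟩ := eventually_atTop.1 hev
      refine ⟨∑ i ∈ Finset.range N, |(walk ω i : ℝ)|, fun i => ?_⟩
      rcases lt_or_ge i N with h | h
      · have := Finset.single_le_sum (f := fun i => |(walk ω i : ℝ)|)
          (fun i _ => abs_nonneg _) (Finset.mem_range.2 h)
        have h2 := neg_abs_le (walk ω i : ℝ)
        linarith
      · have : 0 ≤ ∑ i ∈ Finset.range N, |(walk ω i : ℝ)| :=
          Finset.sum_nonneg fun i _ => abs_nonneg _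
        linarith [hN i h]
    obtain ⟨B, hB⟩ := hlow
    have hj : Tendsto (fun p : ℕ => ((((p : ℤ) + walk ω (n p)).toNat : ℕ) : ℝ) / p) atTop
        (𝓝 (1 + m * τ)) := by
      have h1 := (hω.comp hntop).mul hn
      have h2 : Tendsto (fun p : ℕ => 1 + (walk ω (n p) : ℝ) / n p * ((n p : ℝ) / p)) atTop
          (𝓝 (1 + m * τ)) := h1.const_add 1
      refine h2.congr' ?_
      filter_upwards [eventually_gt_atTop 0, hntop.eventually_gt_atTop 0,
        tendsto_natCast_atTop_atTop.eventually_gt_atTop B] with p hp hnp hpB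
      have hp' : (p : ℝ) ≠ 0 := by exact_mod_cast hp.ne'
      have hn' : (n p : ℝ) ≠ 0 := by exact_mod_cast hnp.ne'
      have hnn : (0 : ℤ) ≤ p + walk ω (n p) := by
        have := hB (n p)
        have h : (0 : ℝ) ≤ p + walk ω (n p) := by linarith
        exact_mod_cast h
      have hcast : ((((p : ℤ) + walk ω (n p)).toNat : ℕ) : ℝ) = p + walk ω (n p) := by
        have := Int.toNat_of_nonneg hnn
        exact_mod_cast congrArg (Int.cast : ℤ → ℝ) this
      rw [hcast]
      field_simp
    have hlim' := (ENNReal.continuous_ofReal.tendsto _).comp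
      (tendsto_ratio hα hb hlim (by positivity) hj)
    refine hlim'.congr' ?_
    have hbig : ∀ᶠ p : ℕ in atTop, B < (1 - ε) * p :=
      (tendsto_natCast_atTop_atTop.const_mul_atTop (by linarith : 0 < 1 - ε)).eventually_gt_atTop B
    filter_upwards [hbig] with p hp
    unfold killedWeight
    rw [if_pos]
    · simp only [Function.comp]
      rw [ENNReal.ofReal_div_of_pos (hα p)]
    · intro i _
      have h1 := hB i
      have h2 : ((⌊ε * p⌋₊ : ℕ) : ℝ) ≤ ε * p := Nat.floor_le (by positivity)
      have h3 : ((⌊ε * p⌋₊ : ℕ) : ℝ) < p + walk ω i := by linarith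
      exact_mod_cast h3

lemma tendsto_toNat_add_div (x : ℤ) :
    Tendsto (fun p : ℕ => ((((p : ℤ) + x).toNat : ℕ) : ℝ) / p) atTop (𝓝 1) := by
  have h : Tendsto (fun p : ℕ => 1 + (x : ℝ) / p) atTop (𝓝 (1 + 0)) :=
    (tendsto_const_div_atTop_nhds_zero_nat (x : ℝ)).const_add 1
  rw [add_zero] at h
  refine h.congr' ?_
  filter_upwards [eventually_gt_atTop 0, eventually_ge_atTop x.natAbs] with p hp hx
  have hcast : ((((p : ℤ) + x).toNat : ℕ) : ℝ) = p + x := by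
    have : ((((p : ℤ) + x).toNat : ℕ) : ℤ) = p + x := by omega
    exact_mod_cast congrArg (Int.cast : ℤ → ℝ) this
  have hp' : (p : ℝ) ≠ 0 := by exact_mod_cast hp.ne'
  rw [hcast]
  field_simp

lemma tendsto_toNat_add (x : ℤ) : Tendsto (fun p : ℕ => ((p : ℤ) + x).toNat) atTop atTop :=
  tendsto_atTop.2 fun b => by
    filter_upwards [eventually_ge_atTop (b + x.natAbs)] with p hp
    omega

section Drift

variable {α : ℕ → ℝ} {b : ℝ}

lemma tendsto_mul_sub_div (hα : ∀ p, 0 < α p) (hb : 0 < b)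
    (hlim : Tendsto (fun p : ℕ => (p : ℝ) ^ (4 / 3 : ℝ) * α p) atTop (𝓝 b))
    (hdiff : Tendsto (fun p : ℕ => (p : ℝ) ^ (7 / 3 : ℝ) * (α p - α (p + 1))) atTop
      (𝓝 (4 / 3 * b))) (x : ℤ) :
    Tendsto (fun p : ℕ => p * (1 - α ((p : ℤ) + x).toNat / α p)) atTop (𝓝 (4 / 3 * x)) := by
  have hd : Tendsto (fun p : ℕ => p * ((α p - α (p + 1)) / α p)) atTop (𝓝 (4 / 3)) := by
    have h := hdiff.div hlim hb.ne'
    rw [mul_div_cancel_right₀ _ hb.ne'] at h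
    refine h.congr' ?_
    filter_upwards [eventually_gt_atTop 0] with p hp
    have hp' : (0 : ℝ) < p := by exact_mod_cast hp
    have h1 : (p : ℝ) ^ (7 / 3 : ℝ) = p ^ (4 / 3 : ℝ) * p := by
      rw [← Real.rpow_add_one hp'.ne']; norm_num
    have := (Real.rpow_pos_of_pos hp' (4 / 3 : ℝ)).ne'
    have := (hα p).ne'
    simp only [Pi.div_apply]
    rw [h1]
    field_simp
  have hinc : ∀ x : ℤ, Tendsto (fun p : ℕ => p * (α ((p : ℤ) + x).toNat / α p
      - α ((p : ℤ) + (x + 1)).toNat / α p)) atTop (𝓝 (4 / 3)) := fun x => by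
    have h1 := tendsto_ratio hα hb hlim one_pos (tendsto_toNat_add_div x)
    have h2 := (tendsto_toNat_add_div x).inv₀ one_ne_zero
    have h3 := (h1.mul h2).mul (hd.comp (tendsto_toNat_add x))
    simp only [Real.one_rpow, inv_one, mul_one, one_mul] at h3
    refine h3.congr' ?_
    filter_upwards [eventually_gt_atTop 0, (tendsto_toNat_add x).eventually_gt_atTop 0]
      with p hp hpx
    have e : ((p : ℤ) + (x + 1)).toNat = ((p : ℤ) + x).toNat + 1 := by omega
    have hp' : (p : ℝ) ≠ 0 := by exact_mod_cast hp.ne'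
    have hpx' : ((((p : ℤ) + x).toNat : ℕ) : ℝ) ≠ 0 := by exact_mod_cast hpx.ne'
    have := (hα p).ne'
    have := (hα ((p : ℤ) + x).toNat).ne'
    simp only [Function.comp, e]
    field_simp
  induction x using Int.induction_on with
  | zero =>
    have : ∀ p : ℕ, (p : ℝ) * (1 - α ((p : ℤ) + 0).toNat / α p) = 0 := fun p => by
      simp [div_self (hα p).ne']
    simp only [this, Int.cast_zero, mul_zero, tendsto_const_nhds]
  | succ i ih =>
    have := ih.add (hinc i)
    refine (this.congr fun p => ?_).trans (le_of_eq ?_)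
    · ring
    · congr 1; push_cast; ring
  | pred i ih =>
    have := ih.sub (hinc (-(i : ℤ) - 1))
    refine (this.congr fun p => ?_).trans (le_of_eq ?_)
    · rw [sub_add_cancel]; ring
    · congr 1; push_cast; ring

lemma abs_sub_le_of_diff_le {D : ℝ} {M : ℕ} (hD : ∀ j, M ≤ j → |α j - α (j + 1)| ≤ D)
    {i j : ℕ} (hi : M ≤ i) (hj : M ≤ j) : |α i - α j| ≤ D * |(i : ℝ) - j| := by
  wlog hij : i ≤ j generalizing i j
  · rw [abs_sub_comm, abs_sub_comm (i : ℝ)]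
    exact this hj hi (by omega)
  obtain ⟨k, rfl⟩ := Nat.exists_eq_add_of_le hij
  clear hij hj
  have e : |(i : ℝ) - ((i + k : ℕ) : ℝ)| = k := by
    push_cast
    rw [sub_add_cancel_left, abs_neg, Nat.abs_cast]
  rw [e]
  clear e
  induction k with
  | zero => simp
  | succ k ih =>
    calc |α i - α (i + (k + 1))| ≤ |α i - α (i + k)| + |α (i + k) - α (i + k + 1)| :=
          abs_sub_le _ _ _
      _ ≤ D * k + D := add_le_add ih (hD _ (by omega))
      _ = _ := by push_cast; ring

open Classical in
/-- The ratio `α (p + x) / α p`, truncated to `p + x > p / 8`. -/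
noncomputable def truncRatio (α : ℕ → ℝ) (p : ℕ) (x : ℤ) : ℝ :=
  if (1 / 8 : ℝ) * p < p + x then α ((p : ℤ) + x).toNat / α p else 0

lemma truncRatio_eventually (x : ℤ) :
    ∀ᶠ p : ℕ in atTop, truncRatio α p x = α ((p : ℤ) + x).toNat / α p := by
  have : Tendsto (fun p : ℕ => (7 / 8 : ℝ) * p) atTop atTop :=
    tendsto_natCast_atTop_atTop.const_mul_atTop (by norm_num)
  filter_upwards [this.eventually_gt_atTop (-x : ℝ)] with p hp
  rw [truncRatio, if_pos (by linarith)]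

lemma exists_truncRatio_bound (hα : ∀ p, 0 < α p) (hb : 0 < b)
    (hlim : Tendsto (fun p : ℕ => (p : ℝ) ^ (4 / 3 : ℝ) * α p) atTop (𝓝 b))
    (hdiff : Tendsto (fun p : ℕ => (p : ℝ) ^ (7 / 3 : ℝ) * (α p - α (p + 1))) atTop
      (𝓝 (4 / 3 * b))) :
    ∃ C : ℝ, 0 < C ∧ ∀ p : ℕ, 1 ≤ p → ∀ x : ℤ,
      |truncRatio α p x| ≤ C ∧ |p * (1 - truncRatio α p x)| ≤ C * |(x : ℝ)| := by
  obtain ⟨C₁, hC₁, h₁⟩ := exists_ratio_bound hα hb hlim (by norm_num : (0 : ℝ) < 1 / 8)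
  obtain ⟨c, _, hc, _, hbd⟩ := exists_bounds_of_tendsto hα hb hlim
  obtain ⟨D, hD⟩ := hdiff.abs.bddAbove_range
  have hD0 : 0 ≤ D := (abs_nonneg _).trans (hD ⟨0, rfl⟩)
  refine ⟨C₁ + 2 + D * 8 ^ (7 / 3 : ℝ) / c, by positivity, fun p hp x => ?_⟩
  have hp' : (0 : ℝ) < p := by exact_mod_cast hp
  have hx0 := abs_nonneg (x : ℝ)
  have hE : 0 ≤ D * 8 ^ (7 / 3 : ℝ) / c := by positivity
  unfold truncRatio
  split_ifs with h
  · have hnn : (0 : ℤ) ≤ p + x := by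
      have : (0 : ℝ) ≤ p + x := by linarith
      exact_mod_cast this
    set j := ((p : ℤ) + x).toNat with hj
    have hjx : (j : ℝ) = p + x := by
      have : (j : ℤ) = p + x := by omega
      exact_mod_cast congrArg (Int.cast : ℤ → ℝ) this
    have hjp : 1 / 8 * (p : ℝ) ≤ j := by linarith
    constructor
    · rw [abs_of_pos (div_pos (hα j) (hα p))]
      linarith [h₁ p j hp hjp]
    · set M := ⌈(1 / 8 : ℝ) * p⌉₊ with hM
      have hMp : M ≤ p := Nat.ceil_le.2 (by linarith)
      have hMj : M ≤ j := Nat.ceil_le.2 hjp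
      have hstep : ∀ i, M ≤ i →
          |α i - α (i + 1)| ≤ D * (8 ^ (7 / 3 : ℝ) / (p : ℝ) ^ (7 / 3 : ℝ)) := by
        intro i hi
        have hi8 : 1 / 8 * (p : ℝ) ≤ i := Nat.ceil_le.1 hi
        have hi0 : (0 : ℝ) < i := by linarith [show (0 : ℝ) < 1 / 8 * p by positivity]
        have h1 : (i : ℝ) ^ (7 / 3 : ℝ) * |α i - α (i + 1)| ≤ D := by
          have := hD ⟨i, rfl⟩
          simpa only [abs_mul, abs_of_nonneg (Real.rpow_nonneg hi0.le (7 / 3 : ℝ))] using this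
        have h2 : (p : ℝ) ^ (7 / 3 : ℝ) ≤ 8 ^ (7 / 3 : ℝ) * (i : ℝ) ^ (7 / 3 : ℝ) := by
          rw [← Real.mul_rpow (by norm_num) hi0.le]
          exact Real.rpow_le_rpow hp'.le (by linarith) (by norm_num)
        rw [← mul_div_assoc, le_div_iff₀ (by positivity)]
        calc |α i - α (i + 1)| * (p : ℝ) ^ (7 / 3 : ℝ)
            ≤ |α i - α (i + 1)| * (8 ^ (7 / 3 : ℝ) * (i : ℝ) ^ (7 / 3 : ℝ)) := by gcongr
          _ = 8 ^ (7 / 3 : ℝ) * ((i : ℝ) ^ (7 / 3 : ℝ) * |α i - α (i + 1)|) := by ring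
          _ ≤ 8 ^ (7 / 3 : ℝ) * D := by gcongr
          _ = _ := by ring
      have h3 := abs_sub_le_of_diff_le hstep hMp hMj
      have h4 : |(p : ℝ) - j| = |(x : ℝ)| := by rw [hjx, sub_add_cancel_left, abs_neg]
      rw [h4] at h3
      have h5 : |p * (1 - α j / α p)| = p * |α p - α j| / α p := by
        rw [one_sub_div (hα p).ne', abs_mul, abs_div, abs_of_pos hp', abs_of_pos (hα p)]
        ring
      have h6 : (p : ℝ) ^ (7 / 3 : ℝ) = p ^ (4 / 3 : ℝ) * p := by
        rw [← Real.rpow_add_one hp'.ne']; norm_num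
      have h7 : |p * (1 - α j / α p)| ≤ D * 8 ^ (7 / 3 : ℝ) / c * |(x : ℝ)| := by
        rw [h5, div_le_iff₀ (hα p)]
        calc (p : ℝ) * |α p - α j|
            ≤ p * (D * (8 ^ (7 / 3 : ℝ) / (p : ℝ) ^ (7 / 3 : ℝ)) * |(x : ℝ)|) := by gcongr
          _ = D * 8 ^ (7 / 3 : ℝ) / c * |(x : ℝ)| * (c / (p : ℝ) ^ (4 / 3 : ℝ)) := by
              rw [h6]; field_simp
          _ ≤ D * 8 ^ (7 / 3 : ℝ) / c * |(x : ℝ)| * α p := by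
              gcongr
              rw [div_le_iff₀ (by positivity), mul_comm]
              exact (hbd p hp).1
      nlinarith
  · refine ⟨by simp; positivity, ?_⟩
    have h8 : (x : ℝ) ≤ -(7 / 8) * p := by linarith
    have h9 : |(x : ℝ)| = -x := abs_of_nonpos (by linarith)
    rw [sub_zero, mul_one, abs_of_pos hp', h9]
    nlinarith

/-- An `α`-transform of a random walk with positive drift, with `α p ~ b p^{-4/3}`, has a
negative drift bounded away from zero. -/
theorem exists_drift_le (hα : ∀ p, 0 < α p) (hb : 0 < b)
    (hlim : Tendsto (fun p : ℕ => (p : ℝ) ^ (4 / 3 : ℝ) * α p) atTop (𝓝 b))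
    (hdiff : Tendsto (fun p : ℕ => (p : ℝ) ^ (7 / 3 : ℝ) * (α p - α (p + 1))) atTop
      (𝓝 (4 / 3 * b)))
    {w : ℤ → ℝ} (hw : ∀ x, 0 ≤ w x) (hw1 : HasSum w 1) {m : ℝ} (hm : 0 < m)
    (hwm : HasSum (fun x => x * w x) m)
    {K : ℕ → ℕ → ℝ} (hKnn : ∀ p q, 0 ≤ K p q)
    (hK : ∀ p q, 1 ≤ p → 2 ≤ q → K p q = α q / α p * w ((q : ℤ) - p))
    (hKup : ∀ p q, p + 2 < q → K p q = 0)
    (hrow : ∀ p, ∑ q ∈ Finset.range (p + 3), K p q = 1) :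
    ∃ δ : ℝ, 0 < δ ∧ ∀ᶠ p : ℕ in atTop,
      ∑ q ∈ Finset.range (p + 3), (q : ℝ) * K p q ≤ p - δ := by
  obtain ⟨C, hC, hCb⟩ := exists_truncRatio_bound hα hb hlim hdiff
  have habs : Summable fun x : ℤ => C * (|(x : ℝ)| * w x) := by
    refine (hwm.summable.abs.congr fun x => ?_).mul_left C
    rw [abs_mul, abs_of_nonneg (hw x)]
  have hlim1 : Tendsto (fun p : ℕ => ∑' x : ℤ, x * w x * truncRatio α p x) atTop
      (𝓝 (∑' x : ℤ, x * w x)) := by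
    refine tendsto_tsum_of_dominated_convergence habs (fun x => ?_) ?_
    · have h1 := tendsto_ratio hα hb hlim one_pos (tendsto_toNat_add_div x)
      rw [Real.one_rpow] at h1
      have h2 := (h1.congr' ((truncRatio_eventually x).mono fun p hp => hp.symm)).const_mul
        (x * w x)
      simpa using h2
    · filter_upwards [eventually_ge_atTop 1] with p hp x
      rw [Real.norm_eq_abs, abs_mul, abs_mul, abs_of_nonneg (hw x), mul_comm]
      exact mul_le_mul_of_nonneg_right (hCb p hp x).1 (mul_nonneg (abs_nonneg _) (hw x))
  have hlim2 : Tendsto (fun p : ℕ => ∑' x : ℤ, w x * (p * (1 - truncRatio α p x))) atTop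
      (𝓝 (∑' x : ℤ, w x * (4 / 3 * x))) := by
    refine tendsto_tsum_of_dominated_convergence habs (fun x => ?_) ?_
    · have h1 := tendsto_mul_sub_div hα hb hlim hdiff x
      refine (h1.congr' ?_).const_mul (w x)
      filter_upwards [truncRatio_eventually (α := α) x] with p hp
      rw [hp]
    · filter_upwards [eventually_ge_atTop 1] with p hp x
      rw [Real.norm_eq_abs, abs_mul, abs_of_nonneg (hw x), mul_comm, ← mul_assoc]
      exact mul_le_mul_of_nonneg_right (hCb p hp x).2 (hw x)
  have e2 : ∑' x : ℤ, w x * (4 / 3 * x) = 4 / 3 * m := by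
    rw [← hwm.tsum_eq, ← tsum_mul_left]
    exact tsum_congr fun x => by ring
  rw [hwm.tsum_eq] at hlim1
  rw [e2] at hlim2
  have hlim3 := (hlim2.const_mul (7 / 8)).sub hlim1
  have hpos : m / 12 < 7 / 8 * (4 / 3 * m) - m := by linarith
  refine ⟨m / 12, by positivity, ?_⟩
  filter_upwards [hlim3.eventually (lt_mem_nhds hpos), eventually_ge_atTop 16] with p hp hp16
  have hp' : (0 : ℝ) < p := by positivity
  have hp16' : (16 : ℝ) ≤ p := by exact_mod_cast hp16
  have hinj : Function.Injective fun q : ℕ => (q : ℤ) - p := fun a b h => by simpa using h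
  have hconv : ∀ f : ℤ → ℝ, ∑' x : ℤ, f x * w x * truncRatio α p x
      = ∑ q ∈ Finset.range (p + 3), if (1 / 8 : ℝ) * p < q then f ((q : ℤ) - p) * K p q else 0 := by
    intro f
    have hterm : ∀ q : ℕ, f ((q : ℤ) - p) * w ((q : ℤ) - p) * truncRatio α p ((q : ℤ) - p)
        = if (1 / 8 : ℝ) * p < q then f ((q : ℤ) - p) * K p q else 0 := by
      intro q
      unfold truncRatio
      have e : (p : ℝ) + (((q : ℤ) - p : ℤ) : ℝ) = q := by push_cast; ring
      rw [e]
      split_ifs with h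
      · have hq : 2 ≤ q := by
          have : (2 : ℝ) ≤ q := by linarith
          exact_mod_cast this
        rw [hK p q (by omega) hq, add_sub_cancel, Int.toNat_natCast]
        ring
      · simp
    rw [← hinj.tsum_eq]
    · rw [tsum_congr hterm, tsum_eq_sum]
      intro q hq
      rw [hKup p q (by have := Finset.mem_range.not.1 hq; omega)]
      simp
    · intro x hx
      by_contra hx'
      apply hx
      have : ¬ (1 / 8 : ℝ) * p < p + x := by
        intro h
        apply hx'
        have h0 : (0 : ℤ) ≤ p + x := by
          have : (0 : ℝ) ≤ p + x := by linarith
          exact_mod_cast this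
        exact ⟨(p + x).toNat, by simp only; omega⟩
      simp only [truncRatio, if_neg this, mul_zero]
  have hs1 : Summable fun x : ℤ => w x * truncRatio α p x := by
    refine Summable.of_norm_bounded (hw1.summable.mul_left C) fun x => ?_
    rw [Real.norm_eq_abs, abs_mul, abs_of_nonneg (hw x), mul_comm]
    exact mul_le_mul_of_nonneg_right (hCb p (by omega) x).1 (hw x)
  have e3 : ∑' x : ℤ, w x * (p * (1 - truncRatio α p x))
      = p * (1 - ∑' x : ℤ, 1 * w x * truncRatio α p x) := by
    have : ∀ x : ℤ, w x * (p * (1 - truncRatio α p x))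
        = p * (w x - w x * truncRatio α p x) := fun x => by ring
    simp only [this, one_mul]
    rw [tsum_mul_left, hw1.summable.tsum_sub hs1, hw1.tsum_eq]
  rw [e3, hconv fun _ => 1, hconv fun x => x] at hp
  have hsum : ∑ q ∈ Finset.range (p + 3), (7 / 8 * p * (K p q -
      (if (1 / 8 : ℝ) * p < q then 1 * K p q else 0))
      - (if (1 / 8 : ℝ) * p < q then (((q : ℤ) - p : ℤ) : ℝ) * K p q else 0))
      ≤ ∑ q ∈ Finset.range (p + 3), ((p : ℝ) - q) * K p q := by
    refine Finset.sum_le_sum fun q _ => ?_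
    split_ifs with h
    · push_cast
      linarith
    · have := mul_le_mul_of_nonneg_right (show 7 / 8 * (p : ℝ) ≤ p - q by linarith) (hKnn p q)
      linarith
  rw [Finset.sum_sub_distrib, ← Finset.mul_sum, Finset.sum_sub_distrib, hrow] at hsum
  simp only [sub_mul] at hsum
  rw [Finset.sum_sub_distrib, ← Finset.mul_sum, hrow] at hsum
  linarith

end Drift

section Lyapunov

variable {K : ℕ → ℕ → ℝ}

lemma surv_succ_lt_one (hrow : ∀ p, ∑' q, ENNReal.ofReal (K p q) = 1) {p q n : ℕ}
    (hpq : 0 < K p q) (hq : surv K 0 n q < 1) : surv K 0 (n + 1) p < 1 := by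
  rw [surv]
  split_ifs with h
  · rw [← hrow p]
    have hle : ∀ j, ENNReal.ofReal (K p j) * surv K 0 n j ≤ ENNReal.ofReal (K p j) := fun j =>
      (mul_le_mul_right (surv_le_one hrow 0 n j) _).trans_eq (mul_one _)
    refine ENNReal.tsum_lt_tsum (i := q) ?_ hle ?_
    · exact ((ENNReal.tsum_le_tsum hle).trans_eq (hrow p)).trans_lt ENNReal.one_lt_top |>.ne
    · calc ENNReal.ofReal (K p q) * surv K 0 n q < ENNReal.ofReal (K p q) * 1 :=
            ENNReal.mul_lt_mul_right (by simpa using hpq) ENNReal.ofReal_ne_top hq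
        _ = _ := mul_one _
  · exact one_pos

lemma surv_self_lt_one (hrow : ∀ p, ∑' q, ENNReal.ofReal (K p q) = 1)
    (hdown : ∀ p, 0 < K (p + 1) p) (p : ℕ) : surv K 0 p p < 1 := by
  induction p with
  | zero => rw [surv_of_le K le_rfl]; exact one_pos
  | succ p ih => exact surv_succ_lt_one hrow (hdown p) ih

/-- A chain with negative drift far away hits `0` in expected time at most linear in the starting
point. -/
lemma exists_mul_surv_le (hKnn : ∀ p q, 0 ≤ K p q)
    (hrow : ∀ p, ∑' q, ENNReal.ofReal (K p q) = 1)
    (hKup : ∀ p q, p + 2 < q → K p q = 0)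
    (hrow' : ∀ p, ∑ q ∈ Finset.range (p + 3), K p q = 1)
    (hdown : ∀ p, 0 < K (p + 1) p)
    {δ : ℝ} (hδ : 0 < δ)
    (hdrift : ∀ᶠ p : ℕ in atTop, ∑ q ∈ Finset.range (p + 3), (q : ℝ) * K p q ≤ p - δ) :
    ∃ c B : ℝ, 0 ≤ c ∧ 0 ≤ B ∧
      ∀ k p : ℕ, (k : ℝ≥0∞) * surv K 0 k p ≤ ENNReal.ofReal (c * p + B) := by
  obtain ⟨M, hM⟩ := eventually_atTop.1 hdrift
  have hNlt : ∀ p, p < M → (surv K 0 M p).toReal < 1 := fun p hpM => by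
    have h1 : surv K 0 M p < 1 :=
      (surv_antitone hrow 0 p hpM.le).trans_lt (surv_self_lt_one hrow hdown p)
    have := (ENNReal.toReal_lt_toReal (h1.trans ENNReal.one_lt_top).ne ENNReal.one_ne_top).2 h1
    simpa using this
  set c : ℝ := δ⁻¹ with hc
  have hc0 : 0 < c := inv_pos.2 hδ
  set L : ℝ := ∑ p ∈ Finset.range M, (2 * c + 1) / |1 - (surv K 0 M p).toReal| with hL
  have hL0 : 0 ≤ L := Finset.sum_nonneg fun p _ => by positivity
  have hLp : ∀ p, p < M → 2 * c + 1 ≤ L * (1 - (surv K 0 M p).toReal) := fun p hpM => by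
    have h1 := hNlt p hpM
    have h2 := Finset.single_le_sum
      (f := fun p => (2 * c + 1) / |1 - (surv K 0 M p).toReal|)
      (fun i _ => by positivity) (Finset.mem_range.2 hpM)
    rw [abs_of_pos (by linarith), div_le_iff₀ (by linarith)] at h2
    exact h2
  set β : ℕ → ℝ≥0∞ := fun p => ∑ i ∈ Finset.range M, surv K 0 i p with hβ
  have hβN : ∀ p, β p ≤ M := fun p => by
    calc β p ≤ ∑ i ∈ Finset.range M, 1 := Finset.sum_le_sum fun i _ => surv_le_one hrow 0 i p
      _ = M := by simp
  have hβstep : ∀ p, 1 ≤ p →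
      ∑' q, ENNReal.ofReal (K p q) * β q + 1 = β p + surv K 0 M p := fun p hp => by
    have h1 : ∑' q, ENNReal.ofReal (K p q) * β q
        = ∑ i ∈ Finset.range M, surv K 0 (i + 1) p := by
      simp only [hβ, Finset.mul_sum]
      rw [Summable.tsum_finsetSum fun _ _ => ENNReal.summable]
      refine Finset.sum_congr rfl fun i _ => ?_
      rw [surv, if_pos (by omega)]
    have h2 : surv K 0 0 p = 1 := by simp [surv, show 0 < p by omega]
    rw [h1, ← h2, ← Finset.sum_range_succ' fun i => surv K 0 i p, Finset.sum_range_succ]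
  set V : ℕ → ℝ≥0∞ := fun p => ENNReal.ofReal (c * p) + ENNReal.ofReal L * β p with hV
  have hVb : ∀ p, V p ≤ ENNReal.ofReal (c * p + L * M) := fun p => by
    rw [ENNReal.ofReal_add (by positivity) (by positivity), ENNReal.ofReal_mul hL0,
      ENNReal.ofReal_natCast]
    exact add_le_add le_rfl (mul_le_mul_right (hβN p) _)
  refine ⟨c, L * M, hc0.le, by positivity, fun k p =>
    (nat_mul_surv_le hrow (fun p hp => ?_) k p).trans (hVb p)⟩
  set X : ℝ := ∑ q ∈ Finset.range (p + 3), (q : ℝ) * K p q with hX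
  have hX0 : 0 ≤ X := Finset.sum_nonneg fun q _ => mul_nonneg q.cast_nonneg (hKnn p q)
  have e1 : ∑' q, ENNReal.ofReal (K p q) * V q
      = ENNReal.ofReal (c * X) + ENNReal.ofReal L * ∑' q, ENNReal.ofReal (K p q) * β q := by
    have : ∀ q : ℕ, ENNReal.ofReal (K p q) * V q = ENNReal.ofReal (c * (q * K p q))
        + ENNReal.ofReal L * (ENNReal.ofReal (K p q) * β q) := fun q => by
      rw [hV, mul_add, ← ENNReal.ofReal_mul (hKnn p q),
        mul_left_comm (ENNReal.ofReal (K p q))]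
      congr 2
      ring
    rw [tsum_congr this, ENNReal.tsum_add, ENNReal.tsum_mul_left]
    congr 1
    rw [tsum_eq_sum (s := Finset.range (p + 3)), ← ENNReal.ofReal_sum_of_nonneg, hX,
      Finset.mul_sum]
    · exact fun q _ => by have := hKnn p q; positivity
    · intro q hq
      rw [hKup p q (by have := Finset.mem_range.not.1 hq; omega)]
      simp
  rw [e1]
  have hs := hβstep p hp
  have hs1 := surv_le_one hrow 0 M p
  set B := ∑' q, ENNReal.ofReal (K p q) * β q with hB
  have hβtop : β p ≠ ⊤ := ((hβN p).trans_lt (ENNReal.natCast_lt_top M)).ne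
  have hsurvtop : surv K 0 M p ≠ ⊤ := (hs1.trans_lt ENNReal.one_lt_top).ne
  have hBtop : B ≠ ⊤ := by
    intro h
    rw [h, top_add] at hs
    exact (ENNReal.add_ne_top.2 ⟨hβtop, hsurvtop⟩) hs.symm
  have hsR : B.toReal + 1 = (β p).toReal + (surv K 0 M p).toReal := by
    have := congrArg ENNReal.toReal hs
    rwa [ENNReal.toReal_add hBtop ENNReal.one_ne_top, ENNReal.toReal_add hβtop hsurvtop,
      ENNReal.toReal_one] at this
  have hs1R : (surv K 0 M p).toReal ≤ 1 := ENNReal.toReal_le_of_le_ofReal zero_le_one (by simpa)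
  have hreal : c * X + L * B.toReal + 1 ≤ c * p + L * (β p).toReal := by
    have hBe : B.toReal = (β p).toReal + (surv K 0 M p).toReal - 1 := by linarith
    rw [hBe]
    rcases lt_or_ge p M with h | h
    · have hX2 : X ≤ p + 2 := by
        calc X ≤ ∑ q ∈ Finset.range (p + 3), ((p : ℝ) + 2) * K p q := by
              refine Finset.sum_le_sum fun q hq => mul_le_mul_of_nonneg_right ?_ (hKnn p q)
              have : q ≤ p + 2 := by have := Finset.mem_range.1 hq; omega
              exact_mod_cast this
          _ = p + 2 := by rw [← Finset.mul_sum, hrow', mul_one]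
      have := hLp p h
      nlinarith
    · have h1 := hM p h
      have h2 : c * X ≤ c * (p - δ) := mul_le_mul_of_nonneg_left h1 hc0.le
      have h3 : c * δ = 1 := inv_mul_cancel₀ hδ.ne'
      nlinarith
  rw [← ENNReal.ofReal_toReal hBtop, hV]
  simp only
  rw [← ENNReal.ofReal_toReal hβtop, ← ENNReal.ofReal_mul hL0, ← ENNReal.ofReal_mul hL0,
    ← ENNReal.ofReal_add (by positivity) (by positivity), ← ENNReal.ofReal_one,
    ← ENNReal.ofReal_add (by positivity) (by positivity),
    ← ENNReal.ofReal_add (by positivity) (by positivity)]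
  exact ENNReal.ofReal_le_ofReal hreal

end Lyapunov

/-- A summable nonnegative weight of total mass one and finite mean defines a probability measure
on `ℤ`. -/
lemma exists_probabilityMeasure_int {w : ℤ → ℝ} (hw : ∀ x, 0 ≤ w x) (hw1 : HasSum w 1) {m : ℝ}
    (hwm : HasSum (fun x => x * w x) m) :
    ∃ η : Measure ℤ, IsProbabilityMeasure η ∧ (∀ x, η {x} = ENNReal.ofReal (w x)) ∧
      Integrable (fun x : ℤ => (x : ℝ)) η ∧ ∫ x : ℤ, (x : ℝ) ∂η = m := by
  have hsum : ∑' x, ENNReal.ofReal (w x) = 1 := by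
    rw [← ENNReal.ofReal_tsum_of_nonneg hw hw1.summable, hw1.tsum_eq, ENNReal.ofReal_one]
  let P : PMF ℤ := ⟨fun x => ENNReal.ofReal (w x), hsum ▸ ENNReal.summable.hasSum⟩
  have hP : ∀ x, P.toMeasure {x} = ENNReal.ofReal (w x) := fun x =>
    P.toMeasure_apply_singleton x (measurableSet_singleton x)
  have hint : Integrable (fun x : ℤ => (x : ℝ)) P.toMeasure := by
    refine ⟨(measurable_of_countable _).aestronglyMeasurable, ?_⟩
    rw [HasFiniteIntegral, lintegral_countable']
    have : ∀ x : ℤ, ‖(x : ℝ)‖ₑ * P.toMeasure {x} = ENNReal.ofReal |x * w x| := fun x => by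
      rw [hP, Real.enorm_eq_ofReal_abs, ← ENNReal.ofReal_mul (abs_nonneg _), abs_mul,
        abs_of_nonneg (hw x)]
    rw [tsum_congr this, ← ENNReal.ofReal_tsum_of_nonneg (fun _ => abs_nonneg _)
      hwm.summable.abs]
    exact ENNReal.ofReal_lt_top
  refine ⟨P.toMeasure, inferInstance, hP, hint, ?_⟩
  rw [PMF.integral_eq_tsum P _ hint, ← hwm.tsum_eq]
  refine tsum_congr fun x => ?_
  have : (P x).toReal = w x := ENNReal.toReal_ofReal (hw x)
  rw [this, smul_eq_mul, mul_comm]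

/-- Scaling limit of the survival probabilities of an `α`-transformed random walk above a
fixed level. -/
theorem tendsto_surv {α : ℕ → ℝ} (hα : ∀ p, 0 < α p) {b : ℝ} (hb : 0 < b)
    (hlim : Tendsto (fun p : ℕ => (p : ℝ) ^ (4 / 3 : ℝ) * α p) atTop (𝓝 b))
    (hdiff : Tendsto (fun p : ℕ => (p : ℝ) ^ (7 / 3 : ℝ) * (α p - α (p + 1))) atTop
      (𝓝 (4 / 3 * b)))
    {w : ℤ → ℝ} (hw : ∀ x, 0 ≤ w x) (hw1 : HasSum w 1) {m : ℝ} (hm : 0 < m)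
    (hwm : HasSum (fun x => x * w x) m)
    {K : ℕ → ℕ → ℝ} (hKnn : ∀ p q, 0 ≤ K p q)
    (hK : ∀ p q, 1 ≤ p → 2 ≤ q → K p q = α q / α p * w ((q : ℤ) - p))
    (hKup : ∀ p q, p + 2 < q → K p q = 0)
    (hrow : ∀ p, ∑' q, ENNReal.ofReal (K p q) = 1)
    (hdown : ∀ p, 0 < K (p + 1) p)
    (M : ℕ) {t : ℝ} (ht : 0 < t) :
    Tendsto (fun p : ℕ => (surv K M ⌊t * p⌋₊ p).toReal) atTop
      (𝓝 ((1 + m * t) ^ (-(4 : ℝ) / 3))) := by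
  have hrow' : ∀ p, ∑ q ∈ Finset.range (p + 3), K p q = 1 := fun p => by
    have h := hrow p
    rw [tsum_eq_sum (s := Finset.range (p + 3)), ← ENNReal.ofReal_sum_of_nonneg] at h
    · exact ENNReal.ofReal_eq_one.1 h
    · exact fun q _ => hKnn p q
    · intro q hq
      rw [hKup p q (by have := Finset.mem_range.not.1 hq; omega), ENNReal.ofReal_zero]
  obtain ⟨δ, hδ, hdrift⟩ := exists_drift_le hα hb hlim hdiff hw hw1 hm hwm hKnn hK hKup hrow'
  obtain ⟨c, B, hc, hB, hV⟩ := exists_mul_surv_le hKnn hrow hKup hrow' hdown hδ hdrift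
  obtain ⟨η, _, hη, hint, hmean⟩ := exists_probabilityMeasure_int hw hw1 hwm
  have hfloor : ∀ s : ℝ, 0 < s → Tendsto (fun p : ℕ => (⌊s * p⌋₊ : ℝ) / p) atTop (𝓝 s) :=
    fun s hs => (tendsto_nat_floor_mul_div_atTop hs.le).comp tendsto_natCast_atTop_atTop
  have hbar : ∀ ε s : ℝ, 0 < ε → ε < 1 → 0 < s →
      Tendsto (fun p : ℕ => (surv K ⌊ε * p⌋₊ ⌊s * p⌋₊ p).toReal) atTop
        (𝓝 ((1 + m * s) ^ (-(4 : ℝ) / 3))) := fun ε s hε hε1 hs => by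
    have h := tendsto_lintegral_killedWeight hα hb hlim η hint hmean hm hε hε1 hs (hfloor s hs)
    have h2 := (ENNReal.tendsto_toReal ENNReal.ofReal_ne_top).comp h
    rw [ENNReal.toReal_ofReal (by positivity)] at h2
    refine h2.congr' ?_
    have hbig : Tendsto (fun p : ℕ => ε * (p : ℝ)) atTop atTop :=
      tendsto_natCast_atTop_atTop.const_mul_atTop hε
    filter_upwards [hbig.eventually_ge_atTop 1] with p hp
    have h1 : 1 ≤ ⌊ε * (p : ℝ)⌋₊ := Nat.le_floor (by simpa using hp)
    simp only [Function.comp, div_eq_mul_inv]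
    rw [lintegral_mul_const' _ _ (by simpa using hα p),
      ← surv_mul_eq_lintegral hα hw hK η hη h1, mul_assoc, ENNReal.mul_inv_cancel
        (by simpa using hα p) ENNReal.ofReal_ne_top, mul_one]
  have hfin : ∀ M n p, surv K M n p ≠ ⊤ := fun M n p =>
    ((surv_le_one hrow M n p).trans_lt ENNReal.one_lt_top).ne
  refine tendsto_order.2 ⟨fun a ha => ?_, fun a ha => ?_⟩
  · have hbig : Tendsto (fun p : ℕ => (1 / 2 : ℝ) * (p : ℝ)) atTop atTop :=
      tendsto_natCast_atTop_atTop.const_mul_atTop (by norm_num)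
    filter_upwards [(hbar (1 / 2) t (by norm_num) (by norm_num) ht).eventually (lt_mem_nhds ha),
      hbig.eventually_ge_atTop M] with p hp hpM
    exact hp.trans_le ((ENNReal.toReal_le_toReal (hfin _ _ _) (hfin _ _ _)).2
      (surv_mono_level K (Nat.le_floor hpM) _ _))
  · set f : ℝ → ℝ := fun s => (1 + m * s) ^ (-(4 : ℝ) / 3) with hf
    have hcont : ContinuousAt f t := by
      refine ContinuousAt.rpow_const (by fun_prop) (Or.inl (by positivity))
    obtain ⟨s, hs0, hst, hsa⟩ : ∃ s, 0 < s ∧ s < t ∧ f s < a := by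
      have h1 : ∀ᶠ s in 𝓝[<] t, f s < a :=
        (hcont.eventually (gt_mem_nhds ha)).filter_mono nhdsWithin_le_nhds
      have h2 : ∀ᶠ s in 𝓝[<] t, 0 < s :=
        (lt_mem_nhds ht).filter_mono nhdsWithin_le_nhds
      obtain ⟨s, h⟩ := ((h1.and h2).and self_mem_nhdsWithin).exists
      exact ⟨s, h.1.2, h.2, h.1.1⟩
    obtain ⟨ε, hε, hε1, hεa⟩ : ∃ ε, 0 < ε ∧ ε < 1 ∧ f s + c * ε / (t - s) < a := by
      have h1 : Tendsto (fun ε : ℝ => f s + c * ε / (t - s)) (𝓝[>] 0) (𝓝 (f s)) := by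
        have : Continuous fun ε : ℝ => f s + c * ε / (t - s) := by fun_prop
        simpa using (this.tendsto 0).mono_left nhdsWithin_le_nhds
      have h2 : ∀ᶠ ε in 𝓝[>] (0 : ℝ), ε < 1 :=
        (gt_mem_nhds one_pos).filter_mono nhdsWithin_le_nhds
      obtain ⟨ε, h⟩ := (((h1.eventually (gt_mem_nhds hsa)).and h2).and self_mem_nhdsWithin).exists
      exact ⟨ε, h.2, h.1.2, h.1.1⟩
    have hts : 0 < t - s := sub_pos.2 hst
    have herr : Tendsto (fun p : ℕ => (c * (ε * p) + B) / ⌊(t - s) * p⌋₊) atTop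
        (𝓝 (c * ε / (t - s))) := by
      have h1 : Tendsto (fun p : ℕ => (c * ε + B / p) / ((⌊(t - s) * p⌋₊ : ℝ) / p)) atTop
          (𝓝 ((c * ε + 0) / (t - s))) :=
        ((tendsto_const_div_atTop_nhds_zero_nat B).const_add _).div (hfloor _ hts) hts.ne'
      rw [add_zero] at h1
      refine h1.congr' ?_
      filter_upwards [eventually_gt_atTop 0] with p hp
      have : (p : ℝ) ≠ 0 := by exact_mod_cast hp.ne'
      field_simp
    have hsum := (hbar ε s hε hε1 hs0).add herr
    have hbig : Tendsto (fun p : ℕ => (t - s) * (p : ℝ)) atTop atTop :=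
      tendsto_natCast_atTop_atTop.const_mul_atTop hts
    filter_upwards [hsum.eventually (gt_mem_nhds hεa), hbig.eventually_ge_atTop 1] with p hp hp1
    refine lt_of_le_of_lt ?_ hp
    set k := ⌊(t - s) * (p : ℝ)⌋₊ with hk
    have hk1 : 1 ≤ k := Nat.le_floor (by simpa using hp1)
    have hk0 : (0 : ℝ) < k := by exact_mod_cast hk1
    have hle : ∀ j ≤ ⌊ε * (p : ℝ)⌋₊, surv K 0 k j ≤ ENNReal.ofReal ((c * (ε * p) + B) / k) := by
      intro j hj
      have hj' : (j : ℝ) ≤ ε * p := (Nat.le_floor_iff (by positivity)).1 hj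
      rw [ENNReal.ofReal_div_of_pos hk0, ENNReal.ofReal_natCast,
        ENNReal.le_div_iff_mul_le (Or.inl (by simpa using (by omega : k ≠ 0))) (Or.inl (by simp)),
        mul_comm]
      refine (hV k j).trans (ENNReal.ofReal_le_ofReal ?_)
      gcongr
    have h1 : ⌊s * (p : ℝ)⌋₊ + k ≤ ⌊t * (p : ℝ)⌋₊ := by
      refine Nat.le_floor ?_
      push_cast
      have h2 := Nat.floor_le (show 0 ≤ s * (p : ℝ) by positivity)
      have h3 := Nat.floor_le (show 0 ≤ (t - s) * (p : ℝ) by positivity)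
      rw [← hk] at h3
      linarith
    have h4 : surv K M ⌊t * (p : ℝ)⌋₊ p ≤ surv K ⌊ε * (p : ℝ)⌋₊ ⌊s * (p : ℝ)⌋₊ p
        + ENNReal.ofReal ((c * (ε * p) + B) / k) :=
      (surv_mono_level K (Nat.zero_le M) _ _).trans
        ((surv_antitone hrow 0 p h1).trans (surv_zero_add_le hrow hle _ _))
    have h5 := ENNReal.toReal_mono (ENNReal.add_ne_top.2 ⟨hfin _ _ _, ENNReal.ofReal_ne_top⟩) h4
    rwa [ENNReal.toReal_add (hfin _ _ _) ENNReal.ofReal_ne_top, ENNReal.toReal_ofReal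
      (by positivity)] at h5

open scoped ENNReal Real

lemma tendsto_tail_div_pow {x g : ℂ → ℂ} {c : ℕ → ℂ} {r : ℝ} (hr : 0 < r)
    (hx0 : x 0 = 0) (hne : ∀ ζ, ‖ζ‖ ≤ 1 → ζ ≠ 0 → x ζ ≠ 0) (hxc : ContinuousAt x 0)
    (hsum : ∀ ζ, ‖ζ‖ < r → ζ ≠ 0 → HasSum (fun k => c k * x ζ ^ k) (g ζ)) (p : ℕ) :
    Tendsto (fun ζ => (g ζ - ∑ k ∈ Finset.range p, c k * x ζ ^ k) / x ζ ^ p) (𝓝[≠] 0)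
      (𝓝 (c p)) := by
  obtain ⟨ζ₀, hζ₀, h1, h0⟩ : ∃ ζ₀ : ℂ, ‖ζ₀‖ < r ∧ ‖ζ₀‖ ≤ 1 ∧ ζ₀ ≠ 0 := by
    have hpos : 0 < min (r / 2) 1 := by positivity
    refine ⟨(min (r / 2) 1 : ℝ), ?_, ?_, by exact_mod_cast hpos.ne'⟩
    · rw [Complex.norm_real, Real.norm_of_nonneg hpos.le]
      exact (min_le_left _ _).trans_lt (by linarith)
    · rw [Complex.norm_real, Real.norm_of_nonneg hpos.le]
      exact min_le_right _ _
  have hu0 : 0 < ‖x ζ₀‖ := norm_pos_iff.2 (hne ζ₀ h1 h0)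
  have hs : Summable fun k => ‖c k‖ * ‖x ζ₀‖ ^ k := by
    simpa using (hsum ζ₀ hζ₀ h0).summable.norm
  have hs' : Summable fun k => ‖c (k + (p + 1))‖ * ‖x ζ₀‖ ^ k := by
    have := ((summable_nat_add_iff (p + 1)).2 hs).mul_right (‖x ζ₀‖ ^ (p + 1))⁻¹
    refine this.congr fun k => ?_
    rw [pow_add ‖x ζ₀‖ k]
    field_simp
  set B := ∑' k, ‖c (k + (p + 1))‖ * ‖x ζ₀‖ ^ k with hB
  have hx : Tendsto x (𝓝[≠] 0) (𝓝 0) := by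
    have := hxc.tendsto.mono_left (nhdsWithin_le_nhds (s := {0}ᶜ))
    rwa [hx0] at this
  rw [tendsto_iff_norm_sub_tendsto_zero]
  have hbound : Tendsto (fun ζ => ‖x ζ‖ * B) (𝓝[≠] 0) (𝓝 0) := by
    simpa using hx.norm.mul_const B
  refine squeeze_zero' (Eventually.of_forall fun _ => norm_nonneg _) ?_ hbound
  have e1 : ∀ᶠ ζ in 𝓝[≠] (0 : ℂ), ‖x ζ‖ < ‖x ζ₀‖ :=
    hx.norm.eventually (gt_mem_nhds (by simpa using hu0))
  have e2 : ∀ᶠ ζ in 𝓝[≠] (0 : ℂ), ‖ζ‖ < min r 1 := by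
    have : Tendsto (fun ζ : ℂ => ‖ζ‖) (𝓝[≠] 0) (𝓝 0) := by
      simpa using (continuous_norm.tendsto (0 : ℂ)).mono_left (nhdsWithin_le_nhds (s := {0}ᶜ))
    exact this.eventually (gt_mem_nhds (by positivity))
  filter_upwards [e1, e2, self_mem_nhdsWithin] with ζ h1 h2 h3
  have hxζ : x ζ ≠ 0 := hne ζ (h2.le.trans (min_le_right _ _)) h3
  have hS := hsum ζ (h2.trans_le (min_le_left _ _)) h3
  have htail : HasSum (fun k => c (k + (p + 1)) * x ζ ^ (k + (p + 1)))
      (g ζ - ∑ k ∈ Finset.range (p + 1), c k * x ζ ^ k) :=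
    (hasSum_nat_add_iff' (p + 1)).2 hS
  have hle : ∀ k, ‖c (k + (p + 1)) * x ζ ^ (k + (p + 1))‖
      ≤ ‖x ζ‖ ^ (p + 1) * (‖c (k + (p + 1))‖ * ‖x ζ₀‖ ^ k) := fun k => by
    rw [norm_mul, norm_pow, pow_add]
    have : ‖x ζ‖ ^ k ≤ ‖x ζ₀‖ ^ k := by gcongr
    calc ‖c (k + (p + 1))‖ * (‖x ζ‖ ^ k * ‖x ζ‖ ^ (p + 1))
        ≤ ‖c (k + (p + 1))‖ * (‖x ζ₀‖ ^ k * ‖x ζ‖ ^ (p + 1)) := by gcongr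
      _ = _ := by ring
  have hnorm := tsum_of_norm_bounded (hs'.hasSum.mul_left (‖x ζ‖ ^ (p + 1))) hle
  rw [htail.tsum_eq, ← hB] at hnorm
  have e : (g ζ - ∑ k ∈ Finset.range p, c k * x ζ ^ k) / x ζ ^ p - c p
      = (g ζ - ∑ k ∈ Finset.range (p + 1), c k * x ζ ^ k) / x ζ ^ p := by
    rw [Finset.sum_range_succ]
    field_simp
    ring
  rw [e, norm_div, norm_pow, div_le_iff₀ (pow_pos (norm_pos_iff.2 hxζ) p)]
  calc _ ≤ _ := hnorm
    _ = _ := by ring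

section Coefficient

variable {x d g : ℂ → ℂ} {c : ℕ → ℂ} {r : ℝ}

lemma circleIntegral_div_pow_eq_zero (hne : ∀ ζ, ‖ζ‖ ≤ 1 → ζ ≠ 0 → x ζ ≠ 0)
    (hxc : ContinuousOn x (Metric.closedBall 0 1))
    (hd : ∀ ζ ∈ Metric.ball (0 : ℂ) 1, HasDerivAt x (d ζ) ζ)
    (hdc : ContinuousOn d (Metric.closedBall 0 1)) (n : ℕ) :
    ∮ ζ in C(0, 1), d ζ / x ζ ^ (n + 2) = 0 := by
  have hdd : DifferentiableOn ℂ d (Metric.ball 0 1) := by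
    have h1 : DifferentiableOn ℂ x (Metric.ball 0 1) := fun ζ hζ =>
      (hd ζ hζ).differentiableAt.differentiableWithinAt
    exact (h1.deriv Metric.isOpen_ball).congr fun ζ hζ => (hd ζ hζ).deriv.symm
  have hmove := Complex.circleIntegral_eq_of_differentiable_on_annulus_off_countable (c := 0)
    (r := 1 / 2) (R := 1) (by norm_num) (by norm_num) (f := fun ζ => d ζ / x ζ ^ (n + 2))
    Set.countable_empty ?_ ?_
  · rw [hmove]
    refine circleIntegral.integral_eq_zero_of_hasDerivWithinAt (by norm_num)
      (f := fun ζ => -((n : ℂ) + 1)⁻¹ * (x ζ ^ (n + 1))⁻¹) fun ζ hζ => ?_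
    have hζn : ‖ζ‖ = 1 / 2 := by simpa using hζ
    have hxζ : x ζ ≠ 0 := hne ζ (by rw [hζn]; norm_num) (norm_pos_iff.1 (by rw [hζn]; norm_num))
    have h := (((hd ζ (by simp [hζn]; norm_num)).pow (n + 1)).inv (pow_ne_zero _ hxζ)).const_mul
      (-((n : ℂ) + 1)⁻¹)
    refine (h.congr_deriv ?_).hasDerivWithinAt
    have hn : ((n : ℂ) + 1) ≠ 0 := by exact_mod_cast n.succ_ne_zero
    simp only [Pi.pow_apply]
    push_cast
    field_simp
    ring
  · have hsub : Metric.closedBall (0 : ℂ) 1 \ Metric.ball 0 (1 / 2) ⊆ Metric.closedBall 0 1 :=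
      Set.sdiff_subset
    refine (hdc.mono hsub).div ((hxc.mono hsub).pow _) fun ζ hζ => pow_ne_zero _ ?_
    refine hne ζ (by simpa using hζ.1) ?_
    rintro rfl
    simp at hζ
  · rintro ζ ⟨⟨hζ, hζ'⟩, -⟩
    refine ((hdd.differentiableAt (Metric.isOpen_ball.mem_nhds hζ))).div
      ((hd ζ hζ).differentiableAt.pow _) (pow_ne_zero _ (hne ζ ?_ ?_))
    · simpa using (Metric.ball_subset_closedBall hζ)
    · rintro rfl
      apply hζ'
      simp

/-- Cauchy's formula for the coefficients of a power series in a conformal parameter `x`. -/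
theorem circleIntegral_eq_coeff (hr : 0 < r)
    (hx0 : x 0 = 0) (hne : ∀ ζ, ‖ζ‖ ≤ 1 → ζ ≠ 0 → x ζ ≠ 0)
    (hxc : ContinuousOn x (Metric.closedBall 0 1))
    (hd : ∀ ζ ∈ Metric.ball (0 : ℂ) 1, HasDerivAt x (d ζ) ζ)
    (hdc : ContinuousOn d (Metric.closedBall 0 1)) (hd0 : d 0 ≠ 0)
    (hgc : ContinuousOn g (Metric.closedBall 0 1)) (hgd : DifferentiableOn ℂ g (Metric.ball 0 1))
    (hsum : ∀ ζ, ‖ζ‖ < r → ζ ≠ 0 → HasSum (fun k => c k * x ζ ^ k) (g ζ)) (p : ℕ) :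
    ∮ ζ in C(0, 1), g ζ * d ζ / x ζ ^ (p + 1) = 2 * π * Complex.I * c p := by
  have hdd : DifferentiableOn ℂ d (Metric.ball 0 1) := by
    have h1 : DifferentiableOn ℂ x (Metric.ball 0 1) := fun ζ hζ =>
      (hd ζ hζ).differentiableAt.differentiableWithinAt
    exact (h1.deriv Metric.isOpen_ball).congr fun ζ hζ => (hd ζ hζ).deriv.symm
  have hx0d := hd 0 (by simp)
  set G : ℂ → ℂ := fun ζ => g ζ - ∑ k ∈ Finset.range p, c k * x ζ ^ k with hG
  have hGc : ContinuousOn G (Metric.closedBall 0 1) :=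
    hgc.sub (continuousOn_finsetSum _ fun k _ => continuousOn_const.mul (hxc.pow k))
  have hxd : ∀ ζ ∈ Metric.ball (0 : ℂ) 1, DifferentiableAt ℂ x ζ := fun ζ hζ =>
    (hd ζ hζ).differentiableAt
  have hGd : ∀ ζ ∈ Metric.ball (0 : ℂ) 1, DifferentiableAt ℂ G ζ := fun ζ hζ =>
    (hgd.differentiableAt (Metric.isOpen_ball.mem_nhds hζ)).sub
      (DifferentiableAt.fun_sum fun k _ => ((hxd ζ hζ).pow k).const_mul (c k))
  have hlim : Tendsto (fun ζ => ζ * (G ζ * d ζ / x ζ ^ (p + 1))) (𝓝[≠] 0) (𝓝 (c p)) := by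
    have h1 := tendsto_tail_div_pow hr hx0 hne hx0d.continuousAt hsum p
    have h2 : Tendsto (fun ζ => x ζ / ζ) (𝓝[≠] 0) (𝓝 (d 0)) := by
      have := hx0d.tendsto_slope
      refine this.congr fun ζ => ?_
      simp [slope_def_field, hx0]
    have h3 : Tendsto d (𝓝[≠] 0) (𝓝 (d 0)) :=
      ((hdd.differentiableAt (Metric.isOpen_ball.mem_nhds (by simp))).continuousAt.tendsto
        ).mono_left
        nhdsWithin_le_nhds
    have h4 := (h1.mul h3).mul (h2.inv₀ hd0)
    rw [mul_assoc, mul_inv_cancel₀ hd0, mul_one] at h4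
    refine h4.congr fun ζ => ?_
    rw [inv_div, pow_succ, hG]
    simp only [div_eq_mul_inv, mul_inv]
    ring
  have hmain := Complex.circleIntegral_sub_center_inv_smul_of_differentiable_on_off_countable_of_tendsto
    (c := 0) (R := 1) one_pos (f := fun ζ => ζ * (G ζ * d ζ / x ζ ^ (p + 1))) Set.countable_empty
    ?_ ?_ hlim
  · have e1 : ∮ ζ in C(0, 1), (ζ - 0)⁻¹ • (ζ * (G ζ * d ζ / x ζ ^ (p + 1)))
        = ∮ ζ in C(0, 1), G ζ * d ζ / x ζ ^ (p + 1) := by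
      refine circleIntegral.integral_congr zero_le_one fun ζ hζ => ?_
      have : ζ ≠ 0 := by rintro rfl; simp at hζ
      simp only [sub_zero, smul_eq_mul]
      field_simp
    rw [e1, smul_eq_mul] at hmain
    have hsph : Metric.sphere (0 : ℂ) 1 ⊆ Metric.closedBall 0 1 := Metric.sphere_subset_closedBall
    have hnes : ∀ ζ ∈ Metric.sphere (0 : ℂ) 1, x ζ ≠ 0 := fun ζ hζ =>
      hne ζ (by simpa using hsph hζ) (by rintro rfl; simp at hζ)
    have hci : ∀ F : ℂ → ℂ, ContinuousOn F (Metric.closedBall 0 1) → ∀ n : ℕ,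
        CircleIntegrable (fun ζ => F ζ * d ζ / x ζ ^ n) 0 1 := fun F hF n =>
      ContinuousOn.circleIntegrable zero_le_one
        ((((hF.mono hsph).mul (hdc.mono hsph))).div ((hxc.mono hsph).pow n)
          fun ζ hζ => pow_ne_zero _ (hnes ζ hζ))
    have hzero : ∀ k ∈ Finset.range p,
        ∮ ζ in C(0, 1), c k * x ζ ^ k * d ζ / x ζ ^ (p + 1) = 0 := fun k hk => by
      obtain ⟨j, rfl⟩ := Nat.exists_eq_add_of_lt (Finset.mem_range.1 hk)
      have := circleIntegral_div_pow_eq_zero hne hxc hd hdc j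
      have e : ∮ ζ in C(0, 1), c k * x ζ ^ k * d ζ / x ζ ^ (k + j + 1 + 1)
          = ∮ ζ in C(0, 1), c k * (d ζ / x ζ ^ (j + 2)) := by
        refine circleIntegral.integral_congr zero_le_one fun ζ hζ => ?_
        have hxζ := hnes ζ hζ
        have : x ζ ^ (k + j + 1 + 1) = x ζ ^ k * x ζ ^ (j + 2) := by rw [← pow_add]; congr 1
        simp only [this]
        field_simp
      rw [e, circleIntegral.integral_const_mul, this, mul_zero]
    have hsplit : ∮ ζ in C(0, 1), g ζ * d ζ / x ζ ^ (p + 1)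
        = (∮ ζ in C(0, 1), G ζ * d ζ / x ζ ^ (p + 1))
          + ∮ ζ in C(0, 1), (∑ k ∈ Finset.range p, c k * x ζ ^ k) * d ζ / x ζ ^ (p + 1) := by
      rw [← circleIntegral.integral_add (hci G hGc (p + 1))
        (hci (fun ζ => ∑ k ∈ Finset.range p, c k * x ζ ^ k)
        (continuousOn_finsetSum _ fun k _ => continuousOn_const.mul (hxc.pow k)) (p + 1))]
      congr 1
      ext ζ
      simp only [hG]
      ring
    rw [hsplit, hmain]
    simp only [Finset.sum_mul, Finset.sum_div]
    rw [circleIntegral.integral_fun_sum, Finset.sum_eq_zero hzero, add_zero]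
    exact fun k _ => hci _ (continuousOn_const.mul (hxc.pow k)) _
  · have hsub : Metric.closedBall (0 : ℂ) 1 \ {0} ⊆ Metric.closedBall 0 1 := Set.sdiff_subset
    refine continuousOn_id.mul ((((hGc.mono hsub).mul (hdc.mono hsub))).div
      ((hxc.mono hsub).pow _) fun ζ hζ => pow_ne_zero _ (hne ζ (by simpa using hζ.1) hζ.2))
  · rintro ζ ⟨⟨hζ, hζ'⟩, -⟩
    refine differentiableAt_id.mul (((hGd ζ hζ).mul
      (hdd.differentiableAt (Metric.isOpen_ball.mem_nhds hζ))).div ((hxd ζ hζ).pow _)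
      (pow_ne_zero _ (hne ζ (by simpa using Metric.ball_subset_closedBall hζ) hζ')))

end Coefficient

section Constants

lemma sq_sqrt_seven : Real.sqrt 7 ^ 2 = 7 := Real.sq_sqrt (by norm_num)

lemma tc_pos : 0 < tc := by unfold tc; positivity

lemma uc_pos : 0 < uc := by have := tc_pos; unfold uc; positivity

lemma nuc_pos : 0 < nuc := by unfold nuc; positivity

lemma tc_eq : tc = 5 * (7 - Real.sqrt 7) / 252 * uc := by
  have h := sq_sqrt_seven
  unfold uc
  linear_combination (6 / 252 * tc) * h

lemma uc_sq : uc ^ 2 = 3 * (7 - Real.sqrt 7) / 560 := by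
  have h := sq_sqrt_seven
  have h7 : (0 : ℝ) < 7 + Real.sqrt 7 := by positivity
  have ht : tc ^ 2 = 10 / (64 * (7 + Real.sqrt 7) ^ 3) := by
    unfold tc
    rw [div_pow, mul_pow, Real.sq_sqrt (by norm_num), ← Real.rpow_natCast (_ ^ _),
      ← Real.rpow_mul h7.le]
    norm_num
  unfold uc
  rw [mul_pow, ht]
  field_simp
  linear_combination 4800 * h

end Constants

section Parametrization

lemma ten_sub_ne_zero_of_re {H : ℂ} (hH : H.re ≤ 1) : 10 - 12 * H + 6 * H ^ 2 - H ^ 3 ≠ 0 := by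
  intro h
  have hre := congrArg Complex.re h
  have him := congrArg Complex.im h
  simp [pow_succ] at hre him
  set a := H.re
  set b := H.im
  have ha : a ≤ 1 := hH
  have h1 : b * (3 * (2 - a) ^ 2 - b ^ 2) = 0 := by linarith
  have h2 : (2 - a) ^ 3 - 3 * (2 - a) * b ^ 2 + 2 = 0 := by linarith
  have h3 : 1 ≤ (2 - a) ^ 3 := one_le_pow₀ (by linarith)
  rcases mul_eq_zero.1 h1 with hb | hb
  · rw [hb] at h2; nlinarith
  · have : b ^ 2 = 3 * (2 - a) ^ 2 := by linarith
    rw [this] at h2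
    nlinarith

lemma ten_sub_ne_zero {H : ℂ} (hH : ‖H‖ ≤ 1) : 10 - 12 * H + 6 * H ^ 2 - H ^ 3 ≠ 0 :=
  ten_sub_ne_zero_of_re ((Complex.re_le_norm H).trans hH)

lemma uhat_zero : uhat 0 = 0 := by simp [uhat]

lemma uhat_ne_zero {H : ℂ} (hH : ‖H‖ ≤ 1) (h0 : H ≠ 0) : uhat H ≠ 0 := by
  have := uc_pos.ne'
  unfold uhat
  exact mul_ne_zero (mul_ne_zero (by simpa using this) h0) (ten_sub_ne_zero hH)

lemma uc_le_norm_uhat {H : ℂ} (hH : ‖H‖ = 1) : uc ≤ ‖uhat H‖ := by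
  have hP : 3 ≤ ‖10 - 12 * H + 6 * H ^ 2 - H ^ 3‖ := by
    have hn : H.re ^ 2 + H.im ^ 2 = 1 := by
      have := Complex.sq_norm H
      rw [Complex.normSq_apply, hH] at this
      linarith
    refine le_of_sq_le_sq ?_ (norm_nonneg _)
    rw [Complex.sq_norm, Complex.normSq_apply]
    simp [pow_succ]
    set a := H.re
    set b := H.im
    have ha : a ≤ 1 := by nlinarith [sq_nonneg b]
    have hb : b ^ 2 = 1 - a ^ 2 := by linarith
    have e1 : 10 - 12 * a + 6 * (a * a - b * b) - ((a * a - b * b) * a - (a * b + b * a) * b)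
      = 4 - 9 * a + 12 * a ^ 2 - 4 * a ^ 3 := by linear_combination (-6 + 3 * a) * hb
    have e2 : -(12 * b) + 6 * (a * b + b * a) - ((a * a - b * b) * b + (a * b + b * a) * a)
      = b * (-11 + 12 * a - 4 * a ^ 2) := by linear_combination b * hb
    rw [e1, e2]
    have : 0 ≤ 16 * (1 - a) ^ 2 * (8 - 5 * a) := by
      have : 0 ≤ 8 - 5 * a := by linarith
      positivity
    linear_combination this - (-11 + 12 * a - 4 * a ^ 2) ^ 2 * hb
  have hu := uc_pos
  unfold uhat
  rw [norm_mul, norm_mul, hH, norm_div, Complex.norm_real, Real.norm_of_nonneg hu.le]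
  norm_num
  nlinarith

/-- The derivative of `uhat`. -/
noncomputable def duhat (H : ℂ) : ℂ :=
  ((uc : ℂ) / 3) * (10 - 24 * H + 18 * H ^ 2 - 4 * H ^ 3)

lemma hasDerivAt_uhat (H : ℂ) : HasDerivAt uhat (duhat H) H := by
  have h : HasDerivAt (fun H : ℂ => ((uc : ℂ) / 3) * H * (10 - 12 * H + 6 * H ^ 2 - H ^ 3)) _ H :=
    ((hasDerivAt_id H).const_mul ((uc : ℂ) / 3)).mul
      (((((hasDerivAt_id H).const_mul 12).const_sub 10).add
        (((hasDerivAt_id H).pow 2).const_mul 6)).sub ((hasDerivAt_id H).pow 3))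
  refine (h.congr_deriv ?_)
  simp [duhat]
  ring

lemma continuous_uhat : Continuous uhat := by unfold uhat; fun_prop

lemma differentiableOn_Z0hat (s : Set ℂ) : DifferentiableOn ℂ Z0hat s := by
  unfold Z0hat; fun_prop

lemma Z1hat_differentiableAt {H : ℂ} (hH : ‖H‖ ≤ 1) : DifferentiableAt ℂ Z1hat H := by
  unfold Z1hat
  have := ten_sub_ne_zero hH
  fun_prop (disch := assumption)

lemma Z0hat_zero : Z0hat 0 = 1 := by simp [Z0hat]
lemma parametrization_identity {H s v w R : ℂ} (hs : s ^ 2 = 7)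
    (hv : v ^ 2 = 3 * (7 - s) / 560) (hw : v * w = 3 / 10)
    (hR : R * (10 - 12 * H + 6 * H ^ 2 - H ^ 3) =
      (s - 1 + H) * (10 - 12 * H + 6 * H ^ 2 - H ^ 3) - 3 * (4 - 3 * H + H ^ 2)) :
    (v / 3 * H * (10 - 12 * H + 6 * H ^ 2 - H ^ 3)) ^ 2 * (w * R) =
      (1 + 2 * s) * (v / 3 * H * (10 - 12 * H + 6 * H ^ 2 - H ^ 3)) *
        (1 / 10 * (1 - (1 - s) * H + 3 * H ^ 2 - H ^ 3) *
          (10 - 12 * H + 6 * H ^ 2 - H ^ 3) - 1)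
      - ((1 + 2 * s) ^ 2 - 1) * (5 * (7 - s) / 252 * v *
        ((1 / 10 * (1 - (1 - s) * H + 3 * H ^ 2 - H ^ 3) * (10 - 12 * H + 6 * H ^ 2 - H ^ 3)) ^ 2
          - 1 / 10 * (1 - (1 - s) * H + 3 * H ^ 2 - H ^ 3) * (10 - 12 * H + 6 * H ^ 2 - H ^ 3)
          - v / 3 * H * (10 - 12 * H + 6 * H ^ 2 - H ^ 3) * (w * (s - 1 - 6 / 5)))
        + (v / 3 * H * (10 - 12 * H + 6 * H ^ 2 - H ^ 3)) ^ 3) := by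
  have e3 : (v / 3 * H * (10 - 12 * H + 6 * H ^ 2 - H ^ 3)) ^ 2 * (w * R)
      = v * H ^ 2 * (10 - 12 * H + 6 * H ^ 2 - H ^ 3) / 30 *
        ((s - 1 + H) * (10 - 12 * H + 6 * H ^ 2 - H ^ 3) - 3 * (4 - 3 * H + H ^ 2)) := by
    linear_combination (v / 9 * H ^ 2 * (10 - 12 * H + 6 * H ^ 2 - H ^ 3) ^ 2 * R) * hw
      + (v * H ^ 2 * (10 - 12 * H + 6 * H ^ 2 - H ^ 3) / 30) * hR
  rw [e3]
  linear_combination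
    - (v / 3 * H * (10 - 12 * H + 6 * H ^ 2 - H ^ 3)) * (((1 + 2 * s) ^ 2 - 1)
      * (5 * (7 - s) / 252)) * hw * (s - 1 - 6 / 5)
    + (((1 + 2 * s) ^ 2 - 1) * v * H ^ 3 * (10 - 12 * H + 6 * H ^ 2 - H ^ 3) ^ 3 / 27) * hv
    + v * (s ^ 0 * ((17/21) * H ^ 3 - (262/105) * H ^ 4 + (121/35) * H ^ 5 - (577/210) * H ^ 6 +
        (47/35) * H ^ 7 - (2/5) * H ^ 8 + (1/15) * H ^ 9 - (1/210) * H ^ 10) +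
      s ^ 1 * ((-167/63) * H ^ 2 + (5219/630) * H ^ 3 - (809/63) * H ^ 4 +
        (7747/630) * H ^ 5 - (1397/180) * H ^ 6 + (227/70) * H ^ 7 - (1087/1260) * H ^ 8 +
        (83/630) * H ^ 9 - (11/1260) * H ^ 10) +
      s ^ 2 * ((52/63) * H ^ 2 - (244/105) * H ^ 3 + (29/9) * H ^ 4 - (874/315) * H ^ 5 +
        (8/5) * H ^ 6 - (131/210) * H ^ 7 + (10/63) * H ^ 8 - (1/42) * H ^ 9 +
        (1/630) * H ^ 10) +
      s ^ 3 * ((-5/63) * H ^ 2 + (4/21) * H ^ 3 - (22/105) * H ^ 4 + (41/315) * H ^ 5 -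
        (1/21) * H ^ 6 + (1/105) * H ^ 7 - (1/1260) * H ^ 8)) * hs

lemma Z1hat_eq {H : ℂ} (hH : ‖H‖ ≤ 1) :
    uhat H ^ 2 * Z1hat H = nuc * uhat H * (Z0hat H - 1)
      - ((nuc : ℂ) ^ 2 - 1) * (tc * (Z0hat H ^ 2 - Z0hat H - uhat H * Z1hat 0) + uhat H ^ 3) := by
  have hP := ten_sub_ne_zero hH
  have hs : (Real.sqrt 7 : ℂ) ^ 2 = 7 := by exact_mod_cast sq_sqrt_seven
  have hu : (uc : ℂ) ≠ 0 := by exact_mod_cast uc_pos.ne'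
  have hu2 : (uc : ℂ) ^ 2 = 3 * (7 - Real.sqrt 7) / 560 := by exact_mod_cast uc_sq
  have ht : (tc : ℂ) = 5 * (7 - Real.sqrt 7) / 252 * uc := by exact_mod_cast tc_eq
  have hn : (nuc : ℂ) = 1 + 2 * Real.sqrt 7 := by simp [nuc]
  have h0 : Z1hat 0 = 3 / (10 * (uc : ℂ)) * ((Real.sqrt 7 : ℂ) - 1 - 6 / 5) := by
    unfold Z1hat; norm_num
  rw [hn, ht, h0]
  refine parametrization_identity hs hu2 (by field_simp) ?_
  rw [sub_mul, div_mul_cancel₀ _ hP]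

end Parametrization

section Extraction

lemma nuc_sq_sub_one_ne_zero : (nuc : ℂ) ^ 2 - 1 ≠ 0 := by
  have h : nuc ^ 2 - 1 = 28 + 4 * Real.sqrt 7 := by
    unfold nuc; linear_combination 4 * sq_sqrt_seven
  have : nuc ^ 2 - 1 ≠ 0 := by rw [h]; positivity
  exact_mod_cast this

lemma hasSum_rows {z : ℕ → ℕ → ℝ} {x y S : ℂ} (hx : x ≠ 0)
    (h : HasSum (fun pq : ℕ × ℕ => (z pq.1 pq.2 : ℂ) * x ^ pq.1 * y ^ pq.2) S) :
    (∀ p, Summable fun q => (z p q : ℂ) * y ^ q) ∧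
      HasSum (fun p => (∑' q, (z p q : ℂ) * y ^ q) * x ^ p) S := by
  have hs : ∀ p, Summable fun q => (z p q : ℂ) * y ^ q := fun p => by
    have := (h.summable.prod_factor p).mul_left ((x ^ p)⁻¹)
    refine this.congr fun q => ?_
    have : x ^ p ≠ 0 := pow_ne_zero _ hx
    field_simp
  refine ⟨hs, h.prod_fiberwise fun p => ?_⟩
  have := (hs p).hasSum.mul_right (x ^ p)
  refine this.congr_fun fun q => ?_
  ring

lemma continuous_Z0hat : Continuous Z0hat := by unfold Z0hat; fun_prop

lemma continuousAt_Z1hat_zero : ContinuousAt Z1hat 0 :=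
  (Z1hat_differentiableAt (by simp)).continuousAt

lemma tendsto_uhat : Tendsto uhat (𝓝[≠] 0) (𝓝 0) := by
  have := continuous_uhat.tendsto 0
  rw [uhat_zero] at this
  exact this.mono_left nhdsWithin_le_nhds

lemma tendsto_Z0hat : Tendsto Z0hat (𝓝[≠] 0) (𝓝 1) := by
  have := continuous_Z0hat.tendsto 0
  rw [Z0hat_zero] at this
  exact this.mono_left nhdsWithin_le_nhds

lemma tendsto_Z1hat : Tendsto Z1hat (𝓝[≠] 0) (𝓝 (Z1hat 0)) :=
  continuousAt_Z1hat_zero.tendsto.mono_left nhdsWithin_le_nhds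

variable {ρ : ℝ} {z : ℕ → ℕ → ℝ}

lemma eventually_norm_lt_and_ne {r : ℝ} (hr : 0 < r) : ∀ᶠ ζ : ℂ in 𝓝[≠] 0, ‖ζ‖ < r ∧ ζ ≠ 0 := by
  have h1 : ∀ᶠ ζ : ℂ in 𝓝[≠] 0, ‖ζ‖ < r := by
    refine nhdsWithin_le_nhds ?_
    filter_upwards [Metric.ball_mem_nhds (0 : ℂ) hr] with ζ hζ
    simpa using hζ
  filter_upwards [h1, self_mem_nhdsWithin] with ζ h2 h3
  exact ⟨h2, h3⟩

lemma hasSum_row_zero_one (hρ : 0 < ρ)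
    (hZ : ∀ H K : ℂ, ‖H‖ < ρ → ‖K‖ < ρ → ∃ ZHK : ℂ,
      HasSum (fun pq : ℕ × ℕ => (z pq.1 pq.2 : ℂ) * uhat H ^ pq.1 * uhat K ^ pq.2) ZHK ∧
      ((nuc : ℂ) * uhat K * uhat H - uhat H ^ 2
          - ((nuc : ℂ) ^ 2 - 1) * (tc : ℂ) * uhat K * (Z0hat H + uhat H * Z1hat K))
          * (ZHK - Z0hat K)
        = uhat H ^ 2 * (Z0hat K - Z0hat H)
          + ((nuc : ℂ) ^ 2 - 1) * uhat H * uhat K * (uhat H ^ 2 - (tc : ℂ) * Z0hat H * Z1hat K))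
    {K : ℂ} (hK : ‖K‖ < min ρ 1) (hK0 : K ≠ 0) :
    HasSum (fun q => (z 0 q : ℂ) * uhat K ^ q) (Z0hat K) ∧
      HasSum (fun q => (z 1 q : ℂ) * uhat K ^ q) (Z1hat K) := by
  have hr : 0 < min ρ 1 := by positivity
  have hv : uhat K ≠ 0 := uhat_ne_zero (hK.trans_le (min_le_right _ _)).le hK0
  have ht : (tc : ℂ) ≠ 0 := by exact_mod_cast tc_pos.ne'
  have hν := nuc_sq_sub_one_ne_zero
  have hex : ∀ H : ℂ, ∃ g : ℂ, ‖H‖ < min ρ 1 → _ ∧ _ := fun H =>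
    if h : ‖H‖ < min ρ 1 then
      (hZ H K (h.trans_le (min_le_left _ _)) (hK.trans_le (min_le_left _ _))).imp fun g hg _ => hg
    else ⟨0, fun h' => absurd h' h⟩
  choose g hg using hex
  have hrow : ∀ H : ℂ, ‖H‖ < min ρ 1 → H ≠ 0 → _ ∧ _ := fun H h h0 =>
    hasSum_rows (uhat_ne_zero (h.trans_le (min_le_right _ _)).le h0) (hg H h).1
  obtain ⟨hs, -⟩ := hrow K hK hK0
  set F : ℕ → ℂ := fun p => ∑' q, (z p q : ℂ) * uhat K ^ q with hF
  have htail := tendsto_tail_div_pow hr uhat_zero (fun ζ => uhat_ne_zero)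
    continuous_uhat.continuousAt
    (g := g) (c := F) fun H h h0 => (hrow H h h0).2
  have h0 := htail 0
  have h1 := htail 1
  simp only [Finset.range_zero, Finset.sum_empty, sub_zero, pow_zero, div_one, Finset.sum_range_one,
    mul_one, pow_one] at h0 h1
  have hcoef : Tendsto (fun H => (nuc : ℂ) * uhat K * uhat H - uhat H ^ 2
      - ((nuc : ℂ) ^ 2 - 1) * (tc : ℂ) * uhat K * (Z0hat H + uhat H * Z1hat K)) (𝓝[≠] 0)
      (𝓝 ((nuc : ℂ) * uhat K * 0 - 0 ^ 2
      - ((nuc : ℂ) ^ 2 - 1) * (tc : ℂ) * uhat K * (1 + 0 * Z1hat K))) :=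
    ((tendsto_uhat.const_mul _).sub (tendsto_uhat.pow 2)).sub
      ((tendsto_Z0hat.add (tendsto_uhat.mul_const _)).const_mul _)
  have hF0 : F 0 = Z0hat K := by
    have hl := hcoef.mul (h0.sub_const (Z0hat K))
    have hrr : Tendsto (fun H => uhat H ^ 2 * (Z0hat K - Z0hat H)
          + ((nuc : ℂ) ^ 2 - 1) * uhat H * uhat K * (uhat H ^ 2 - (tc : ℂ) * Z0hat H * Z1hat K))
        (𝓝[≠] 0) (𝓝 (0 ^ 2 * (Z0hat K - 1)
          + ((nuc : ℂ) ^ 2 - 1) * 0 * uhat K * (0 ^ 2 - (tc : ℂ) * 1 * Z1hat K))) :=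
      ((tendsto_uhat.pow 2).mul (tendsto_Z0hat.const_sub _)).add
        (((tendsto_uhat.const_mul _).mul_const _).mul
          ((tendsto_uhat.pow 2).sub ((tendsto_Z0hat.const_mul _).mul_const _)))
    have := tendsto_nhds_unique (hl.congr' ?_) hrr
    · have h3 : ((nuc : ℂ) ^ 2 - 1) * tc * uhat K * (F 0 - Z0hat K) = 0 := by
        linear_combination -this
      simpa [hν, ht, hv, sub_eq_zero] using h3
    · filter_upwards [eventually_norm_lt_and_ne hr] with H hH
      exact (hg H hH.1).2
  have hF1 : F 1 = Z1hat K := by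
    have hl := hcoef.mul h1
    have hrr : Tendsto (fun H => uhat H * (Z0hat K - Z0hat H)
          + ((nuc : ℂ) ^ 2 - 1) * uhat K * (uhat H ^ 2 - (tc : ℂ) * Z0hat H * Z1hat K))
        (𝓝[≠] 0) (𝓝 (0 * (Z0hat K - 1)
          + ((nuc : ℂ) ^ 2 - 1) * uhat K * (0 ^ 2 - (tc : ℂ) * 1 * Z1hat K))) :=
      (tendsto_uhat.mul (tendsto_Z0hat.const_sub _)).add
        (((tendsto_uhat.pow 2).sub ((tendsto_Z0hat.const_mul _).mul_const _)).const_mul _)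
    have := tendsto_nhds_unique (hl.congr' ?_) hrr
    · have h3 : ((nuc : ℂ) ^ 2 - 1) * tc * uhat K * (F 1 - Z1hat K) = 0 := by
        linear_combination -this
      simpa [hν, ht, hv, sub_eq_zero] using h3
    · filter_upwards [eventually_norm_lt_and_ne hr] with H hH
      have hu := uhat_ne_zero (hH.1.trans_le (min_le_right _ _)).le hH.2
      have := (hg H hH.1).2
      rw [hF0, ← mul_div_assoc, this]
      field_simp
  exact ⟨hF0 ▸ (hs 0).hasSum, hF1 ▸ (hs 1).hasSum⟩

lemma hasSum_column_one (hρ : 0 < ρ)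
    (hz0 : ∀ H : ℂ, ‖H‖ < ρ →
      HasSum (fun p : ℕ => (z p 0 : ℂ) * uhat H ^ p) (Z0hat H))
    (hZ : ∀ H K : ℂ, ‖H‖ < ρ → ‖K‖ < ρ → ∃ ZHK : ℂ,
      HasSum (fun pq : ℕ × ℕ => (z pq.1 pq.2 : ℂ) * uhat H ^ pq.1 * uhat K ^ pq.2) ZHK ∧
      ((nuc : ℂ) * uhat K * uhat H - uhat H ^ 2
          - ((nuc : ℂ) ^ 2 - 1) * (tc : ℂ) * uhat K * (Z0hat H + uhat H * Z1hat K))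
          * (ZHK - Z0hat K)
        = uhat H ^ 2 * (Z0hat K - Z0hat H)
          + ((nuc : ℂ) ^ 2 - 1) * uhat H * uhat K * (uhat H ^ 2 - (tc : ℂ) * Z0hat H * Z1hat K))
    {H : ℂ} (hH : ‖H‖ < min ρ 1) (hH0 : H ≠ 0) :
    HasSum (fun p => (z p 1 : ℂ) * uhat H ^ p) (Z1hat H) := by
  have hr : 0 < min ρ 1 := by positivity
  have hH1 : ‖H‖ ≤ 1 := (hH.trans_le (min_le_right _ _)).le
  have hu : uhat H ≠ 0 := uhat_ne_zero hH1 hH0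
  have hex : ∀ K : ℂ, ∃ g : ℂ, ‖K‖ < min ρ 1 → _ ∧ _ := fun K =>
    if h : ‖K‖ < min ρ 1 then
      (hZ H K (hH.trans_le (min_le_left _ _)) (h.trans_le (min_le_left _ _))).imp fun g hg _ => hg
    else ⟨0, fun h' => absurd h' h⟩
  choose g hg using hex
  have hrow : ∀ K : ℂ, ‖K‖ < min ρ 1 → K ≠ 0 → _ ∧ _ := fun K h h0 =>
    hasSum_rows (z := fun p q => z q p) (x := uhat K) (y := uhat H) (S := g K)
      (uhat_ne_zero (h.trans_le (min_le_right _ _)).le h0)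
      (by
        have := (Equiv.prodComm ℕ ℕ).hasSum_iff.2 (hg K h).1
        refine this.congr_fun fun q => ?_
        simp
        ring)
  obtain ⟨hs, -⟩ := hrow H hH hH0
  set F : ℕ → ℂ := fun p => ∑' q, (z q p : ℂ) * uhat H ^ q with hF
  have htail := tendsto_tail_div_pow hr uhat_zero (fun ζ => uhat_ne_zero)
    continuous_uhat.continuousAt
    (g := g) (c := F) fun K h h0 => (hrow K h h0).2
  have h0 := htail 0
  have h1 := htail 1
  simp only [Finset.range_zero, Finset.sum_empty, sub_zero, pow_zero, div_one, Finset.sum_range_one,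
    mul_one, pow_one] at h0 h1
  have hF0 : F 0 = Z0hat H := (hz0 H (hH.trans_le (min_le_left _ _))).tsum_eq
  have hl : Tendsto (fun K => ((nuc : ℂ) * uhat H
      - ((nuc : ℂ) ^ 2 - 1) * (tc : ℂ) * (Z0hat H + uhat H * Z1hat K)) * (g K - Z0hat K)) (𝓝[≠] 0)
      (𝓝 (((nuc : ℂ) * uhat H
      - ((nuc : ℂ) ^ 2 - 1) * (tc : ℂ) * (Z0hat H + uhat H * Z1hat 0)) * (F 0 - 1))) :=
    ((((tendsto_Z1hat.const_mul _).const_add _).const_mul _).const_sub _).mul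
      (h0.sub tendsto_Z0hat)
  have hrr : Tendsto (fun K => uhat H ^ 2 * ((g K - F 0) / uhat K)
      + ((nuc : ℂ) ^ 2 - 1) * uhat H * (uhat H ^ 2 - (tc : ℂ) * Z0hat H * Z1hat K))
      (𝓝[≠] 0) (𝓝 (uhat H ^ 2 * F 1
      + ((nuc : ℂ) ^ 2 - 1) * uhat H * (uhat H ^ 2 - (tc : ℂ) * Z0hat H * Z1hat 0))) :=
    (h1.const_mul _).add (((tendsto_Z1hat.const_mul _).const_sub _).const_mul _)
  have hlim := tendsto_nhds_unique (hl.congr' ?_) hrr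
  · have hF1 : F 1 = Z1hat H := by
      have h3 : uhat H ^ 2 * (F 1 - Z1hat H) = 0 := by
        rw [mul_sub, Z1hat_eq hH1]
        rw [hF0] at hlim
        linear_combination -hlim
      simpa [hu, sub_eq_zero] using h3
    exact hF1 ▸ (hs 1).hasSum
  · filter_upwards [eventually_norm_lt_and_ne hr] with K hK
    have hv := uhat_ne_zero (hK.1.trans_le (min_le_right _ _)).le hK.2
    have := (hg K hK.1).2
    rw [hF0]
    field_simp
    linear_combination this

end Extraction

section Extension

lemma continuous_duhat : Continuous duhat := by unfold duhat; fun_prop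

lemma duhat_zero_ne_zero : duhat 0 ≠ 0 := by
  have := uc_pos.ne'
  simp [duhat, this]

lemma exists_coeff_le {c : ℕ → ℝ} {g : ℂ → ℂ} {r : ℝ} (hr : 0 < r)
    (hg : ∀ H : ℂ, ‖H‖ ≤ 1 → DifferentiableAt ℂ g H)
    (hsum : ∀ H : ℂ, ‖H‖ < r → H ≠ 0 → HasSum (fun k => (c k : ℂ) * uhat H ^ k) (g H)) :
    ∃ C, ∀ k, |c k| * uc ^ k ≤ C := by
  have hu := uc_pos
  have hgc : ContinuousOn g (Metric.closedBall 0 1) := fun H hH =>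
    (hg H (by simpa using hH)).continuousAt.continuousWithinAt
  obtain ⟨M, hM⟩ := (isCompact_closedBall (0 : ℂ) 1).exists_bound_of_continuousOn
    (hgc.mul continuous_duhat.continuousOn)
  refine ⟨M / uc, fun k => ?_⟩
  have hI := circleIntegral_eq_coeff (c := fun k => (c k : ℂ)) hr uhat_zero
    (fun H => uhat_ne_zero) continuous_uhat.continuousOn (fun H _ => hasDerivAt_uhat H)
    continuous_duhat.continuousOn duhat_zero_ne_zero hgc
    (fun H hH => (hg H (by simpa using (Metric.ball_subset_closedBall hH))).differentiableWithinAt)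
    hsum k
  have hb := circleIntegral.norm_integral_le_of_norm_le_const (c := 0) (R := 1) zero_le_one
    (f := fun ζ => g ζ * duhat ζ / uhat ζ ^ (k + 1)) (C := M / uc ^ (k + 1)) fun ζ hζ => by
      have h1 := hM ζ (Metric.sphere_subset_closedBall hζ)
      have h2 := uc_le_norm_uhat (H := ζ) (by simpa using hζ)
      have h3 : 0 ≤ M := (norm_nonneg _).trans h1
      rw [Pi.mul_apply] at h1
      rw [norm_div, norm_pow]
      gcongr
  rw [hI] at hb
  simp only [norm_mul, Complex.norm_real, Complex.norm_I, mul_one, Complex.norm_ofNat,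
    Real.norm_eq_abs, abs_of_pos Real.pi_pos] at hb
  have h4 : |c k| ≤ M / uc ^ (k + 1) := le_of_mul_le_mul_left hb (by positivity)
  rw [le_div_iff₀ (by positivity)] at h4 ⊢
  rw [pow_succ] at h4
  linarith

lemma differentiableOn_tsum_mul_pow {c : ℕ → ℂ} {R C : ℝ} (hR : 0 < R)
    (hc : ∀ k, ‖c k‖ * R ^ k ≤ C) :
    DifferentiableOn ℂ (fun u => ∑' k, c k * u ^ k) (Metric.ball 0 R) := by
  intro u hu
  obtain ⟨R', h1, h2⟩ := exists_between (show ‖u‖ < R by simpa using hu)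
  have h0 : 0 ≤ R' := (norm_nonneg _).trans h1.le
  have : DifferentiableOn ℂ (fun u => ∑' k, c k * u ^ k) (Metric.ball 0 R') := by
    refine Complex.differentiableOn_tsum_of_summable_norm (u := fun k => C * (R' / R) ^ k) ?_ ?_
      Metric.isOpen_ball ?_
    · exact (summable_geometric_of_lt_one (by positivity) ((div_lt_one hR).2 h2)).mul_left _
    · intro k; fun_prop
    · intro k w hw
      have hw' : ‖w‖ ≤ R' := by simpa using (Metric.ball_subset_closedBall hw)
      rw [norm_mul, norm_pow]
      calc ‖c k‖ * ‖w‖ ^ k ≤ ‖c k‖ * R' ^ k := by gcongr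
        _ = ‖c k‖ * R ^ k * (R' / R) ^ k := by
            rw [div_pow]; field_simp
        _ ≤ C * (R' / R) ^ k := by gcongr; exact hc k
  exact (this.differentiableAt
    (Metric.isOpen_ball.mem_nhds (by simpa using h1))).differentiableWithinAt

/-- The normalized parametrization `uhat / uc`, in the variable `δ = 1 - H`. -/
noncomputable def xpar (δ : ℝ) : ℝ := 1 - δ ^ 3 * (2 + δ) / 3

lemma uhat_one_sub (δ : ℝ) : uhat (1 - δ : ℝ) = (uc * xpar δ : ℝ) := by
  simp only [uhat, xpar]
  push_cast
  ring

lemma xpar_mem {δ : ℝ} (h0 : 0 < δ) (h1 : δ < 1) : 0 < xpar δ ∧ xpar δ < 1 := by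
  have h3 : δ ^ 3 < 1 := pow_lt_one₀ h0.le h1 (by norm_num)
  have h4 : 0 < δ ^ 3 := by positivity
  unfold xpar
  constructor <;> nlinarith

lemma hasSum_extend {c : ℕ → ℝ} {g : ℂ → ℂ} {r : ℝ} (hr : 0 < r)
    (hg : ∀ H : ℂ, ‖H‖ ≤ 1 → DifferentiableAt ℂ g H)
    (hga : AnalyticOnNhd ℂ g (Metric.ball 0 1))
    (hsum : ∀ H : ℂ, ‖H‖ < r → H ≠ 0 → HasSum (fun k => (c k : ℂ) * uhat H ^ k) (g H))
    {δ : ℝ} (h0 : 0 < δ) (h1 : δ < 1) :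
    HasSum (fun k => (c k : ℂ) * ((uc * xpar δ : ℝ) : ℂ) ^ k) (g (1 - δ : ℝ)) := by
  have hu := uc_pos
  obtain ⟨C, hC⟩ := exists_coeff_le hr hg hsum
  have hC' : ∀ k, ‖(c k : ℂ)‖ * uc ^ k ≤ C := fun k => by
    rw [Complex.norm_real]; exact hC k
  have hF := differentiableOn_tsum_mul_pow hu hC'
  set F : ℂ → ℂ := fun u => ∑' k, (c k : ℂ) * u ^ k
  set U : Set ℂ := Set.image (fun h : ℝ => (h : ℂ)) (Set.Ico 0 1)
  have hsmall : ∀ h : ℝ, h ∈ Set.Ico (0 : ℝ) 1 → ‖uhat h‖ < uc := by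
    intro h hh
    rcases hh.1.eq_or_lt with h0 | h0
    · rw [← h0]; simpa [uhat_zero] using hu
    · have := xpar_mem (δ := 1 - h) (by linarith [hh.2]) (by linarith)
      have e := uhat_one_sub (1 - h)
      rw [sub_sub_cancel] at e
      rw [e, Complex.norm_real, Real.norm_of_nonneg (mul_nonneg hu.le this.1.le)]
      nlinarith
  have hφ : AnalyticOnNhd ℂ (F ∘ uhat) U := by
    rintro _ ⟨h, hh, rfl⟩
    have h2 : AnalyticAt ℂ F (uhat h) :=
      hF.analyticAt (Metric.isOpen_ball.mem_nhds (by simpa using hsmall h hh))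
    have h3 : AnalyticAt ℂ uhat (h : ℂ) := by unfold uhat; fun_prop
    exact h2.comp h3
  have hgU : AnalyticOnNhd ℂ g U := by
    rintro _ ⟨h, hh, rfl⟩
    refine hga _ ?_
    simpa [abs_of_nonneg hh.1] using hh.2
  have hpre : IsPreconnected U :=
    isPreconnected_Ico.image _ Complex.continuous_ofReal.continuousOn
  have heq : Set.EqOn (F ∘ uhat) g U := by
    refine hφ.eqOn_of_preconnected_of_frequently_eq hgU hpre (z₀ := 0)
      ⟨0, by simp, by simp⟩ (Eventually.frequently ?_)
    filter_upwards [eventually_norm_lt_and_ne hr] with H hH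
    exact (hsum H hH.1 hH.2).tsum_eq
  have hmem : ((1 - δ : ℝ) : ℂ) ∈ U := ⟨1 - δ, ⟨by linarith, by linarith⟩, rfl⟩
  have h5 := heq hmem
  rw [Function.comp_apply, uhat_one_sub] at h5
  rw [← h5]
  refine Summable.hasSum ?_
  have hx := xpar_mem h0 h1
  refine Summable.of_norm_bounded (g := fun k => C * xpar δ ^ k)
    ((summable_geometric_of_lt_one hx.1.le hx.2).mul_left _) fun k => ?_
  rw [norm_mul, norm_pow, Complex.norm_real (uc * _),
    Real.norm_of_nonneg (by have := hx.1; positivity),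
    mul_pow, ← mul_assoc]
  have := hx.1
  gcongr
  exact hC' k

lemma hasSum_of_tendsto_of_le {ι : Type*} {l : Filter ι} [NeBot l] {f : ι → ℕ → ℝ} {F : ℕ → ℝ}
    {G : ι → ℝ} {G₁ : ℝ}
    (hf : ∀ᶠ i in l, (∀ k, 0 ≤ f i k ∧ f i k ≤ F k) ∧ HasSum (f i) (G i))
    (hlim : ∀ k, Tendsto (fun i => f i k) l (𝓝 (F k))) (hG : Tendsto G l (𝓝 G₁)) :
    HasSum F G₁ := by
  have hF0 : ∀ k, 0 ≤ F k := fun k => by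
    obtain ⟨i, hi⟩ := hf.exists
    exact (hi.1 k).1.trans (hi.1 k).2
  have hle : ∀ n, ∑ k ∈ Finset.range n, F k ≤ G₁ := fun n => by
    refine le_of_tendsto_of_tendsto (tendsto_finsetSum _ fun k _ => hlim k) hG ?_
    filter_upwards [hf] with i hi
    exact sum_le_hasSum _ (fun k _ => (hi.1 k).1) hi.2
  have hs : Summable F := summable_of_sum_range_le hF0 hle
  have h1 : ∑' k, F k ≤ G₁ := hs.tsum_le_of_sum_range_le hle
  have h2 : G₁ ≤ ∑' k, F k := by
    refine le_of_tendsto hG ?_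
    filter_upwards [hf] with i hi
    exact hasSum_le (fun k => (hi.1 k).2) hi.2 hs.hasSum
  rw [← h1.antisymm h2]
  exact hs.hasSum

lemma hasSum_moments {ι : Type*} {l : Filter ι} [NeBot l] {e : ℕ → ℝ} (he : ∀ k, 0 ≤ e k)
    {x : ι → ℝ} (hx : ∀ᶠ i in l, 0 < x i ∧ x i < 1) (hx1 : Tendsto x l (𝓝 1)) {E : ι → ℝ}
    (hE : ∀ᶠ i in l, HasSum (fun k => e k * x i ^ k) (E i)) {S D : ℝ} (hS : Tendsto E l (𝓝 S))
    (hD : Tendsto (fun i => (S - E i) / (1 - x i)) l (𝓝 D)) :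
    HasSum e S ∧ HasSum (fun k => k * e k) D := by
  have h1 : HasSum e S := by
    refine hasSum_of_tendsto_of_le (f := fun i k => e k * x i ^ k) ?_ (fun k => ?_) hS
    · filter_upwards [hx, hE] with i h1 h2
      refine ⟨fun k => ⟨mul_nonneg (he k) (pow_nonneg h1.1.le k), ?_⟩, h2⟩
      exact mul_le_of_le_one_right (he k) (pow_le_one₀ h1.1.le h1.2.le)
    · simpa using (hx1.pow k).const_mul (e k)
  refine ⟨h1, ?_⟩
  refine hasSum_of_tendsto_of_le (f := fun i k => e k * ∑ j ∈ Finset.range k, x i ^ j) ?_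
    (fun k => ?_) hD
  · filter_upwards [hx, hE] with i h2 h3
    refine ⟨fun k => ⟨mul_nonneg (he k)
      (Finset.sum_nonneg fun j _ => pow_nonneg h2.1.le j), ?_⟩, ?_⟩
    · rw [mul_comm]
      refine mul_le_mul_of_nonneg_right ?_ (he k)
      calc ∑ j ∈ Finset.range k, x i ^ j ≤ ∑ j ∈ Finset.range k, (1 : ℝ) :=
            Finset.sum_le_sum fun j _ => pow_le_one₀ h2.1.le h2.2.le
        _ = k := by simp
    · refine ((h1.sub h3).div_const (1 - x i)).congr_fun fun k => ?_
      have h4 : 1 - x i ≠ 0 := by linarith [h2.2]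
      rw [eq_div_iff h4]
      have := geom_sum_mul_neg (x i) k
      linear_combination e k * this
  · have := (tendsto_finsetSum (Finset.range k) fun j _ => hx1.pow j).const_mul (e k)
    simpa [mul_comm] using this

end Extension

section Moments

lemma tendsto_xpar : Tendsto xpar (𝓝[>] 0) (𝓝 1) := by
  have : Continuous xpar := by unfold xpar; fun_prop
  have h := this.tendsto 0
  simp only [xpar] at h
  norm_num at h
  exact h.mono_left nhdsWithin_le_nhds

lemma eventually_mem_unit : ∀ᶠ δ : ℝ in 𝓝[>] 0, 0 < δ ∧ δ < 1 := by
  filter_upwards [Ioo_mem_nhdsGT (show (0 : ℝ) < 1 by norm_num)] with δ hδ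
  exact hδ

lemma hasSum_extend_real {c : ℕ → ℝ} {g : ℂ → ℂ} {E : ℝ → ℝ} {r : ℝ} (hr : 0 < r)
    (hg : ∀ H : ℂ, ‖H‖ ≤ 1 → DifferentiableAt ℂ g H)
    (hsum : ∀ H : ℂ, ‖H‖ < r → H ≠ 0 → HasSum (fun k => (c k : ℂ) * uhat H ^ k) (g H))
    (hE : ∀ δ : ℝ, 0 < δ → δ < 1 → g (1 - δ : ℝ) = E δ) :
    ∀ᶠ δ : ℝ in 𝓝[>] 0, HasSum (fun k => c k * uc ^ k * xpar δ ^ k) (E δ) := by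
  have hga : AnalyticOnNhd ℂ g (Metric.ball 0 1) :=
    DifferentiableOn.analyticOnNhd (fun H hH =>
      (hg H (by simpa using (Metric.ball_subset_closedBall hH))).differentiableWithinAt)
      Metric.isOpen_ball
  filter_upwards [eventually_mem_unit] with δ hδ
  have := hasSum_extend hr hg hga hsum hδ.1 hδ.2
  rw [hE δ hδ.1 hδ.2] at this
  rw [← Complex.hasSum_ofReal]
  refine this.congr_fun fun k => ?_
  push_cast
  ring

lemma hasSum_of_Z0hat {c : ℕ → ℝ} (hc : ∀ k, 0 ≤ c k) {r : ℝ} (hr : 0 < r)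
    (hsum : ∀ H : ℂ, ‖H‖ < r → H ≠ 0 → HasSum (fun k => (c k : ℂ) * uhat H ^ k) (Z0hat H)) :
    HasSum (fun k => c k * uc ^ k) (3 / 10 * (2 + Real.sqrt 7)) ∧
      HasSum (fun k => k * (c k * uc ^ k)) (3 * (1 + 2 * Real.sqrt 7) / 20) := by
  have hu := uc_pos
  refine hasSum_moments (l := 𝓝[>] 0) (x := xpar) (E := fun δ => 1 / 10 *
    (3 * (2 + Real.sqrt 7) * xpar δ + δ ^ 3 * (3 + 3 * δ + 3 * δ ^ 2 + δ ^ 3)))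
    (fun k => by have := hc k; positivity) ?_ tendsto_xpar ?_ ?_ ?_
  · filter_upwards [eventually_mem_unit] with δ hδ using xpar_mem hδ.1 hδ.2
  · refine hasSum_extend_real hr (fun H _ => (differentiableOn_Z0hat Set.univ).differentiableAt
      univ_mem) hsum fun δ _ _ => ?_
    simp only [Z0hat, xpar]
    push_cast
    ring
  · have h : Continuous fun δ : ℝ => 1 / 10 * (3 * (2 + Real.sqrt 7) * xpar δ
        + δ ^ 3 * (3 + 3 * δ + 3 * δ ^ 2 + δ ^ 3)) := by unfold xpar; fun_prop
    refine (h.tendsto' 0 _ ?_).mono_left nhdsWithin_le_nhds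
    simp [xpar]; ring
  · have h : ContinuousAt (fun δ : ℝ => 1 / 10 * (3 * (2 + Real.sqrt 7)
        - 3 * (3 + 3 * δ + 3 * δ ^ 2 + δ ^ 3) / (2 + δ))) 0 := by
      refine continuousAt_const.mul (continuousAt_const.sub (ContinuousAt.div ?_ ?_ (by norm_num)))
      <;> fun_prop
    have h2 := h.tendsto.mono_left (nhdsWithin_le_nhds (s := Set.Ioi 0))
    have e : 1 / 10 * (3 * (2 + Real.sqrt 7) - 3 * (3 + 3 * 0 + 3 * 0 ^ 2 + 0 ^ 3) / (2 + 0))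
        = 3 * (1 + 2 * Real.sqrt 7) / 20 := by ring
    rw [e] at h2
    refine h2.congr' ?_
    filter_upwards [eventually_mem_unit] with δ hδ
    have h3 := hδ.1.ne'
    have h4 : 2 + δ ≠ 0 := by linarith [hδ.1]
    unfold xpar
    rw [sub_sub_cancel]
    field_simp
    ring

lemma hasSum_of_Z1hat {c : ℕ → ℝ} (hc : ∀ k, 0 ≤ c k) {r : ℝ} (hr : 0 < r)
    (hsum : ∀ H : ℂ, ‖H‖ < r → H ≠ 0 → HasSum (fun k => (c k : ℂ) * uhat H ^ k) (Z1hat H)) :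
    HasSum (fun k => c k * uc ^ k) (3 / (10 * uc) * (Real.sqrt 7 - 2)) ∧
      HasSum (fun k => k * (c k * uc ^ k)) (3 / (20 * uc)) := by
  have hu := uc_pos
  have hP : ∀ δ : ℝ, 0 < δ → 0 < 3 + 3 * δ + 3 * δ ^ 2 + δ ^ 3 := fun δ hδ => by positivity
  refine hasSum_moments (l := 𝓝[>] 0) (x := xpar) (E := fun δ => 3 / (10 * uc) *
    (Real.sqrt 7 - 2 - δ ^ 3 * (1 + δ) / (3 + 3 * δ + 3 * δ ^ 2 + δ ^ 3)))
    (fun k => by have := hc k; positivity) ?_ tendsto_xpar ?_ ?_ ?_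
  · filter_upwards [eventually_mem_unit] with δ hδ using xpar_mem hδ.1 hδ.2
  · refine hasSum_extend_real hr (fun H hH => Z1hat_differentiableAt hH) hsum fun δ h0 _ => ?_
    have h := (hP δ h0).ne'
    have e : (10 - 12 * ((1 - δ : ℝ) : ℂ) + 6 * ((1 - δ : ℝ) : ℂ) ^ 2 - ((1 - δ : ℝ) : ℂ) ^ 3)
      = ((3 + 3 * δ + 3 * δ ^ 2 + δ ^ 3 : ℝ) : ℂ) := by push_cast; ring
    simp only [Z1hat]
    rw [e]
    norm_cast
    field_simp
    ring
  · have h : ContinuousAt (fun δ : ℝ => 3 / (10 * uc) *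
        (Real.sqrt 7 - 2 - δ ^ 3 * (1 + δ) / (3 + 3 * δ + 3 * δ ^ 2 + δ ^ 3))) 0 := by
      refine continuousAt_const.mul (continuousAt_const.sub (ContinuousAt.div ?_ ?_ (by norm_num)))
      <;> fun_prop
    have h2 := h.tendsto.mono_left (nhdsWithin_le_nhds (s := Set.Ioi 0))
    simpa using h2
  · have h : ContinuousAt (fun δ : ℝ => 3 / (10 * uc) *
        (3 * (1 + δ) / ((3 + 3 * δ + 3 * δ ^ 2 + δ ^ 3) * (2 + δ)))) 0 := by
      refine continuousAt_const.mul (ContinuousAt.div ?_ ?_ (by norm_num))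
      <;> fun_prop
    have h2 := h.tendsto.mono_left (nhdsWithin_le_nhds (s := Set.Ioi 0))
    have e : 3 / (10 * uc) * (3 * (1 + 0) / ((3 + 3 * 0 + 3 * 0 ^ 2 + 0 ^ 3) * (2 + 0)))
        = 3 / (20 * uc) := by field_simp; norm_num
    rw [e] at h2
    refine h2.congr' ?_
    filter_upwards [eventually_mem_unit] with δ hδ
    have h3 := hδ.1.ne'
    have h4 : 2 + δ ≠ 0 := by linarith [hδ.1]
    have h5 := (hP δ hδ.1).ne'
    unfold xpar
    rw [sub_sub_cancel]
    field_simp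
    ring

lemma coeff_one_pos {c : ℕ → ℝ} {r : ℝ} (hr : 0 < r)
    (hsum : ∀ H : ℂ, ‖H‖ < r → H ≠ 0 → HasSum (fun k => (c k : ℂ) * uhat H ^ k) (Z1hat H)) :
    0 < c 1 := by
  have hu := uc_pos
  have huc : (uc : ℂ) ≠ 0 := by exact_mod_cast hu.ne'
  have htail := tendsto_tail_div_pow hr uhat_zero (fun ζ => uhat_ne_zero)
    continuous_uhat.continuousAt hsum
  have h0 := htail 0
  have h1 := htail 1
  simp only [Finset.range_zero, Finset.sum_empty, sub_zero, pow_zero, div_one, Finset.sum_range_one,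
    mul_one, pow_one] at h0 h1
  have hc0 : (c 0 : ℂ) = Z1hat 0 := tendsto_nhds_unique h0 tendsto_Z1hat
  have h2 : Tendsto (fun H : ℂ => 9 / (10 * (uc : ℂ) ^ 2) * (1 - (54 - 42 * H + 12 * H ^ 2)
      / (10 * (10 - 12 * H + 6 * H ^ 2 - H ^ 3))) / (10 - 12 * H + 6 * H ^ 2 - H ^ 3)) (𝓝[≠] 0)
      (𝓝 (9 / (10 * (uc : ℂ) ^ 2) * (1 - (54 - 42 * 0 + 12 * 0 ^ 2)
      / (10 * (10 - 12 * 0 + 6 * 0 ^ 2 - 0 ^ 3))) / (10 - 12 * 0 + 6 * 0 ^ 2 - 0 ^ 3))) := by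
    refine Tendsto.mono_left (ContinuousAt.tendsto ?_) nhdsWithin_le_nhds
    refine ContinuousAt.div (continuousAt_const.mul (continuousAt_const.sub
      (ContinuousAt.div ?_ ?_ (by norm_num)))) ?_ (by norm_num) <;> fun_prop
  have h3 := tendsto_nhds_unique (h2.congr' ?_) h1
  · have h4 : c 1 = 9 / (10 * uc ^ 2) * (1 - 54 / 100) / 10 := by
      have : (c 1 : ℂ) = ((9 / (10 * uc ^ 2) * (1 - 54 / 100) / 10 : ℝ) : ℂ) := by
        rw [← h3]; push_cast; norm_num
      exact_mod_cast this
    rw [h4]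
    norm_num
    positivity
  · filter_upwards [eventually_norm_lt_and_ne one_pos] with H hH
    have hP := ten_sub_ne_zero hH.1.le
    rw [hc0, div_eq_div_iff hP (uhat_ne_zero hH.1.le hH.2)]
    have e0 : Z1hat 0 = 3 / (10 * (uc : ℂ)) * ((Real.sqrt 7 : ℂ) - 1 - 6 / 5) := by
      unfold Z1hat; norm_num
    rw [e0]
    simp only [Z1hat, uhat]
    generalize hPeq : 10 - 12 * H + 6 * H ^ 2 - H ^ 3 = P at hP ⊢
    field_simp
    linear_combination 540 * hPeq

end Moments

section Laplace

/-- Laplace asymptotics of `∫ Q / X ^ (p + 1)` near an endpoint where `X φ = 1 + κ φ² + o(φ²)` and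
`Q φ` is of order `φ ^ k`. -/
theorem tendsto_integral_div_pow {Q X : ℝ → ℂ} {k C c κ : ℝ} (hk : 0 ≤ k) (hc : 0 < c) {Q₀ : ℂ}
    (hQc : ContinuousOn Q (Set.Ioc 0 π)) (hXc : ContinuousOn X (Set.Ioc 0 π))
    (hQ : ∀ φ ∈ Set.Ioc 0 π, ‖Q φ‖ ≤ C * φ ^ k)
    (hX : ∀ φ ∈ Set.Ioc 0 π, Real.exp (c * φ ^ 2) ≤ ‖X φ‖)
    (hQ0 : Tendsto (fun φ : ℝ => Q φ / (φ ^ k : ℝ)) (𝓝[>] 0) (𝓝 Q₀))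
    (hX0 : Tendsto (fun φ : ℝ => (X φ - 1) / (φ ^ 2 : ℝ)) (𝓝[>] 0) (𝓝 (κ : ℂ))) :
    Tendsto (fun p : ℕ => (((p : ℝ) ^ ((k + 1) / 2) : ℝ) : ℂ) * ∫ φ in (0 : ℝ)..π,
      Q φ / X φ ^ (p + 1)) atTop
      (𝓝 (Q₀ * ((∫ θ in Set.Ioi (0 : ℝ), θ ^ k * Real.exp (-κ * θ ^ 2) : ℝ) : ℂ))) := by
  have hXne : ∀ φ ∈ Set.Ioc 0 π, X φ ≠ 0 := fun φ hφ =>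
    norm_pos_iff.1 ((Real.exp_pos _).trans_le (hX φ hφ))
  set F : ℕ → ℝ → ℂ := fun p => Set.indicator (Set.Ioc 0 (π * √p)) fun θ =>
    (((p : ℝ) ^ (k / 2) : ℝ) : ℂ) * (Q (θ / √p) / X (θ / √p) ^ (p + 1)) with hF
  have hmem : ∀ {p : ℕ} {θ : ℝ}, 1 ≤ p → θ ∈ Set.Ioc 0 (π * √p) → θ / √p ∈ Set.Ioc 0 π := by
    intro p θ hp hθ
    have : 0 < √(p : ℝ) := Real.sqrt_pos.2 (by exact_mod_cast hp)
    exact ⟨div_pos hθ.1 this, (div_le_iff₀ this).2 hθ.2⟩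
  have hsq : ∀ (p : ℕ) (θ : ℝ), (θ / √p) ^ 2 = θ ^ 2 / p := fun p θ => by
    rw [div_pow, Real.sq_sqrt (Nat.cast_nonneg p)]
  have hpk : ∀ {p : ℕ} {θ : ℝ}, 1 ≤ p → 0 < θ → (p : ℝ) ^ (k / 2) * (θ / √p) ^ k = θ ^ k := by
    intro p θ hp hθ
    have hp' : (0 : ℝ) < p := by exact_mod_cast hp
    rw [Real.div_rpow hθ.le (Real.sqrt_nonneg _), Real.sqrt_eq_rpow, ← Real.rpow_mul hp'.le]
    rw [show 1 / 2 * k = k / 2 by ring]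
    have := (Real.rpow_pos_of_pos hp' (k / 2)).ne'
    field_simp
  have hint : ∀ p : ℕ, 1 ≤ p → ∫ θ in Set.Ioi 0, F p θ = (((p : ℝ) ^ ((k + 1) / 2) : ℝ) : ℂ) *
      ∫ φ in (0 : ℝ)..π, Q φ / X φ ^ (p + 1) := by
    intro p hp
    have hp' : (0 : ℝ) < p := by exact_mod_cast hp
    have hs : 0 < √(p : ℝ) := Real.sqrt_pos.2 hp'
    rw [hF]
    simp only
    rw [setIntegral_indicator measurableSet_Ioc, Set.inter_eq_right.2 Set.Ioc_subset_Ioi_self,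
      ← intervalIntegral.integral_of_le (by positivity),
      intervalIntegral.integral_const_mul,
      intervalIntegral.integral_comp_div (fun φ => Q φ / X φ ^ (p + 1)) hs.ne', zero_div,
      mul_div_assoc, div_self hs.ne', mul_one, Complex.real_smul, ← mul_assoc]
    congr 1
    rw [← Complex.ofReal_mul, Real.sqrt_eq_rpow, ← Real.rpow_add hp']
    congr 2
    ring
  have hlim : Tendsto (fun p : ℕ => ∫ θ in Set.Ioi 0, F p θ) atTop
      (𝓝 (∫ θ in Set.Ioi (0 : ℝ), Q₀ * ((θ ^ k * Real.exp (-κ * θ ^ 2) : ℝ) : ℂ))) := by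
    refine tendsto_integral_filter_of_dominated_convergence
      (fun θ => C * (θ ^ k * Real.exp (-c * θ ^ 2))) ?_ ?_ ?_ ?_
    · filter_upwards [eventually_ge_atTop 1] with p hp
      rw [hF]
      simp only
      rw [aestronglyMeasurable_indicator_iff measurableSet_Ioc]
      refine AEStronglyMeasurable.mono_measure ?_
        (Measure.restrict_mono_measure Measure.restrict_le_self _)
      refine ContinuousOn.aestronglyMeasurable ?_ measurableSet_Ioc
      have hdiv : ContinuousOn (fun θ : ℝ => θ / √p) (Set.Ioc 0 (π * √p)) := by fun_prop
      exact continuousOn_const.mul ((hQc.comp hdiv fun θ hθ => hmem hp hθ).div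
        ((hXc.comp hdiv fun θ hθ => hmem hp hθ).pow _)
        fun θ hθ => pow_ne_zero _ (hXne _ (hmem hp hθ)))
    · filter_upwards [eventually_ge_atTop 1] with p hp
      filter_upwards [ae_restrict_mem measurableSet_Ioi] with θ hθ
      have hθ' : 0 < θ := hθ
      have hC : 0 ≤ C := by
        have := (norm_nonneg _).trans (hQ π ⟨Real.pi_pos, le_rfl⟩)
        exact nonneg_of_mul_nonneg_left this (by positivity)
      rw [hF]
      simp only [Set.indicator_apply]
      split_ifs with h
      · have h1 := hmem hp h
        have hp' : (0 : ℝ) < p := by exact_mod_cast hp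
        have h2 : Real.exp (c * θ ^ 2) ≤ ‖X (θ / √p)‖ ^ (p + 1) := by
          calc Real.exp (c * θ ^ 2) ≤ Real.exp (c * (θ / √p) ^ 2) ^ (p + 1) := by
                rw [← Real.exp_nat_mul, Real.exp_le_exp, hsq]
                push_cast
                have : 0 ≤ c * (θ ^ 2 / p) := by positivity
                have e : (p : ℝ) * (c * (θ ^ 2 / p)) = c * θ ^ 2 := by field_simp
                linarith
            _ ≤ _ := by gcongr; exact hX _ h1
        rw [norm_mul, Complex.norm_real, Real.norm_of_nonneg (by positivity), norm_div, norm_pow]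
        calc (p : ℝ) ^ (k / 2) * (‖Q (θ / √p)‖ / ‖X (θ / √p)‖ ^ (p + 1))
            ≤ (p : ℝ) ^ (k / 2) * (C * (θ / √p) ^ k / Real.exp (c * θ ^ 2)) := by
              gcongr
              exact hQ _ h1
          _ = C * (((p : ℝ) ^ (k / 2) * (θ / √p) ^ k) * Real.exp (-c * θ ^ 2)) := by
              rw [neg_mul, Real.exp_neg]; ring
          _ = _ := by rw [hpk hp hθ']
      · rw [norm_zero]
        positivity
    · exact (integrableOn_rpow_mul_exp_neg_mul_sq hc (by linarith)).const_mul C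
    · filter_upwards [ae_restrict_mem measurableSet_Ioi] with θ hθ
      have hθ' : 0 < θ := hθ
      have hsqrt : Tendsto (fun p : ℕ => √(p : ℝ)) atTop atTop :=
        Real.tendsto_sqrt_atTop.comp tendsto_natCast_atTop_atTop
      have hφ : Tendsto (fun p : ℕ => θ / √(p : ℝ)) atTop (𝓝[>] 0) := by
        refine tendsto_nhdsWithin_iff.2 ⟨hsqrt.const_div_atTop θ, ?_⟩
        filter_upwards [eventually_ge_atTop 1] with p hp
        exact div_pos hθ' (Real.sqrt_pos.2 (by exact_mod_cast hp))
      have hA := hQ0.comp hφ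
      have hB := hX0.comp hφ
      have hξ : Tendsto (fun p : ℕ => (p : ℂ) * (X (θ / √p) - 1)) atTop
          (𝓝 ((κ : ℂ) * (θ ^ 2 : ℝ))) := by
        refine (hB.mul_const ((θ ^ 2 : ℝ) : ℂ)).congr' ?_
        filter_upwards [eventually_ge_atTop 1] with p hp
        have hp' : (p : ℂ) ≠ 0 := by exact_mod_cast (by omega : p ≠ 0)
        have hθc : (θ : ℂ) ≠ 0 := by exact_mod_cast hθ'.ne'
        simp only [Function.comp_apply]
        rw [hsq]
        push_cast
        field_simp
      have hpow := Complex.tendsto_one_add_pow_exp_of_tendsto hξ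
      have hX1 : Tendsto (fun p : ℕ => X (θ / √p)) atTop (𝓝 1) := by
        have h2 : Tendsto (fun p : ℕ => (((θ / √(p : ℝ)) ^ 2 : ℝ) : ℂ)) atTop (𝓝 0) := by
          have := ((tendsto_nhdsWithin_iff.1 hφ).1.pow 2)
          rw [zero_pow two_ne_zero] at this
          exact_mod_cast (Complex.continuous_ofReal.tendsto 0).comp this
        have h3 := (hB.mul h2).add_const 1
        rw [mul_zero, zero_add] at h3
        refine h3.congr' ?_
        filter_upwards [eventually_ge_atTop 1] with p hp
        have h4 : (((θ / √(p : ℝ)) ^ 2 : ℝ) : ℂ) ≠ 0 := by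
          have : 0 < √(p : ℝ) := Real.sqrt_pos.2 (by exact_mod_cast hp)
          exact_mod_cast (by positivity : (θ / √(p : ℝ)) ^ 2 ≠ 0)
        simp only [Function.comp_apply]
        rw [div_mul_cancel₀ _ h4]
        ring
      have hall := (hA.mul_const ((θ ^ k : ℝ) : ℂ)).div (hpow.mul hX1)
        (by rw [mul_one]; exact Complex.exp_ne_zero _)
      have e : Q₀ * ((θ ^ k : ℝ) : ℂ) / (Complex.exp ((κ : ℂ) * (θ ^ 2 : ℝ)) * 1)
          = Q₀ * ((θ ^ k * Real.exp (-κ * θ ^ 2) : ℝ) : ℂ) := by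
        rw [mul_one, neg_mul, Real.exp_neg]
        push_cast
        ring
      rw [e] at hall
      refine hall.congr' ?_
      have hlarge : ∀ᶠ p : ℕ in atTop, θ / π ≤ √(p : ℝ) := hsqrt.eventually_ge_atTop _
      filter_upwards [eventually_ge_atTop 1, hlarge] with p hp hl
      have hmm : θ ∈ Set.Ioc 0 (π * √(p : ℝ)) := by
        refine ⟨hθ', ?_⟩
        rw [div_le_iff₀ Real.pi_pos] at hl
        linarith
      rw [hF]
      simp only [Set.indicator_of_mem hmm, Pi.div_apply, Function.comp_apply]
      rw [← hpk hp hθ', add_sub_cancel, ← pow_succ]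
      have h5 : (((θ / √(p : ℝ)) ^ k : ℝ) : ℂ) ≠ 0 := by
        have : 0 < √(p : ℝ) := Real.sqrt_pos.2 (by exact_mod_cast hp)
        exact_mod_cast (Real.rpow_pos_of_pos (div_pos hθ' this) k).ne'
      have h6 := pow_ne_zero (p + 1) (hXne _ (hmem hp hmm))
      push_cast
      field_simp
  rw [integral_const_mul, integral_complex_ofReal] at hlim
  refine hlim.congr' ?_
  filter_upwards [eventually_ge_atTop 1] with p hp using hint p hp

end Laplace

section Curve

/-- The power `s ^ (2/3)`, principal branch. -/
noncomputable def qpow (s : ℂ) : ℂ := s ^ (((2 / 3 : ℝ)) : ℂ)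

lemma qpow_cube (s : ℂ) : qpow s ^ 3 = s ^ 2 := by
  unfold qpow
  rw [← Complex.cpow_nat_mul]
  rw [← Complex.cpow_natCast s 2]
  congr 1
  push_cast
  norm_num

lemma qpow_zero : qpow 0 = 0 := by
  have := qpow_cube 0
  simpa using this

lemma qpow_one : qpow 1 = 1 := by simp [qpow]

lemma norm_qpow (s : ℂ) : ‖qpow s‖ = ‖s‖ ^ (2 / 3 : ℝ) := Complex.norm_cpow_real _ _

lemma half_norm_le_qpow_re {s : ℂ} (hs : 0 ≤ s.re) : ‖qpow s‖ / 2 ≤ (qpow s).re := by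
  rcases eq_or_ne s 0 with rfl | h0
  · simp [qpow_zero]
  have harg : |s.arg| ≤ π / 2 := Complex.abs_arg_le_pi_div_two_iff.2 hs
  have hre : (qpow s).re = ‖s‖ ^ (2 / 3 : ℝ) * Real.cos (s.arg * (2 / 3)) := by
    rw [qpow, Complex.cpow_ofReal_re]
  rw [hre, norm_qpow]
  have hc : 1 / 2 ≤ Real.cos (s.arg * (2 / 3)) := by
    rw [← Real.cos_pi_div_three, ← Real.cos_abs (s.arg * (2 / 3))]
    refine Real.cos_le_cos_of_nonneg_of_le_pi (abs_nonneg _) (by linarith [Real.pi_pos]) ?_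
    rw [abs_mul, abs_of_pos (by norm_num : (0 : ℝ) < 2 / 3)]
    linarith
  have : 0 ≤ ‖s‖ ^ (2 / 3 : ℝ) := by positivity
  nlinarith

lemma continuousAt_qpow {s : ℂ} (hs : 0 ≤ s.re) : ContinuousAt qpow s := by
  have h := Complex.continuousAt_cpow_of_re_pos (p := (s, (((2 / 3 : ℝ)) : ℂ))) (Or.inl hs)
    (by simp)
  have h2 : ContinuousAt (fun s : ℂ => (s, (((2 / 3 : ℝ)) : ℂ))) s := by fun_prop
  exact ContinuousAt.comp (f := fun s : ℂ => (s, (((2 / 3 : ℝ)) : ℂ))) h h2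

lemma hasDerivAt_qpow {s : ℂ} (hs : 0 < s.re) :
    HasDerivAt qpow (2 / 3 * qpow s / s) s := by
  have hs0 : s ≠ 0 := by rintro rfl; simp at hs
  have h := (hasDerivAt_id s).cpow_const (c := ((2 / 3 : ℝ) : ℂ)) (Or.inl hs)
  refine h.congr_deriv ?_
  simp only [id, mul_one, qpow]
  rw [Complex.cpow_sub _ _ hs0, Complex.cpow_one]
  push_cast
  ring

/-- The image of `uhat / uc` under `H = 1 - (1 - ζ) ^ (2/3)`. -/
noncomputable def xcurve (ζ : ℂ) : ℂ :=
  1 - 2 / 3 * (1 - ζ) ^ 2 - 1 / 3 * (1 - ζ) ^ 2 * qpow (1 - ζ)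

/-- The derivative of `xcurve`. -/
noncomputable def dxcurve (ζ : ℂ) : ℂ := 4 / 3 * (1 - ζ) + 8 / 9 * (1 - ζ) * qpow (1 - ζ)

lemma uhat_one_sub_qpow (ζ : ℂ) : uhat (1 - qpow (1 - ζ)) = uc * xcurve ζ := by
  have h := qpow_cube (1 - ζ)
  unfold uhat xcurve
  generalize qpow (1 - ζ) = q at *
  linear_combination (-(uc : ℂ) * (2 / 3 + q / 3)) * h

lemma one_sub_re_nonneg {ζ : ℂ} (h : ‖ζ‖ ≤ 1) : 0 ≤ (1 - ζ).re := by
  have := (Complex.re_le_norm ζ).trans h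
  simp; linarith

lemma one_sub_re_pos {ζ : ℂ} (h : ‖ζ‖ < 1) : 0 < (1 - ζ).re := by
  have := (Complex.re_le_norm ζ).trans_lt h
  simp; linarith

lemma continuousOn_qpow_one_sub :
    ContinuousOn (fun ζ => qpow (1 - ζ)) (Metric.closedBall 0 1) := fun ζ hζ => by
  have h := continuousAt_qpow (one_sub_re_nonneg (ζ := ζ) (by simpa using hζ))
  have h2 : ContinuousAt (fun ζ : ℂ => 1 - ζ) ζ := by fun_prop
  exact (ContinuousAt.comp (g := qpow) (f := fun ζ : ℂ => 1 - ζ) h h2).continuousWithinAt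

lemma continuousOn_xcurve : ContinuousOn xcurve (Metric.closedBall 0 1) := by
  have := continuousOn_qpow_one_sub
  unfold xcurve
  fun_prop

lemma continuousOn_dxcurve : ContinuousOn dxcurve (Metric.closedBall 0 1) := by
  have := continuousOn_qpow_one_sub
  unfold dxcurve
  fun_prop

lemma hasDerivAt_qpow_one_sub {ζ : ℂ} (hζ : ‖ζ‖ < 1) :
    HasDerivAt (fun ζ => qpow (1 - ζ)) (-(2 / 3 * qpow (1 - ζ) / (1 - ζ))) ζ := by
  have h := HasDerivAt.comp ζ (hasDerivAt_qpow (one_sub_re_pos hζ)) ((hasDerivAt_id ζ).const_sub 1)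
  refine h.congr_deriv (by simp)

lemma hasDerivAt_xcurve {ζ : ℂ} (hζ : ‖ζ‖ < 1) : HasDerivAt xcurve (dxcurve ζ) ζ := by
  have hs : 1 - ζ ≠ 0 := fun h => by have := one_sub_re_pos hζ; rw [h] at this; simp at this
  have h1 : HasDerivAt (fun ζ : ℂ => (1 - ζ) ^ 2) _ ζ := ((hasDerivAt_id ζ).const_sub 1).pow 2
  have h2 := (((h1.const_mul (2 / 3)).const_sub 1).sub
    ((h1.const_mul (1 / 3)).mul (hasDerivAt_qpow_one_sub hζ)))
  refine HasDerivAt.congr_deriv (f := xcurve) h2 ?_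
  simp only [dxcurve]
  simp
  field_simp
  ring

lemma xcurve_zero : xcurve 0 = 0 := by
  simp [xcurve, qpow_one]; norm_num

lemma dxcurve_zero_ne_zero : dxcurve 0 ≠ 0 := by
  simp [dxcurve, qpow_one]; norm_num

lemma xcurve_ne_zero {ζ : ℂ} (hζ : ‖ζ‖ ≤ 1) (h0 : ζ ≠ 0) : xcurve ζ ≠ 0 := by
  intro hx
  have hs := one_sub_re_nonneg hζ
  have h := uhat_one_sub_qpow ζ
  have hq := half_norm_le_qpow_re hs
  have hq0 := norm_nonneg (qpow (1 - ζ))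
  rw [hx, mul_zero, uhat] at h
  have huc : (uc : ℂ) ≠ 0 := by exact_mod_cast uc_pos.ne'
  rcases mul_eq_zero.1 h with h1 | h1
  · rcases mul_eq_zero.1 h1 with h2 | h2
    · simp [huc] at h2
    · have h3 : qpow (1 - ζ) = 1 := (sub_eq_zero.1 h2).symm
      have h4 := qpow_cube (1 - ζ)
      rw [h3, one_pow] at h4
      rcases (sq_eq_sq_iff_eq_or_eq_neg.1 (h4.symm.trans (one_pow 2).symm)) with h5 | h5
      · exact h0 (by simpa using h5)
      · rw [h5] at hs; norm_num at hs
  · refine ten_sub_ne_zero_of_re ?_ h1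
    rw [Complex.sub_re, Complex.one_re]
    linarith

/-- On the unit circle `|xcurve|` exceeds `1` quadratically away from `ζ = 1`. -/
lemma one_add_le_normSq_xcurve {ζ : ℂ} (hζ : ‖ζ‖ = 1) :
    1 + 4 / 9 * ‖1 - ζ‖ ^ 2 ≤ ‖xcurve ζ‖ ^ 2 := by
  have hs := one_sub_re_nonneg hζ.le
  have hre := half_norm_le_qpow_re hs
  have hcube := qpow_cube (1 - ζ)
  have hn : ‖qpow (1 - ζ)‖ ^ 3 = ‖1 - ζ‖ ^ 2 := by rw [← norm_pow, hcube, norm_pow]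
  have hx : xcurve ζ = 1 - 2 / 3 * qpow (1 - ζ) ^ 3 - 1 / 3 * qpow (1 - ζ) ^ 4 := by
    unfold xcurve
    linear_combination (2 / 3 + qpow (1 - ζ) / 3) * hcube
  have hcirc : ‖1 - ζ‖ ^ 2 = 2 * (1 - ζ).re := by
    have h1 := Complex.sq_norm ζ
    rw [hζ, Complex.normSq_apply] at h1
    rw [Complex.sq_norm, Complex.normSq_apply]
    simp
    linarith
  have hre3 : (qpow (1 - ζ) ^ 3).re = ‖1 - ζ‖ ^ 2 * (‖1 - ζ‖ ^ 2 / 2 - 1) := by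
    rw [hcube]
    have h2 : ((1 - ζ) ^ 2).re = 2 * (1 - ζ).re ^ 2 - ‖1 - ζ‖ ^ 2 := by
      rw [Complex.sq_norm, Complex.normSq_apply, pow_two, Complex.mul_re]; ring
    rw [h2, hcirc]; ring
  rw [hx, ← hn]
  rw [← hn] at hre3
  generalize qpow (1 - ζ) = q at *
  rcases eq_or_ne q 0 with rfl | hq
  · simp
  have hρ : 0 < ‖q‖ := norm_pos_iff.2 hq
  have hρ2 := Complex.sq_norm q
  rw [Complex.normSq_apply] at hρ2
  set ρ := ‖q‖
  obtain ⟨c, hc⟩ : ∃ c, q.re = ρ * c := ⟨q.re / ρ, by field_simp⟩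
  obtain ⟨d, hd⟩ : ∃ d, q.im = ρ * d := ⟨q.im / ρ, by field_simp⟩
  have hcd : d ^ 2 = 1 - c ^ 2 := by
    rw [hc, hd] at hρ2
    have : ρ ^ 2 * (c ^ 2 + d ^ 2 - 1) = 0 := by linear_combination -hρ2
    have := (mul_eq_zero.1 this).resolve_left (by positivity)
    linarith
  have hc1 : 1 / 2 ≤ c := by
    rw [hc] at hre
    nlinarith
  have hc2 : c ≤ 1 := by nlinarith [sq_nonneg d]
  have e3 : (q ^ 3).re = ρ ^ 3 * (4 * c ^ 3 - 3 * c) := by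
    simp only [pow_succ, pow_zero, one_mul, Complex.mul_re, Complex.mul_im, hc, hd]
    linear_combination (-3 * c * ρ ^ 3) * hcd
  have e4 : (q ^ 4).re = ρ ^ 4 * (8 * c ^ 4 - 8 * c ^ 2 + 1) := by
    simp only [pow_succ, pow_zero, one_mul, Complex.mul_re, Complex.mul_im, hc, hd]
    linear_combination (ρ ^ 4 * (-6 * c ^ 2 + d ^ 2 + 1 - c ^ 2)) * hcd
  have f3 : (q ^ 3).im = ρ ^ 3 * d * (4 * c ^ 2 - 1) := by
    simp only [pow_succ, pow_zero, one_mul, Complex.mul_re, Complex.mul_im, hc, hd]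
    linear_combination (-d * ρ ^ 3) * hcd
  have f4 : (q ^ 4).im = ρ ^ 4 * d * (8 * c ^ 3 - 4 * c) := by
    simp only [pow_succ, pow_zero, one_mul, Complex.mul_re, Complex.mul_im, hc, hd]
    linear_combination (-4 * c * d * ρ ^ 4) * hcd
  have hρ3 : ρ ^ 3 = 2 * (1 + 4 * c ^ 3 - 3 * c) := by
    have : ρ ^ 3 * (ρ ^ 3 / 2 - 1 - (4 * c ^ 3 - 3 * c)) = 0 := by
      linear_combination -hre3 + e3
    have := (mul_eq_zero.1 this).resolve_left (by positivity)
    linarith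
  have hexp : ‖1 - 2 / 3 * q ^ 3 - 1 / 3 * q ^ 4‖ ^ 2 = 1 + ρ ^ 3 * (4 / 9 * ρ ^ 3
      - 4 / 3 * (4 * c ^ 3 - 3 * c) + ρ * (ρ ^ 4 / 9 - 2 / 3 * (8 * c ^ 4 - 8 * c ^ 2 + 1)
        + 4 / 9 * ρ ^ 3 * c)) := by
    have hr : (1 - 2 / 3 * q ^ 3 - 1 / 3 * q ^ 4).re
        = 1 - 2 / 3 * (q ^ 3).re - 1 / 3 * (q ^ 4).re := by
      rw [show (2 / 3 : ℂ) = ((2 / 3 : ℝ) : ℂ) by push_cast; rfl,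
        show (1 / 3 : ℂ) = ((1 / 3 : ℝ) : ℂ) by push_cast; rfl]
      simp only [Complex.sub_re, Complex.re_ofReal_mul, Complex.one_re]
    have hi : (1 - 2 / 3 * q ^ 3 - 1 / 3 * q ^ 4).im
        = - 2 / 3 * (q ^ 3).im - 1 / 3 * (q ^ 4).im := by
      rw [show (2 / 3 : ℂ) = ((2 / 3 : ℝ) : ℂ) by push_cast; rfl,
        show (1 / 3 : ℂ) = ((1 / 3 : ℝ) : ℂ) by push_cast; rfl]
      simp only [Complex.sub_im, Complex.im_ofReal_mul, Complex.one_im]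
      ring
    rw [Complex.sq_norm, Complex.normSq_apply, hr, hi, e3, e4, f3, f4]
    linear_combination (2 / 3 * ρ ^ 3 * (4 * c ^ 2 - 1)
      + 1 / 3 * ρ ^ 4 * (8 * c ^ 3 - 4 * c)) ^ 2 * hcd
  rw [hexp]
  have hbr : 0 ≤ ρ * (ρ ^ 4 / 9 - 2 / 3 * (8 * c ^ 4 - 8 * c ^ 2 + 1) + 4 / 9 * ρ ^ 3 * c) := by
    refine mul_nonneg hρ.le ?_
    rw [hρ3]
    have h4 : 0 ≤ ρ ^ 4 := by positivity
    have h5 : c ^ 4 ≤ c ^ 2 := pow_le_pow_of_le_one (by linarith) hc2 (by norm_num)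
    nlinarith
  have hfst : 0 ≤ (1 - c) * (2 * c + 1) ^ 2 := mul_nonneg (by linarith) (sq_nonneg _)
  have hfin : 4 / 9 ≤ 4 / 9 * ρ ^ 3 - 4 / 3 * (4 * c ^ 3 - 3 * c) := by rw [hρ3]; linarith
  have h3 : 0 ≤ ρ ^ 3 := by positivity
  nlinarith

end Curve

open scoped ENNReal Real ComplexConjugate

section CoefficientIntegral

/-- The normalized difference `(Ahat (1 - q) - Ahat 1) / aconst` with `q = (1 - ζ) ^ (2/3)`. -/
noncomputable def gcurve (ζ : ℂ) : ℂ :=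
  -(qpow (1 - ζ) * ((6 + 9 * qpow (1 - ζ) + 8 * qpow (1 - ζ) ^ 2 + 4 * qpow (1 - ζ) ^ 3)
    / (1 + qpow (1 - ζ) + qpow (1 - ζ) ^ 2) ^ 2))

/-- The normalizing constant of `Ahat`. -/
noncomputable def aconst : ℝ := (1 / 10) * ((3 : ℝ) / 2) ^ ((7 : ℝ) / 3)

lemma aconst_pos : 0 < aconst := by unfold aconst; positivity

lemma one_add_sq_ne_zero {q : ℂ} (hq : 0 ≤ q.re) : 1 + q + q ^ 2 ≠ 0 := by
  intro h
  have h1 := congrArg Complex.re h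
  have h2 := congrArg Complex.im h
  simp [pow_two] at h1 h2
  have h3 : q.im = 0 := by
    have : q.im * (1 + 2 * q.re) = 0 := by linarith
    rcases mul_eq_zero.1 this with h | h
    · exact h
    · linarith
  rw [h3] at h1
  nlinarith

lemma qpow_re_nonneg {s : ℂ} (hs : 0 ≤ s.re) : 0 ≤ (qpow s).re :=
  le_trans (by positivity) (half_norm_le_qpow_re hs)

lemma Ahat_one_sub_qpow {ζ : ℂ} (hζ : ‖ζ‖ ≤ 1) :
    Ahat (1 - qpow (1 - ζ)) = aconst * (4 + gcurve ζ) := by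
  have hne := one_add_sq_ne_zero (qpow_re_nonneg (one_sub_re_nonneg hζ))
  unfold Ahat gcurve aconst
  generalize qpow (1 - ζ) = q at *
  have h3 : 3 - 3 * (1 - q) + (1 - q) ^ 2 = 1 + q + q ^ 2 := by ring
  have h4 : 9 - 8 * (1 - q) + 3 * (1 - q) ^ 2 = 4 * (1 + q + q ^ 2) ^ 2
    - q * (6 + 9 * q + 8 * q ^ 2 + 4 * q ^ 3) := by ring
  rw [h3, h4]
  generalize 1 + q + q ^ 2 = P at *
  push_cast
  field_simp
  ring

lemma continuousOn_gcurve : ContinuousOn gcurve (Metric.closedBall 0 1) := by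
  have h := continuousOn_qpow_one_sub
  unfold gcurve
  refine (h.mul (ContinuousOn.div (by fun_prop) (by fun_prop) fun ζ hζ => ?_)).neg
  exact pow_ne_zero _
    (one_add_sq_ne_zero (qpow_re_nonneg (one_sub_re_nonneg (by simpa using hζ))))

lemma differentiableOn_gcurve : DifferentiableOn ℂ gcurve (Metric.ball 0 1) := by
  have h : DifferentiableOn ℂ (fun ζ => qpow (1 - ζ)) (Metric.ball 0 1) := fun ζ hζ =>
    (hasDerivAt_qpow_one_sub (by simpa using hζ)).differentiableAt.differentiableWithinAt
  unfold gcurve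
  refine (h.mul (DifferentiableOn.div (by fun_prop) (by fun_prop) fun ζ hζ => ?_)).neg
  exact pow_ne_zero _
    (one_add_sq_ne_zero (qpow_re_nonneg (one_sub_re_nonneg
      (by simpa using Metric.ball_subset_closedBall hζ))))

/-- The numerator of the coefficient integral, in the angle variable. -/
noncomputable def qarc (φ : ℝ) : ℂ :=
  circleMap 0 1 φ * gcurve (circleMap 0 1 φ) * dxcurve (circleMap 0 1 φ)

/-- The curve `xcurve` on the unit circle, in the angle variable. -/
noncomputable def xarc (φ : ℝ) : ℂ := xcurve (circleMap 0 1 φ)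

lemma norm_circleMap_one (φ : ℝ) : ‖circleMap 0 1 φ‖ = 1 := by simp

lemma circleMap_one_mem (φ : ℝ) : circleMap 0 1 φ ∈ Metric.closedBall (0 : ℂ) 1 := by simp

lemma xarc_ne_zero (φ : ℝ) : xarc φ ≠ 0 :=
  xcurve_ne_zero (norm_circleMap_one φ).le (by simp)

lemma continuous_xarc : Continuous xarc :=
  continuousOn_xcurve.comp_continuous (continuous_circleMap 0 1) circleMap_one_mem

lemma continuous_qarc : Continuous qarc :=
  ((continuous_circleMap 0 1).mul
    (continuousOn_gcurve.comp_continuous (continuous_circleMap 0 1) circleMap_one_mem)).mul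
    (continuousOn_dxcurve.comp_continuous (continuous_circleMap 0 1) circleMap_one_mem)

lemma qpow_conj {s : ℂ} (hs : 0 ≤ s.re) : qpow (conj s) = conj (qpow s) := by
  unfold qpow
  rw [Complex.conj_cpow, Complex.conj_ofReal]
  intro h
  have := Complex.abs_arg_le_pi_div_two_iff.2 hs
  rw [h, abs_of_pos Real.pi_pos] at this
  linarith [Real.pi_pos]

lemma circleMap_neg_one (φ : ℝ) : circleMap 0 1 (-φ) = conj (circleMap 0 1 φ) := by
  simp [circleMap, ← Complex.exp_conj]

lemma qpow_circleMap_neg (φ : ℝ) :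
    qpow (1 - conj (circleMap 0 1 φ)) = conj (qpow (1 - circleMap 0 1 φ)) := by
  rw [← qpow_conj (one_sub_re_nonneg (norm_circleMap_one φ).le)]
  simp

lemma qarc_neg (φ : ℝ) : qarc (-φ) = conj (qarc φ) := by
  simp only [qarc, circleMap_neg_one, gcurve, dxcurve, qpow_circleMap_neg]
  simp [Complex.conj_ofNat]

lemma xarc_neg (φ : ℝ) : xarc (-φ) = conj (xarc φ) := by
  simp only [xarc, circleMap_neg_one, xcurve, qpow_circleMap_neg]
  simp [Complex.conj_ofNat]

/-- The coefficients `a p * uc ^ p` as integrals over the upper unit half-circle. -/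
lemma coeff_eq_integral {ρ : ℝ} (hρ : 0 < ρ) {a : ℕ → ℝ}
    (hA : ∀ H : ℂ, ‖H‖ < ρ → HasSum (fun p : ℕ => (a p : ℂ) * uhat H ^ p) (Ahat H))
    {p : ℕ} (hp : 1 ≤ p) :
    a p * uc ^ p = aconst / π * (∫ φ in (0 : ℝ)..π, qarc φ / xarc φ ^ (p + 1)).re := by
  have hcont : ContinuousAt (fun ζ => 1 - qpow (1 - ζ)) 0 :=
    ((hasDerivAt_qpow_one_sub (by simp)).const_sub 1).continuousAt
  have hev : ∀ᶠ ζ in 𝓝 (0 : ℂ), ‖1 - qpow (1 - ζ)‖ < ρ := by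
    have h := hcont.norm.tendsto
    simp only [sub_zero, qpow_one, sub_self, norm_zero] at h
    exact h.eventually_lt_const hρ
  obtain ⟨r, hr, hball⟩ := Metric.eventually_nhds_iff_ball.1 hev
  have key := circleIntegral_eq_coeff (x := xcurve) (d := dxcurve) (g := gcurve)
    (c := fun k => (((a k * uc ^ k) / aconst - if k = 0 then 4 else 0 : ℝ) : ℂ))
    (r := min r 1) (by positivity) xcurve_zero (fun ζ => xcurve_ne_zero) continuousOn_xcurve
    (fun ζ hζ => hasDerivAt_xcurve (by simpa using hζ)) continuousOn_dxcurve dxcurve_zero_ne_zero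
    continuousOn_gcurve differentiableOn_gcurve ?_ p
  swap
  · intro ζ hζ h0
    have h := hA _ (hball ζ (by simpa using hζ.trans_le (min_le_left _ _)))
    rw [uhat_one_sub_qpow, Ahat_one_sub_qpow (hζ.le.trans (min_le_right _ _))] at h
    have hac : (aconst : ℂ) ≠ 0 := by exact_mod_cast aconst_pos.ne'
    have h2 := (h.div_const (aconst : ℂ)).sub (hasSum_ite_eq 0 (4 : ℂ))
    have e : (aconst : ℂ) * (4 + gcurve ζ) / aconst - 4 = gcurve ζ := by field_simp; ring
    rw [e] at h2
    refine h2.congr_fun fun k => ?_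
    rcases eq_or_ne k 0 with rfl | hk
    · simp
    · simp [hk, mul_pow]; ring
  set F : ℝ → ℂ := fun φ => qarc φ / xarc φ ^ (p + 1) with hF
  have hFc : Continuous F := continuous_qarc.div (continuous_xarc.pow _)
    fun φ => pow_ne_zero _ (xarc_ne_zero φ)
  have hper : Function.Periodic F (2 * π) := fun φ => by
    simp only [hF, qarc, xarc, periodic_circleMap 0 1 φ]
  have hneg : ∀ φ, F (-φ) = conj (F φ) := fun φ => by simp [hF, qarc_neg, xarc_neg]
  have h1 : ∮ ζ in C(0, 1), gcurve ζ * dxcurve ζ / xcurve ζ ^ (p + 1)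
      = Complex.I * ∫ φ in (0 : ℝ)..2 * π, F φ := by
    rw [circleIntegral, ← intervalIntegral.integral_const_mul]
    refine intervalIntegral.integral_congr fun φ _ => ?_
    simp only [deriv_circleMap, smul_eq_mul, hF, qarc, xarc]
    ring
  have h2 : ∫ φ in (0 : ℝ)..2 * π, F φ = ∫ φ in (-π)..π, F φ := by
    have := hper.intervalIntegral_add_eq 0 (-π)
    rw [zero_add] at this
    rw [this]
    congr 1; ring
  have h3 : ∫ φ in (-π)..π, F φ = conj (∫ φ in (0 : ℝ)..π, F φ) + ∫ φ in (0 : ℝ)..π, F φ := by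
    rw [← intervalIntegral.integral_add_adjacent_intervals (b := 0)
      (hFc.intervalIntegrable _ _) (hFc.intervalIntegrable _ _)]
    congr 1
    have h4 := intervalIntegral.integral_comp_neg (a := 0) (b := π) F
    rw [neg_zero] at h4
    rw [← h4]
    simp only [hneg]
    rw [intervalIntegral.integral_of_le Real.pi_pos.le,
      intervalIntegral.integral_of_le Real.pi_pos.le]
    exact integral_conj
  rw [h1, h2, h3] at key
  have h5 : conj (∫ φ in (0 : ℝ)..π, F φ) + ∫ φ in (0 : ℝ)..π, F φ
      = ((2 * (∫ φ in (0 : ℝ)..π, F φ).re : ℝ) : ℂ) := by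
    rw [add_comm, Complex.add_conj]
  rw [h5] at key
  have hp0 : p ≠ 0 := by omega
  have h6 : ((2 * (∫ φ in (0 : ℝ)..π, F φ).re : ℝ) : ℂ)
      = ((2 * π * (a p * uc ^ p / aconst) : ℝ) : ℂ) := by
    apply mul_left_cancel₀ Complex.I_ne_zero
    rw [key]
    simp only [hp0, if_false]
    push_cast
    ring
  have h7 := Complex.ofReal_injective h6
  have := aconst_pos.ne'
  have := Real.pi_pos.ne'
  field_simp at h7 ⊢
  linarith

end CoefficientIntegral

section CoefficientAsymptotics

lemma normSq_one_sub_circleMap (φ : ℝ) : ‖1 - circleMap 0 1 φ‖ ^ 2 = 2 - 2 * Real.cos φ := by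
  rw [Complex.sq_norm, Complex.normSq_apply]
  have h := Real.sin_sq_add_cos_sq φ
  simp only [circleMap_zero, Complex.ofReal_one, one_mul, Complex.sub_re, Complex.sub_im,
    Complex.exp_ofReal_mul_I_re, Complex.exp_ofReal_mul_I_im, Complex.one_re, Complex.one_im]
  linarith

lemma norm_one_sub_circleMap_le {φ : ℝ} (hφ : 0 ≤ φ) : ‖1 - circleMap 0 1 φ‖ ≤ φ := by
  have h := normSq_one_sub_circleMap φ
  have h2 := Real.one_sub_sq_div_two_le_cos (x := φ)
  exact abs_le_of_sq_le_sq' (by linarith) hφ |>.2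

lemma exp_le_norm_xarc {φ : ℝ} (hφ : φ ∈ Set.Ioc 0 π) :
    Real.exp (1 / 54 * φ ^ 2) ≤ ‖xarc φ‖ := by
  have h1 := one_add_le_normSq_xcurve (norm_circleMap_one φ)
  rw [normSq_one_sub_circleMap] at h1
  have h2 := Real.cos_le_one_sub_mul_cos_sq (x := φ) (by rw [abs_of_pos hφ.1]; exact hφ.2)
  have hpi : π ^ 2 < 10 := by have := Real.pi_lt_d2; have := Real.pi_pos; nlinarith
  have hpi0 : 0 < π ^ 2 := by positivity
  have h3 : 1 / 5 ≤ 2 / π ^ 2 := by rw [div_le_div_iff₀ (by norm_num) hpi0]; linarith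
  have h4 : 1 + φ ^ 2 / 9 ≤ ‖xarc φ‖ ^ 2 := by
    have := mul_le_mul_of_nonneg_right h3 (sq_nonneg φ)
    unfold xarc
    nlinarith [sq_nonneg φ]
  have h5 : φ ^ 2 / 9 ≤ 2 := by
    have : φ ^ 2 ≤ π ^ 2 := pow_le_pow_left₀ hφ.1.le hφ.2 2
    linarith
  set u := φ ^ 2 / 9 with hu
  have hu0 : 0 ≤ u := by positivity
  have h6 : Real.exp (u / 3) ≤ 1 + u := by
    have e1 := Real.add_one_le_exp (-(u / 3))
    rw [Real.exp_neg] at e1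
    have e2 : 1 / (1 + u) ≤ -(u / 3) + 1 := by
      rw [div_le_iff₀ (by linarith)]
      nlinarith
    have e3 := e2.trans e1
    rw [← one_div] at e3
    exact (one_div_le_one_div (by linarith) (Real.exp_pos _)).1 e3
  refine abs_le_of_sq_le_sq' ?_ (norm_nonneg _) |>.2
  rw [← Real.exp_nat_mul]
  refine le_trans (le_of_eq ?_) (h6.trans h4)
  rw [hu]; push_cast; ring_nf

lemma tendsto_one_sub_circleMap_div :
    Tendsto (fun φ : ℝ => (1 - circleMap 0 1 φ) / φ) (𝓝[>] 0) (𝓝 (-Complex.I)) := by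
  have h := (hasDerivAt_circleMap 0 1 0).tendsto_slope_zero_right
  have e : circleMap 0 1 0 * Complex.I = Complex.I := by simp [circleMap]
  rw [e] at h
  refine h.neg.congr' (Eventually.of_forall fun φ => ?_)
  simp [circleMap_zero, div_eq_inv_mul]
  ring

lemma qpow_div {φ : ℝ} (hφ : 0 < φ) (s : ℂ) :
    qpow s / ((φ ^ (2 / 3 : ℝ) : ℝ) : ℂ) = qpow (s / φ) := by
  rcases eq_or_ne s 0 with rfl | hs
  · simp [qpow_zero]
  have hφ0 : (φ : ℂ) ≠ 0 := by exact_mod_cast hφ.ne'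
  rw [div_eq_iff (by exact_mod_cast (Real.rpow_pos_of_pos hφ _).ne'),
    Complex.ofReal_cpow hφ.le]
  unfold qpow
  conv_lhs => rw [← mul_div_cancel₀ s hφ0]
  rw [Complex.cpow_def_of_ne_zero (by simpa [hφ0] using hs),
    Complex.cpow_def_of_ne_zero (by simp [hφ0, hs]), Complex.cpow_def_of_ne_zero hφ0,
    ← Complex.exp_add, Complex.log_ofReal_mul hφ (by simp [hφ0, hs]), Complex.ofReal_log hφ.le]
  ring_nf

lemma tendsto_qpow_div :
    Tendsto (fun φ : ℝ => qpow (1 - circleMap 0 1 φ) / ((φ ^ (2 / 3 : ℝ) : ℝ) : ℂ)) (𝓝[>] 0)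
      (𝓝 (qpow (-Complex.I))) := by
  have h := (continuousAt_qpow (s := -Complex.I) (by simp)).tendsto.comp
    tendsto_one_sub_circleMap_div
  refine h.congr' ?_
  filter_upwards [self_mem_nhdsWithin] with φ hφ
  exact (qpow_div hφ _).symm

lemma continuous_qpow_circleMap : Continuous fun φ : ℝ => qpow (1 - circleMap 0 1 φ) :=
  continuousOn_qpow_one_sub.comp_continuous (continuous_circleMap 0 1) circleMap_one_mem

lemma qpow_one_sub_circleMap_zero : qpow (1 - circleMap 0 1 0) = 0 := by
  simp [circleMap, qpow_zero]

lemma tendsto_xarc_sub_one_div :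
    Tendsto (fun φ : ℝ => (xarc φ - 1) / ((φ ^ 2 : ℝ) : ℂ)) (𝓝[>] 0) (𝓝 ((2 / 3 : ℝ) : ℂ)) := by
  have hq : Tendsto (fun φ : ℝ => qpow (1 - circleMap 0 1 φ)) (𝓝[>] 0) (𝓝 0) := by
    have := (continuous_qpow_circleMap.tendsto 0).mono_left (nhdsWithin_le_nhds (s := Set.Ioi 0))
    rwa [qpow_one_sub_circleMap_zero] at this
  have h := (tendsto_one_sub_circleMap_div.pow 2).mul ((hq.const_mul (1 / 3)).const_add (2 / 3))
    |>.neg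
  have e : -((-Complex.I) ^ 2 * (2 / 3 + 1 / 3 * 0)) = ((2 / 3 : ℝ) : ℂ) := by
    rw [neg_sq, Complex.I_sq]; push_cast; ring
  rw [e] at h
  refine h.congr' (Eventually.of_forall fun φ => ?_)
  simp only [xarc, xcurve]
  push_cast
  rw [div_pow]
  ring

lemma tendsto_integral_arc {E : ℝ → ℂ} (hE : Continuous E) (j : ℕ) :
    Tendsto (fun p : ℕ => (((p : ℝ) ^ ((j + 2 / 3 + 1) / 2 : ℝ) : ℝ) : ℂ) * ∫ φ in (0 : ℝ)..π,
      (E φ * (1 - circleMap 0 1 φ) ^ j * qpow (1 - circleMap 0 1 φ)) / xarc φ ^ (p + 1)) atTop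
      (𝓝 (E 0 * (-Complex.I) ^ j * qpow (-Complex.I) *
        ((∫ θ in Set.Ioi (0 : ℝ), θ ^ (j + 2 / 3 : ℝ) * Real.exp (-(2 / 3) * θ ^ 2) : ℝ) : ℂ)
        )) := by
  obtain ⟨C, hC⟩ := isCompact_Icc.exists_bound_of_continuousOn (s := Set.Icc 0 π) hE.continuousOn
  have hC0 : 0 ≤ C := (norm_nonneg _).trans (hC 0 ⟨le_rfl, Real.pi_pos.le⟩)
  have hs := continuous_circleMap 0 1
  have hq := continuous_qpow_circleMap
  refine tendsto_integral_div_pow (C := C) (c := 1 / 54) (by positivity) (by norm_num)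
    (by fun_prop) continuous_xarc.continuousOn (fun φ hφ => ?_)
    (fun φ hφ => exp_le_norm_xarc hφ) ?_ tendsto_xarc_sub_one_div
  · rw [norm_mul, norm_mul, norm_pow, norm_qpow, mul_assoc, Real.rpow_add hφ.1, Real.rpow_natCast]
    have h1 := norm_one_sub_circleMap_le hφ.1.le
    have h2 := hC φ ⟨hφ.1.le, hφ.2⟩
    have h3 := hφ.1.le
    gcongr
  · have h := ((hE.tendsto 0).mono_left (nhdsWithin_le_nhds (s := Set.Ioi 0))).mul
      (tendsto_one_sub_circleMap_div.pow j) |>.mul tendsto_qpow_div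
    refine h.congr' ?_
    filter_upwards [self_mem_nhdsWithin] with φ hφ
    have hφ' : 0 < φ := hφ
    rw [Real.rpow_add hφ', Real.rpow_natCast]
    push_cast
    rw [div_pow]
    ring

lemma qpow_neg_I : qpow (-Complex.I) = Complex.exp (((-(π / 3) : ℝ) : ℂ) * Complex.I) := by
  rw [qpow, Complex.cpow_def_of_ne_zero (by simp), Complex.log_neg_I]
  congr 1
  push_cast
  ring

/-- The bounded factor of `qarc`. -/
noncomputable def barc (φ : ℝ) : ℂ :=
  -(circleMap 0 1 φ * ((6 + 9 * qpow (1 - circleMap 0 1 φ) + 8 * qpow (1 - circleMap 0 1 φ) ^ 2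
    + 4 * qpow (1 - circleMap 0 1 φ) ^ 3)
    / (1 + qpow (1 - circleMap 0 1 φ) + qpow (1 - circleMap 0 1 φ) ^ 2) ^ 2)
    * (4 / 3 + 8 / 9 * qpow (1 - circleMap 0 1 φ)))

lemma continuous_barc : Continuous barc := by
  have hq := continuous_qpow_circleMap
  unfold barc
  refine (((continuous_circleMap 0 1).mul (Continuous.div (by fun_prop) (by fun_prop)
    fun φ => ?_)).mul (by fun_prop)).neg
  exact pow_ne_zero _
    (one_add_sq_ne_zero (qpow_re_nonneg (one_sub_re_nonneg (norm_circleMap_one φ).le)))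

lemma barc_zero : barc 0 = -8 := by
  unfold barc
  rw [qpow_one_sub_circleMap_zero]
  simp [circleMap]
  norm_num

lemma qarc_eq (φ : ℝ) :
    qarc φ = barc φ * (1 - circleMap 0 1 φ) ^ 1 * qpow (1 - circleMap 0 1 φ) := by
  unfold qarc barc gcurve dxcurve
  ring

lemma qarc_mul_eq (φ : ℝ) :
    qarc φ * (xarc φ - 1) / xarc φ
      = barc φ * -(2 / 3 + 1 / 3 * qpow (1 - circleMap 0 1 φ)) / xarc φ
        * (1 - circleMap 0 1 φ) ^ 3 * qpow (1 - circleMap 0 1 φ) := by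
  have h : xarc φ - 1 = -(2 / 3 + 1 / 3 * qpow (1 - circleMap 0 1 φ))
      * (1 - circleMap 0 1 φ) ^ 2 := by
    unfold xarc xcurve; ring
  rw [h, qarc_eq]
  ring

lemma gaussian_moment {k : ℝ} (hk : 0 ≤ k) {κ : ℝ} (hκ : 0 < κ) :
    ∫ θ in Set.Ioi (0 : ℝ), θ ^ k * Real.exp (-κ * θ ^ 2)
      = κ ^ (-(k + 1) / 2) * (1 / 2) * Real.Gamma ((k + 1) / 2) := by
  rw [← integral_rpow_mul_exp_neg_mul_rpow (p := 2) (by norm_num) (by linarith) hκ]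
  simp

lemma gaussian_moment_add_two {k : ℝ} (hk : 0 ≤ k) {κ : ℝ} (hκ : 0 < κ) :
    ∫ θ in Set.Ioi (0 : ℝ), θ ^ (k + 2) * Real.exp (-κ * θ ^ 2)
      = (k + 1) / (2 * κ) * ∫ θ in Set.Ioi (0 : ℝ), θ ^ k * Real.exp (-κ * θ ^ 2) := by
  rw [gaussian_moment (by linarith) hκ, gaussian_moment hk hκ]
  have e1 : (k + 2 + 1) / 2 = (k + 1) / 2 + 1 := by ring
  have e2 : -(k + 2 + 1) / 2 = -(k + 1) / 2 - 1 := by ring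
  rw [e1, e2, Real.Gamma_add_one (by positivity), Real.rpow_sub_one hκ.ne']
  field_simp

/-- Asymptotics of `a p * uc ^ p` and of its increments. -/
theorem exists_tendsto_coeff {ρ : ℝ} (hρ : 0 < ρ) {a : ℕ → ℝ}
    (hA : ∀ H : ℂ, ‖H‖ < ρ → HasSum (fun p : ℕ => (a p : ℂ) * uhat H ^ p) (Ahat H)) :
    ∃ b : ℝ, 0 < b ∧
      Tendsto (fun p : ℕ => (p : ℝ) ^ (4 / 3 : ℝ) * (a p * uc ^ p)) atTop (𝓝 b) ∧
      Tendsto (fun p : ℕ => (p : ℝ) ^ (7 / 3 : ℝ) * (a p * uc ^ p - a (p + 1) * uc ^ (p + 1)))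
        atTop (𝓝 (4 / 3 * b)) := by
  have h1 := tendsto_integral_arc continuous_barc 1
  have hE : Continuous fun φ => barc φ * -(2 / 3 + 1 / 3 * qpow (1 - circleMap 0 1 φ)) / xarc φ :=
    (continuous_barc.mul
      ((continuous_qpow_circleMap.const_mul (1 / 3)).const_add (2 / 3)).neg).div
      continuous_xarc xarc_ne_zero
  have h2 := tendsto_integral_arc hE 3
  simp only [← qarc_eq] at h1
  simp only [← qarc_mul_eq] at h2
  have hx0 : xarc 0 = 1 := by
    simp [xarc, xcurve, circleMap]
  rw [hx0, qpow_one_sub_circleMap_zero, barc_zero] at h2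
  rw [barc_zero] at h1
  have hG := gaussian_moment_add_two (k := 5 / 3) (κ := 2 / 3) (by norm_num) (by norm_num)
  have hG0 : 0 < ∫ θ in Set.Ioi (0 : ℝ), θ ^ (5 / 3 : ℝ) * Real.exp (-(2 / 3) * θ ^ 2) := by
    rw [gaussian_moment (by norm_num) (by norm_num)]
    have := Real.Gamma_pos_of_pos (s := (5 / 3 + 1) / 2) (by norm_num)
    positivity
  have e1 : ((1 : ℕ) : ℝ) + 2 / 3 = 5 / 3 := by norm_num
  have e2 : ((3 : ℕ) : ℝ) + 2 / 3 = 5 / 3 + 2 := by norm_num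
  have e3 : (5 / 3 + 1 : ℝ) / 2 = 4 / 3 := by norm_num
  have e4 : (5 / 3 + 2 + 1 : ℝ) / 2 = 7 / 3 := by norm_num
  simp only [e1, e2, e3, e4, hG] at h1 h2
  set G := ∫ θ in Set.Ioi (0 : ℝ), θ ^ (5 / 3 : ℝ) * Real.exp (-(2 / 3) * θ ^ 2) with hGdef
  have hc : -8 * (-Complex.I) ^ 1 * qpow (-Complex.I) * (G : ℂ)
      = ((8 * G : ℝ) : ℂ) * (Complex.I * qpow (-Complex.I)) := by push_cast; ring
  have hI3 : (-Complex.I) ^ 3 = Complex.I := by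
    rw [pow_succ, neg_sq, Complex.I_sq]; ring
  have hc2 : -8 * -(2 / 3 + 1 / 3 * 0) / 1 * (-Complex.I) ^ 3 * qpow (-Complex.I)
      * (((5 / 3 + 1) / (2 * (2 / 3)) * G : ℝ) : ℂ)
      = ((4 / 3 * (8 * G) : ℝ) : ℂ) * (Complex.I * qpow (-Complex.I)) := by
    rw [hI3]; push_cast; ring
  have hre : (Complex.I * qpow (-Complex.I)).re = √3 / 2 := by
    rw [qpow_neg_I, Complex.I_mul_re, Complex.exp_ofReal_mul_I_im, Real.sin_neg,
      Real.sin_pi_div_three, neg_neg]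
  rw [hc] at h1
  rw [hc2] at h2
  have h1r := (Complex.continuous_re.tendsto _).comp h1
  have h2r := (Complex.continuous_re.tendsto _).comp h2
  rw [Complex.re_ofReal_mul, hre] at h1r h2r
  refine ⟨aconst / π * (8 * G * (√3 / 2)), ?_, ?_, ?_⟩
  · have := aconst_pos
    positivity
  · refine (h1r.const_mul (aconst / π)).congr' ?_
    filter_upwards [eventually_ge_atTop 1] with p hp
    rw [coeff_eq_integral hρ hA hp, Function.comp_apply, Complex.re_ofReal_mul]
    ring
  · have e : 4 / 3 * (aconst / π * (8 * G * (√3 / 2)))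
        = aconst / π * (4 / 3 * (8 * G) * (√3 / 2)) := by ring
    rw [e]
    refine (h2r.const_mul (aconst / π)).congr' ?_
    filter_upwards [eventually_ge_atTop 1] with p hp
    have hI : ∀ p : ℕ, IntervalIntegrable (fun φ => qarc φ / xarc φ ^ (p + 1)) volume 0 π :=
      fun p => (continuous_qarc.div (continuous_xarc.pow _)
        fun φ => pow_ne_zero _ (xarc_ne_zero φ)).intervalIntegrable _ _
    have hsub : ∫ φ in (0 : ℝ)..π, qarc φ * (xarc φ - 1) / xarc φ / xarc φ ^ (p + 1)
        = (∫ φ in (0 : ℝ)..π, qarc φ / xarc φ ^ (p + 1))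
          - ∫ φ in (0 : ℝ)..π, qarc φ / xarc φ ^ (p + 1 + 1) := by
      rw [← intervalIntegral.integral_sub (hI p) (hI (p + 1))]
      refine intervalIntegral.integral_congr fun φ _ => ?_
      have := xarc_ne_zero φ
      field_simp
      ring
    rw [coeff_eq_integral hρ hA hp, coeff_eq_integral hρ hA (by omega : 1 ≤ p + 1),
      Function.comp_apply, Complex.re_ofReal_mul, hsub, Complex.sub_re]
    ring

end CoefficientAsymptotics

section StepLaw

lemma hasSum_of_eq {ι : Type*} {f : ι → ℝ} {s s' : ℝ} (e : s = s') (h : HasSum f s) :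
    HasSum f s' := e ▸ h

lemma hasSum_reflect {f : ℕ → ℝ} {s m : ℝ} (c : ℤ) (h : HasSum f s)
    (hm : HasSum (fun j : ℕ => j * f j) m) :
    HasSum (fun x : ℤ => if x ≤ c then f (c - x).toNat else 0) s ∧
      HasSum (fun x : ℤ => x * if x ≤ c then f (c - x).toNat else 0) (c * s - m) := by
  have hinj : Function.Injective fun j : ℕ => c - (j : ℤ) := fun i j hij => by
    simpa using hij
  have hrange : ∀ x : ℤ, x ∉ Set.range (fun j : ℕ => c - (j : ℤ)) → ¬ x ≤ c := fun x hx hle =>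
    hx ⟨(c - x).toNat, by simp only; omega⟩
  constructor
  · rw [← hinj.hasSum_iff fun x hx => if_neg (hrange x hx)]
    exact h.congr_fun fun j => by simp
  · rw [← hinj.hasSum_iff fun x hx => by rw [if_neg (hrange x hx), mul_zero]]
    refine ((h.mul_left (c : ℝ)).sub hm).congr_fun fun j => ?_
    simp
    ring

lemma hasSum_single_moment (c : ℤ) (s : ℝ) :
    HasSum (fun x : ℤ => if x = c then s else 0) s ∧
      HasSum (fun x : ℤ => x * if x = c then s else 0) (c * s) := by
  refine ⟨hasSum_ite_eq c s, (hasSum_ite_eq c (c * s)).congr_fun fun x => ?_⟩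
  split_ifs with h <;> simp [h]

/-- The step distribution of the random walk underlying the chain. -/
noncomputable def stepLaw (z : ℕ → ℕ → ℝ) (x : ℤ) : ℝ :=
  (if x = 2 then tc / uc else 0)
    + (if x = 1 then tc * ((∑' k : ℕ, z 1 k * uc ^ k) + z 1 0) else 0)
    + (if x = 0 then nuc * tc / uc + nuc * tc * (∑' k : ℕ, z 0 (k + 1) * uc ^ k)
        + nuc * tc * z 0 1 else 0)
    + (if x ≤ 2 then (if 2 ≤ (2 - x).toNat then
        tc / uc * (z (2 - x).toNat 0 * uc ^ (2 - x).toNat) else 0) else 0)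
    + (if x ≤ 0 then (if 1 ≤ (0 - x).toNat then
        nuc * tc * (z (0 - x).toNat 1 * uc ^ (0 - x).toNat) else 0) else 0)

lemma stepLaw_nonneg {z : ℕ → ℕ → ℝ} (hz : ∀ p q, 0 ≤ z p q) (x : ℤ) : 0 ≤ stepLaw z x := by
  have := tc_pos
  have := uc_pos
  have := nuc_pos
  have h1 : 0 ≤ ∑' k : ℕ, z 1 k * uc ^ k := tsum_nonneg fun k => by have := hz 1 k; positivity
  have h2 : 0 ≤ ∑' k : ℕ, z 0 (k + 1) * uc ^ k :=
    tsum_nonneg fun k => by have := hz 0 (k + 1); positivity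
  have h3 := hz 1 0
  have h4 := hz 0 1
  have h5 := hz (2 - x).toNat 0
  have h6 := hz (0 - x).toNat 1
  unfold stepLaw
  positivity

variable {z : ℕ → ℕ → ℝ}

lemma hasSum_stepLaw (h00 : z 0 0 = 1)
    (hc0 : HasSum (fun k => z k 0 * uc ^ k) (3 / 10 * (2 + Real.sqrt 7)))
    (hc0' : HasSum (fun k : ℕ => k * (z k 0 * uc ^ k)) (3 * (1 + 2 * Real.sqrt 7) / 20))
    (hr0 : HasSum (fun k => z 0 k * uc ^ k) (3 / 10 * (2 + Real.sqrt 7)))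
    (hc1 : HasSum (fun k => z k 1 * uc ^ k) (3 / (10 * uc) * (Real.sqrt 7 - 2)))
    (hc1' : HasSum (fun k : ℕ => k * (z k 1 * uc ^ k)) (3 / (20 * uc)))
    (hr1 : HasSum (fun k => z 1 k * uc ^ k) (3 / (10 * uc) * (Real.sqrt 7 - 2))) :
    HasSum (stepLaw z) 1 ∧
      HasSum (fun x : ℤ => x * stepLaw z x) (1 / (4 * Real.sqrt 7)) := by
  have hu := uc_pos
  have hu0 := hu.ne'
  have h7 := sq_sqrt_seven
  have h7p : 0 < Real.sqrt 7 := by positivity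
  have hr0' : HasSum (fun k => z 0 (k + 1) * uc ^ k) ((3 / 10 * (2 + Real.sqrt 7) - 1) / uc) := by
    have h := (hasSum_nat_add_iff' 1).2 hr0
    simp only [Finset.range_one, Finset.sum_singleton, h00, pow_zero, mul_one] at h
    refine (h.div_const uc).congr_fun fun k => ?_
    rw [pow_succ]
    field_simp
  have h4 : HasSum (fun j : ℕ => if 2 ≤ j then tc / uc * (z j 0 * uc ^ j) else 0)
      (tc / uc * (3 / 10 * (2 + Real.sqrt 7) - 1 - z 1 0 * uc)) := by
    have h := ((hc0.sub (hasSum_ite_eq 0 (1 : ℝ))).sub (hasSum_ite_eq 1 (z 1 0 * uc))).mul_left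
      (tc / uc)
    refine h.congr_fun fun j => ?_
    rcases j with _ | _ | j <;> simp [h00]
  have h4' : HasSum (fun j : ℕ => j * if 2 ≤ j then tc / uc * (z j 0 * uc ^ j) else 0)
      (tc / uc * (3 * (1 + 2 * Real.sqrt 7) / 20 - z 1 0 * uc)) := by
    have h := (hc0'.sub (hasSum_ite_eq 1 (z 1 0 * uc))).mul_left (tc / uc)
    refine h.congr_fun fun j => ?_
    rcases j with _ | _ | j
    · simp
    · simp
    · simp; ring
  have h5 : HasSum (fun j : ℕ => if 1 ≤ j then nuc * tc * (z j 1 * uc ^ j) else 0)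
      (nuc * tc * (3 / (10 * uc) * (Real.sqrt 7 - 2) - z 0 1)) := by
    have h := (hc1.sub (hasSum_ite_eq 0 (z 0 1))).mul_left (nuc * tc)
    refine h.congr_fun fun j => ?_
    rcases j with _ | j <;> simp
  have h5' : HasSum (fun j : ℕ => j * if 1 ≤ j then nuc * tc * (z j 1 * uc ^ j) else 0)
      (nuc * tc * (3 / (20 * uc))) := by
    refine (hc1'.mul_left (nuc * tc)).congr_fun fun j => ?_
    rcases j with _ | j
    · simp
    · simp; ring
  obtain ⟨a1, b1⟩ := hasSum_single_moment 2 (tc / uc)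
  obtain ⟨a2, b2⟩ := hasSum_single_moment 1 (tc * ((∑' k : ℕ, z 1 k * uc ^ k) + z 1 0))
  obtain ⟨a3, b3⟩ := hasSum_single_moment 0 (nuc * tc / uc
    + nuc * tc * (∑' k : ℕ, z 0 (k + 1) * uc ^ k) + nuc * tc * z 0 1)
  obtain ⟨a4, b4⟩ := hasSum_reflect 2 h4 h4'
  obtain ⟨a5, b5⟩ := hasSum_reflect 0 h5 h5'
  have hm : 1 / (4 * Real.sqrt 7) = Real.sqrt 7 / 28 := by
    rw [div_eq_div_iff (by positivity) (by norm_num)]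
    linear_combination -4 * h7
  constructor
  · refine HasSum.congr_fun (hasSum_of_eq ?_ ((((a1.add a2).add a3).add a4).add a5)) fun x => rfl
    rw [hr0'.tsum_eq, hr1.tsum_eq, tc_eq, nuc]
    trans (7 - Real.sqrt 7) * (1 + Real.sqrt 7) * Real.sqrt 7 / 42
    · field_simp
      ring
    · linear_combination (6 - Real.sqrt 7) / 42 * h7
  · refine HasSum.congr_fun (hasSum_of_eq ?_ ((((b1.add b2).add b3).add b4).add b5)) fun x => by
      rw [stepLaw]; ring
    rw [hr0'.tsum_eq, hr1.tsum_eq, tc_eq, nuc, hm]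
    trans (7 - Real.sqrt 7) * (1 + Real.sqrt 7) / 168
    · push_cast
      field_simp
      ring
    · linear_combination -1 / 168 * h7

end StepLaw

section Kernel

variable {z : ℕ → ℕ → ℝ} {a : ℕ → ℝ}

/-- The transition kernel of the chain at a state `p ≥ 1`. -/
noncomputable def stepKernel (z : ℕ → ℕ → ℝ) (a : ℕ → ℝ) (p q : ℕ) : ℝ :=
  (if q = p + 2 then tc * (a (p + 2) / a p) * uc else 0)
  + (if q = p + 1 then
      (∑' k : ℕ, tc * (a (p + 1) / a p) * z 1 k * uc ^ (k + 1))
        + tc * z 1 0 * (a (p + 1) / a p) * uc else 0)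
  + (if q = p then
      nuc * tc / uc + (∑' k : ℕ, nuc * tc * z 0 (k + 1) * uc ^ k)
        + nuc * tc * z 0 1 else 0)
  + (∑ k ∈ Finset.Icc 1 p, if q = p - k + 1 then
      tc * z (k + 1) 0 * (a (p - k + 1) / a p) * uc else 0)
  + (∑ k ∈ Finset.Icc 1 p, if q = p - k then
      nuc * tc * z k 1 * (a (p - k) / a p) else 0)
  + (if q = 1 then ∑' k : ℕ, tc * z (p + 1) (k + 1) * (a 1 / a p) * uc ^ (k + 2) else 0)
  + (if q = 0 then ∑' k : ℕ, nuc * tc * z p (k + 2) * (a 0 / a p) * uc ^ (k + 1) else 0)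

lemma sum_le_stepKernel (hz : ∀ p q, 0 ≤ z p q) (ha : ∀ p, 0 < a p) (p q : ℕ) :
    (∑ k ∈ Finset.Icc 1 p, if q = p - k then nuc * tc * z k 1 * (a (p - k) / a p) else 0)
      ≤ stepKernel z a p q := by
  have := tc_pos
  have := uc_pos
  have := nuc_pos
  have h1 : ∀ i j, 0 ≤ a i / a j := fun i j => (div_pos (ha i) (ha j)).le
  have t1 : 0 ≤ (if q = p + 2 then tc * (a (p + 2) / a p) * uc else 0) := by
    have := h1 (p + 2) p; positivity
  have t2 : 0 ≤ (if q = p + 1 then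
      (∑' k : ℕ, tc * (a (p + 1) / a p) * z 1 k * uc ^ (k + 1))
        + tc * z 1 0 * (a (p + 1) / a p) * uc else 0) := by
    have h := h1 (p + 1) p
    have : 0 ≤ ∑' k : ℕ, tc * (a (p + 1) / a p) * z 1 k * uc ^ (k + 1) :=
      tsum_nonneg fun k => by have := hz 1 k; positivity
    have := hz 1 0
    positivity
  have t3 : 0 ≤ (if q = p then
      nuc * tc / uc + (∑' k : ℕ, nuc * tc * z 0 (k + 1) * uc ^ k) + nuc * tc * z 0 1 else 0) := by
    have : 0 ≤ ∑' k : ℕ, nuc * tc * z 0 (k + 1) * uc ^ k :=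
      tsum_nonneg fun k => by have := hz 0 (k + 1); positivity
    have := hz 0 1
    positivity
  have t4 : 0 ≤ ∑ k ∈ Finset.Icc 1 p, if q = p - k + 1 then
      tc * z (k + 1) 0 * (a (p - k + 1) / a p) * uc else 0 :=
    Finset.sum_nonneg fun k _ => by
      have := h1 (p - k + 1) p
      have := hz (k + 1) 0
      positivity
  have t6 : 0 ≤ (if q = 1 then
      ∑' k : ℕ, tc * z (p + 1) (k + 1) * (a 1 / a p) * uc ^ (k + 2) else 0) := by
    have h := h1 1 p
    have : 0 ≤ ∑' k : ℕ, tc * z (p + 1) (k + 1) * (a 1 / a p) * uc ^ (k + 2) :=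
      tsum_nonneg fun k => by have := hz (p + 1) (k + 1); positivity
    positivity
  have t7 : 0 ≤ (if q = 0 then
      ∑' k : ℕ, nuc * tc * z p (k + 2) * (a 0 / a p) * uc ^ (k + 1) else 0) := by
    have h := h1 0 p
    have : 0 ≤ ∑' k : ℕ, nuc * tc * z p (k + 2) * (a 0 / a p) * uc ^ (k + 1) :=
      tsum_nonneg fun k => by have := hz p (k + 2); positivity
    positivity
  unfold stepKernel
  linarith

lemma single_le_stepKernel (hz : ∀ p q, 0 ≤ z p q) (ha : ∀ p, 0 < a p) (p : ℕ) :
    nuc * tc * z 1 1 * (a p / a (p + 1)) ≤ stepKernel z a (p + 1) p := by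
  have := tc_pos
  have := nuc_pos
  refine le_trans ?_ (sum_le_stepKernel hz ha (p + 1) p)
  have h := Finset.single_le_sum (s := Finset.Icc 1 (p + 1)) (f := fun k =>
    if p = p + 1 - k then nuc * tc * z k 1 * (a (p + 1 - k) / a (p + 1)) else 0)
    (fun k _ => by
      have := hz k 1
      have := (div_pos (ha (p + 1 - k)) (ha (p + 1))).le
      positivity) (Finset.mem_Icc.2 ⟨le_rfl, by omega⟩)
  simpa using h

lemma stepKernel_nonneg (hz : ∀ p q, 0 ≤ z p q) (ha : ∀ p, 0 < a p) (p q : ℕ) :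
    0 ≤ stepKernel z a p q := by
  have := tc_pos
  have := nuc_pos
  refine le_trans (Finset.sum_nonneg fun k _ => ?_) (sum_le_stepKernel hz ha p q)
  have := hz k 1
  have := (div_pos (ha (p - k)) (ha p)).le
  positivity

lemma stepKernel_eq (ha : ∀ p, 0 < a p) {p q : ℕ} (hq : 2 ≤ q) :
    stepKernel z a p q
      = a q * uc ^ q / (a p * uc ^ p) * stepLaw z ((q : ℤ) - p) := by
  have hu := uc_pos
  have hu0 := hu.ne'
  have ha0 : ∀ p, a p ≠ 0 := fun p => (ha p).ne'
  have s1 : (if q = p + 2 then tc * (a (p + 2) / a p) * uc else 0)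
      = a q * uc ^ q / (a p * uc ^ p) * (if (q : ℤ) - p = 2 then tc / uc else 0) := by
    by_cases h : q = p + 2
    · rw [if_pos h, if_pos (by omega), h, pow_add]
      have := ha0 p
      field_simp
    · rw [if_neg h, if_neg (by omega), mul_zero]
  have s2 : (if q = p + 1 then
      (∑' k : ℕ, tc * (a (p + 1) / a p) * z 1 k * uc ^ (k + 1))
        + tc * z 1 0 * (a (p + 1) / a p) * uc else 0)
      = a q * uc ^ q / (a p * uc ^ p) * (if (q : ℤ) - p = 1 then
        tc * ((∑' k : ℕ, z 1 k * uc ^ k) + z 1 0) else 0) := by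
    by_cases h : q = p + 1
    · rw [if_pos h, if_pos (by omega), h, pow_succ]
      have e : ∑' k : ℕ, tc * (a (p + 1) / a p) * z 1 k * uc ^ (k + 1)
          = tc * (a (p + 1) / a p) * uc * ∑' k : ℕ, z 1 k * uc ^ k := by
        rw [← tsum_mul_left]
        exact tsum_congr fun k => by ring
      rw [e]
      have := ha0 p
      field_simp
    · rw [if_neg h, if_neg (by omega), mul_zero]
  have s3 : (if q = p then
      nuc * tc / uc + (∑' k : ℕ, nuc * tc * z 0 (k + 1) * uc ^ k) + nuc * tc * z 0 1 else 0)
      = a q * uc ^ q / (a p * uc ^ p) * (if (q : ℤ) - p = 0 then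
        nuc * tc / uc + nuc * tc * (∑' k : ℕ, z 0 (k + 1) * uc ^ k) + nuc * tc * z 0 1 else 0) := by
    by_cases h : q = p
    · rw [if_pos h, if_pos (by omega), h, div_self (mul_ne_zero (ha0 p) (pow_ne_zero _ hu0)),
        one_mul, ← tsum_mul_left]
      simp only [mul_assoc]
    · rw [if_neg h, if_neg (by omega), mul_zero]
  have s4 : (∑ k ∈ Finset.Icc 1 p, if q = p - k + 1 then
      tc * z (k + 1) 0 * (a (p - k + 1) / a p) * uc else 0)
      = a q * uc ^ q / (a p * uc ^ p) * (if (q : ℤ) - p ≤ 2 then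
        (if 2 ≤ (2 - ((q : ℤ) - p)).toNat then tc / uc * (z (2 - ((q : ℤ) - p)).toNat 0
          * uc ^ (2 - ((q : ℤ) - p)).toNat) else 0) else 0) := by
    by_cases h : q ≤ p
    · obtain ⟨d, rfl⟩ := Nat.exists_eq_add_of_le h
      have e1 : (2 - ((q : ℤ) - (q + d : ℕ))).toNat = d + 2 := by omega
      rw [Finset.sum_eq_single_of_mem (d + 1) (Finset.mem_Icc.2 ⟨by omega, by omega⟩)
        (fun k hk hne => if_neg (by have := Finset.mem_Icc.1 hk; omega)),
        if_pos (by omega), if_pos (by omega), e1, if_pos (by omega)]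
      have e2 : q + d - (d + 1) + 1 = q := by omega
      rw [e2]
      have := ha0 (q + d)
      rw [pow_add, pow_add]
      field_simp
    · rw [Finset.sum_eq_zero fun k hk => if_neg (by have := Finset.mem_Icc.1 hk; omega)]
      have : ¬ 2 ≤ (2 - ((q : ℤ) - p)).toNat := by omega
      simp [this]
  have s5 : (∑ k ∈ Finset.Icc 1 p, if q = p - k then nuc * tc * z k 1 * (a (p - k) / a p) else 0)
      = a q * uc ^ q / (a p * uc ^ p) * (if (q : ℤ) - p ≤ 0 then
        (if 1 ≤ (0 - ((q : ℤ) - p)).toNat then nuc * tc * (z (0 - ((q : ℤ) - p)).toNat 1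
          * uc ^ (0 - ((q : ℤ) - p)).toNat) else 0) else 0) := by
    by_cases h : q < p
    · obtain ⟨d, rfl⟩ := Nat.exists_eq_add_of_lt h
      have e1 : (0 - ((q : ℤ) - (q + d + 1 : ℕ))).toNat = d + 1 := by omega
      rw [Finset.sum_eq_single_of_mem (d + 1) (Finset.mem_Icc.2 ⟨by omega, by omega⟩)
        (fun k hk hne => if_neg (by have := Finset.mem_Icc.1 hk; omega)),
        if_pos (by omega), if_pos (by omega), e1, if_pos (by omega)]
      have e2 : q + d + 1 - (d + 1) = q := by omega
      rw [e2]
      have := ha0 (q + d + 1)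
      rw [add_assoc q d 1, pow_add uc q]
      field_simp
    · rw [Finset.sum_eq_zero fun k hk => if_neg (by have := Finset.mem_Icc.1 hk; omega)]
      have : ¬ 1 ≤ (0 - ((q : ℤ) - p)).toNat := by omega
      simp only [this, if_false, ite_self, mul_zero]
  rw [stepKernel, stepLaw, s1, s2, s3, s4, s5, if_neg (by omega : ¬ q = 1),
    if_neg (by omega : ¬ q = 0)]
  ring

lemma stepKernel_eq_zero {p q : ℕ} (h : p + 2 < q) : stepKernel z a p q = 0 := by
  rw [stepKernel, if_neg (by omega), if_neg (by omega), if_neg (by omega),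
    Finset.sum_eq_zero fun k hk => if_neg (by have := Finset.mem_Icc.1 hk; omega),
    Finset.sum_eq_zero fun k hk => if_neg (by have := Finset.mem_Icc.1 hk; omega),
    if_neg (by omega), if_neg (by omega)]
  simp

end Kernel

/-- for every `m ≥ 0` and `t > 0`, the hitting time
`T_m = inf{n : P_n ≤ m}` of the chain started from `p` satisfies
`ℙ_p(T_m > t·p) → (1 + μt)^{−4/3}` as `p → ∞`, where `μ = 1/(4√7)`. -/
theorem statement14
    (ρ : ℝ) (hρ : 0 < ρ)
    (z : ℕ → ℕ → ℝ) (hz_nonneg : ∀ p q, 0 ≤ z p q)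
    -- `z p 0` are the Taylor coefficients of `Z₀ = Ẑ₀ ∘ û⁻¹` at `0`
    (hz0 : ∀ H : ℂ, ‖H‖ < ρ →
      HasSum (fun p : ℕ => (z p 0 : ℂ) * uhat H ^ p) (Z0hat H))
    -- `z p q` are the Taylor coefficients at `(0,0)` of the solution `Z(u,v)` of the
    -- algebraic equation, expressed through the parametrization `u = û(H)`, `v = û(K)`
    (hZ : ∀ H K : ℂ, ‖H‖ < ρ → ‖K‖ < ρ → ∃ ZHK : ℂ,
      HasSum (fun pq : ℕ × ℕ => (z pq.1 pq.2 : ℂ) * uhat H ^ pq.1 * uhat K ^ pq.2) ZHK ∧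
      ((nuc : ℂ) * uhat K * uhat H - uhat H ^ 2
          - ((nuc : ℂ) ^ 2 - 1) * (tc : ℂ) * uhat K * (Z0hat H + uhat H * Z1hat K))
          * (ZHK - Z0hat K)
        = uhat H ^ 2 * (Z0hat K - Z0hat H)
          + ((nuc : ℂ) ^ 2 - 1) * uhat H * uhat K * (uhat H ^ 2 - (tc : ℂ) * Z0hat H * Z1hat K))
    (a : ℕ → ℝ) (ha_pos : ∀ p, 0 < a p)
    -- `a p` are the Taylor coefficients of `A = Â ∘ û⁻¹` at `0`
    (hA : ∀ H : ℂ, ‖H‖ < ρ →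
      HasSum (fun p : ℕ => (a p : ℂ) * uhat H ^ p) (Ahat H))
    -- the transition kernel of the Markov chain `(P_n)`; the state `0` is absorbing
    (K : ℕ → ℕ → ℝ)
    (hK0 : ∀ q : ℕ, K 0 q = if q = 0 then 1 else 0)
    (hK : ∀ p : ℕ, 1 ≤ p → ∀ q : ℕ, K p q =
      (if q = p + 2 then tc * (a (p + 2) / a p) * uc else 0)
      + (if q = p + 1 then
          (∑' k : ℕ, tc * (a (p + 1) / a p) * z 1 k * uc ^ (k + 1))
            + tc * z 1 0 * (a (p + 1) / a p) * uc else 0)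
      + (if q = p then
          nuc * tc / uc + (∑' k : ℕ, nuc * tc * z 0 (k + 1) * uc ^ k)
            + nuc * tc * z 0 1 else 0)
      + (∑ k ∈ Finset.Icc 1 p, if q = p - k + 1 then
          tc * z (k + 1) 0 * (a (p - k + 1) / a p) * uc else 0)
      + (∑ k ∈ Finset.Icc 1 p, if q = p - k then
          nuc * tc * z k 1 * (a (p - k) / a p) else 0)
      + (if q = 1 then ∑' k : ℕ, tc * z (p + 1) (k + 1) * (a 1 / a p) * uc ^ (k + 2) else 0)
      + (if q = 0 then ∑' k : ℕ, nuc * tc * z p (k + 2) * (a 0 / a p) * uc ^ (k + 1) else 0))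
    -- `Pm p` is the law of the trajectory of the chain started from `p`,
    -- determined by its finite-dimensional (cylinder) distributions
    (Pm : ℕ → MeasureTheory.Measure (ℕ → ℕ))
    (hprob : ∀ p, MeasureTheory.IsProbabilityMeasure (Pm p))
    (hchain : ∀ p n : ℕ, ∀ s : ℕ → ℕ,
      Pm p {ω : ℕ → ℕ | ∀ i ≤ n, ω i = s i}
        = ENNReal.ofReal ((if s 0 = p then 1 else 0)
            * ∏ i ∈ Finset.range n, K (s i) (s (i + 1))))
    :
    ∀ m : ℕ, ∀ t : ℝ, 0 < t →
      Filter.Tendsto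
        (fun p : ℕ => (Pm p {ω : ℕ → ℕ | ∀ n : ℕ, (n : ℝ) ≤ t * p → m < ω n}).toReal)
        Filter.atTop
        (nhds ((1 + (1 / (4 * Real.sqrt 7)) * t) ^ (-(4:ℝ)/3))) := by
  intro m t ht
  have hmin : 0 < min ρ 1 := lt_min hρ one_pos
  have hKs : ∀ p, 1 ≤ p → ∀ q, K p q = stepKernel z a p q := hK
  have hu := uc_pos
  have h00 : z 0 0 = 1 := by
    have h := hz0 0 (by simpa using hρ)
    rw [uhat_zero, Z0hat_zero] at h
    have h2 := hasSum_single (f := fun p : ℕ => (z p 0 : ℂ) * 0 ^ p) 0 fun p hp => by simp [hp]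
    have h3 := h2.unique h
    simp only [pow_zero, mul_one] at h3
    exact_mod_cast h3
  have hrow := fun H : ℂ => hasSum_row_zero_one (K := H) hρ hZ
  have hcol := fun H : ℂ => hasSum_column_one (H := H) hρ hz0 hZ
  obtain ⟨hc0, hc0'⟩ := hasSum_of_Z0hat (c := fun p => z p 0) (fun p => hz_nonneg p 0) hρ
    fun H hH _ => hz0 H hH
  obtain ⟨hr0, -⟩ := hasSum_of_Z0hat (c := fun q => z 0 q) (fun q => hz_nonneg 0 q) hmin
    fun H hH hH0 => (hrow H hH hH0).1
  obtain ⟨hr1, -⟩ := hasSum_of_Z1hat (c := fun q => z 1 q) (fun q => hz_nonneg 1 q) hmin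
    fun H hH hH0 => (hrow H hH hH0).2
  obtain ⟨hc1, hc1'⟩ := hasSum_of_Z1hat (c := fun p => z p 1) (fun p => hz_nonneg p 1) hmin hcol
  have hz11 : 0 < z 1 1 := coeff_one_pos (c := fun p => z p 1) hmin hcol
  obtain ⟨hw1, hwm⟩ := hasSum_stepLaw h00 hc0 hc0' hr0 hc1 hc1' hr1
  obtain ⟨b, hb, hlim, hdiff⟩ := exists_tendsto_coeff hρ hA
  have hKnn : ∀ p q, 0 ≤ K p q := fun p q => by
    rcases Nat.eq_zero_or_pos p with rfl | hp
    · rw [hK0]; split_ifs <;> norm_num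
    · rw [hKs p hp]; exact stepKernel_nonneg hz_nonneg ha_pos p q
  have key := tendsto_surv (α := fun p => a p * uc ^ p)
    (fun p => mul_pos (ha_pos p) (pow_pos hu p)) hb hlim hdiff
    (stepLaw_nonneg hz_nonneg) hw1 (m := 1 / (4 * Real.sqrt 7)) (by positivity) hwm hKnn
    (fun p q hp hq => by rw [hKs p hp, stepKernel_eq ha_pos hq])
    (fun p q hpq => by
      rcases Nat.eq_zero_or_pos p with rfl | hp
      · rw [hK0, if_neg (by omega)]
      · rw [hKs p hp, stepKernel_eq_zero hpq])
    (fun p => row_sum_eq_one (hchain p))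
    (fun p => by
      rw [hKs (p + 1) (by omega)]
      refine lt_of_lt_of_le ?_ (single_le_stepKernel hz_nonneg ha_pos p)
      exact mul_pos (mul_pos (mul_pos nuc_pos tc_pos) hz11) (div_pos (ha_pos _) (ha_pos _)))
    m ht
  refine key.congr fun p => ?_
  rw [← measure_path_gt hKnn (hchain p) m ⌊t * p⌋₊]
  congr 2
  ext ω
  refine forall_congr' fun n => ?_
  rw [Nat.le_floor_iff (by positivity)]
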